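/- arXiv:math/9705223 — 2 statements merged into one kernel-verified Lean document; each statement's English description precedes it below -/
import Mathlib

section
/- Let n \ge 3 and a \ge 1 be integers. There exists an integer N (depending on n and a) such that for every odd integer q > N the following holds. If a is even, writing g(y) := y^{2n-1} \cdot (1 + y^2 + ... + y^{2a-2})^{n-3} \cdot (1 + y^2 + ... + y^{a-2})^4 \cdot (1 + 3y^2 - y^a + y^{a+2}) = \sum_k g_k y^k, then a^{n+1} \cdot M(n,q,a) = 4 \sum_k g_k (q-k)^n. If a is odd, let h(y) be the unique polynomial with (1+y) \cdot h(y) = 2 - y^{a-1} + y^a, and write g(y) := y^{2n-1} \cdot (1 + y^2 + ... + y^{2a-2})^{n-3} \cdot (1 + y + ... + y^{a-1})^4 \cdot h(y) = \sum_k g_k y^k; then a^{n+1} \cdot M(n,q,a) = \sum_k g_k (q-k)^n. -/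
open Polynomial

/-- `x` avoids the integer interval `[u, v]` in `ZMod q`. -/
def Avoids {q : ℕ} (x : ZMod q) (u v : ℤ) : Prop :=
  ∀ k : ℤ, u ≤ k → k ≤ v → x ≠ (k : ZMod q)

/-- Count for the type `B` deformation: `x_i`, `x_i - x_j` and `x_i + x_j`
all avoid `[u, v]`. -/
noncomputable def N_B (n q : ℕ) (u v : ℤ) : ℕ :=
  Set.ncard {x : Fin n → ZMod q |
    (∀ i, Avoids (x i) u v) ∧
    ∀ i j : Fin n, i < j → Avoids (x i - x j) u v ∧ Avoids (x i + x j) u v}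

/-- Count for the type `C` deformation: `2x_i`, `x_i - x_j` and `x_i + x_j`
all avoid `[u, v]`. -/
noncomputable def N_C (n q : ℕ) (u v : ℤ) : ℕ :=
  Set.ncard {x : Fin n → ZMod q |
    (∀ i, Avoids (2 * x i) u v) ∧
    ∀ i j : Fin n, i < j → Avoids (x i - x j) u v ∧ Avoids (x i + x j) u v}

/-- Count for the type `BC` deformation: `x_i`, `2x_i`, `x_i - x_j` and `x_i + x_j`
all avoid `[u, v]`. -/
noncomputable def N_BC (n q : ℕ) (u v : ℤ) : ℕ :=
  Set.ncard {x : Fin n → ZMod q |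
    (∀ i, Avoids (x i) u v ∧ Avoids (2 * x i) u v) ∧
    ∀ i j : Fin n, i < j → Avoids (x i - x j) u v ∧ Avoids (x i + x j) u v}

/-- Count for the type `D` deformation: `x_i - x_j` and `x_i + x_j`
avoid `[u, v]`. -/
noncomputable def N_D (n q : ℕ) (u v : ℤ) : ℕ :=
  Set.ncard {x : Fin n → ZMod q |
    ∀ i j : Fin n, i < j → Avoids (x i - x j) u v ∧ Avoids (x i + x j) u v}

/-- `1 + y + y^2 + ... + y^(m-1)`. -/
noncomputable def phi (m : ℕ) : ℚ[X] := ∑ i ∈ Finset.range m, X ^ i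

/-- `1 + y^2 + y^4 + ... + y^(2(m-1))`. -/
noncomputable def phi2 (m : ℕ) : ℚ[X] := ∑ i ∈ Finset.range m, X ^ (2 * i)

/-- For `g = ∑_k g_k y^k`, the sum `∑_k g_k (q - k)^n`. -/
noncomputable def polysum (g : ℚ[X]) (q n : ℕ) : ℚ :=
  ∑ k ∈ Finset.range (g.natDegree + 1), g.coeff k * ((q : ℚ) - (k : ℚ)) ^ n

/-- The number of `n`-tuples over `ZMod q` with all coordinates nonzero and
`x_i - x_j`, `x_i + x_j` avoiding `[0, a]` for `i < j`. -/
noncomputable def Mcount (n q a : ℕ) : ℕ :=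
  Set.ncard {x : Fin n → ZMod q |
    (∀ i, x i ≠ 0) ∧
    ∀ i j : Fin n, i < j →
      Avoids (x i - x j) 0 (a : ℤ) ∧ Avoids (x i + x j) 0 (a : ℤ)}

/-!
Let `q = 2 m + 1` and write each coordinate as `± p` with `1 ≤ p ≤ m`, so that the points `± p`
form a centrally symmetric chain modulo `q`. Labelling the coordinate `i` by the letters
`± (n - i)` turns the conditions on sums and differences into a single one: within distance `a`,
letters increase along the chain. Sorting the coordinates therefore expresses the count as a sum
over signed permutations `w` of a coefficient of a product of generating series of gaps. An inner
gap has to exceed `a` at the descents of `w`; the conditions at the two ends of the chain involve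
more of `w`, but after averaging over the sign of the extreme letter they too depend on a descent
and a sign only. The resulting sum is evaluated by the type `B` Carlitz identity
`∑ w, x ^ des w / (1 - x) ^ (n + 1) = ∑ b, (2 b + 1) ^ n x ^ b` and its variants with other end
conditions, which themselves follow by sorting the points of a box.

In this way `2 a ^ n` times the count becomes the sum of two terms: `S (X ^ a)`, for a polynomial
`S`, acting by shifts on `N ^ n` restricted to the multiples of `a`, and `S (-X ^ a)` acting on the
difference of the restrictions of `N ^ n` to the classes of `0` and `a` modulo `2 a`. For odd `a`
the substitution `X ↦ -X` makes the two terms equal, and `S (X ^ a)` is divisible by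
`phi a ^ (n + 1)`, which annihilates the difference between `N ^ n` and `a` times its restriction to
the multiples of `a`. For `a = 2 b` the second term vanishes, as `(1 + X ^ a) ^ (n + 1)` divides
`S (-X ^ a)`, and the same argument with `b` in place of `a` applies to `S (X ^ a)`, which is then a
polynomial in `X ^ 2`.
-/

section Shift

variable {R : Type*} [CommRing R]

/-- The shift operator `f ↦ f (· - 1)` on functions on `ℤ`. A polynomial `p` acts on such functions
through `aeval shift p`, so that `polysum p q n` is the value at `q` of `p` acting on
`N ↦ N ^ n`. -/
def shift : Module.End R (ℤ → R) := LinearMap.funLeft R R (· - 1)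

theorem shift_pow_apply (k : ℕ) (f : ℤ → R) (N : ℤ) : (shift ^ k) f N = f (N - k) := by
  induction k generalizing N with
  | zero => simp
  | succ k ih =>
    rw [pow_succ', Module.End.mul_apply]
    change (shift ^ k) f (N - 1) = _
    rw [ih, Nat.cast_succ, sub_sub, add_comm 1]

theorem aeval_shift_X_pow (k : ℕ) (f : ℤ → R) (N : ℤ) :
    aeval shift (X ^ k : R[X]) f N = f (N - k) := by
  rw [map_pow, aeval_X, shift_pow_apply]

theorem aeval_shift_apply (p : R[X]) (f : ℤ → R) (N : ℤ) :
    aeval shift p f N = ∑ k ∈ Finset.range (p.natDegree + 1), p.coeff k * f (N - k) := by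
  simp [aeval_eq_sum_range, LinearMap.sum_apply, shift_pow_apply]

theorem polysum_eq_aeval_shift (g : ℚ[X]) (q n : ℕ) :
    polysum g q n = aeval shift g (fun N : ℤ => (N : ℚ) ^ n) q := by
  simp [polysum, aeval_shift_apply]

theorem aeval_shift_expand {k : ℕ} (p : R[X]) (f : ℤ → R) (N : ℤ) :
    aeval shift (expand R k p) f (k * N) = aeval shift p (fun M => f (k * M)) N := by
  induction p using Polynomial.induction_on' with
  | add p r hp hr => simp only [map_add, LinearMap.add_apply, Pi.add_apply, hp, hr]
  | monomial j c =>
    simp [← C_mul_X_pow_eq_monomial, ← pow_mul, shift_pow_apply, mul_sub]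

theorem aeval_shift_comp_neg_X (p : R[X]) (f : ℤ → R) (N : ℤ) :
    aeval shift (p.comp (-X)) (fun M => M.negOnePow • f M) N =
      N.negOnePow • aeval shift p f N := by
  induction p using Polynomial.induction_on' with
  | add p r hp hr =>
    simp only [add_comp, map_add, LinearMap.add_apply, Pi.add_apply, hp, hr, smul_add]
  | monomial j c =>
    rw [← C_mul_X_pow_eq_monomial]
    rcases j.even_or_odd with hj | hj <;>
      simp [hj.neg_pow, shift_pow_apply, Int.negOnePow_sub, hj, Int.negOnePow_even,
        Int.negOnePow_odd, mul_smul_comm]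

theorem aeval_shift_id_mul (p : R[X]) (f : ℤ → R) :
    aeval shift p (fun N : ℤ => (N : R) * f N) =
      (fun N : ℤ => (N : R) * aeval shift p f N) - aeval shift (X * derivative p) f := by
  induction p using Polynomial.induction_on' with
  | add p r hp hr =>
    funext N
    simp only [map_add, mul_add, LinearMap.add_apply, hp, hr, Pi.add_apply, Pi.sub_apply]
    ring
  | monomial k c =>
    funext N
    have hderiv : X * derivative (monomial k c) = C (c * k) * X ^ k := by
      rcases k with _ | k
      · simp
      · rw [derivative_monomial, X_mul_monomial, C_mul_X_pow_eq_monomial, Nat.add_sub_cancel]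
    rw [hderiv]
    simp only [← C_mul_X_pow_eq_monomial, map_mul, aeval_C, Module.End.mul_apply,
      Module.algebraMap_end_apply, Pi.smul_apply, Pi.sub_apply, aeval_shift_X_pow, smul_eq_mul]
    push_cast
    ring

theorem aeval_shift_pow_mul_eq_zero {p : R[X]} {D : ℤ → R} (hD : aeval shift p D = 0) {j : ℕ}
    {r : R[X]} (hr : p ^ (j + 1) ∣ r) : aeval shift r (fun N : ℤ => (N : R) ^ j * D N) = 0 := by
  induction j generalizing r with
  | zero =>
    obtain ⟨s, rfl⟩ := hr
    simp only [zero_add, pow_one, mul_comm p, pow_zero, one_mul, map_mul,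
      Module.End.mul_apply, hD, map_zero]
  | succ j ih =>
    have hderiv : p ^ (j + 1) ∣ X * derivative r :=
      (pow_sub_one_dvd_derivative_of_pow_dvd hr).mul_left X
    simp only [pow_succ' _ j, mul_assoc]
    rw [aeval_shift_id_mul, ih ((pow_dvd_pow p (by omega)).trans hr), ih hderiv]
    funext N
    simp

end Shift

section Residues

/-- The function `N ↦ N ^ n` restricted to the residue class of `r` modulo `d`. -/
def powOnClass (n : ℕ) (d r : ℤ) : ℤ → ℚ := fun N => if d ∣ N - r then (N : ℚ) ^ n else 0

theorem sum_range_dvd_sub {a : ℕ} (ha : a ≠ 0) (N : ℤ) :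
    ∑ k ∈ Finset.range a, (if (a : ℤ) ∣ N - k then (1 : ℚ) else 0) = 1 := by
  have hpos : (0 : ℤ) < a := by omega
  have hnonneg := Int.emod_nonneg N hpos.ne'
  have hlt := Int.emod_lt_of_pos N hpos
  have hiff : ∀ k ∈ Finset.range a, ((a : ℤ) ∣ N - k ↔ (N % a).toNat = k) := by
    intro k hk
    rw [← Int.modEq_iff_dvd, Int.ModEq, Int.emod_eq_of_lt (Int.natCast_nonneg k)
      (by exact_mod_cast Finset.mem_range.1 hk)]
    omega
  rw [Finset.sum_congr rfl fun k hk => if_congr (hiff k hk) rfl rfl, Finset.sum_ite_eq,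
    if_pos (Finset.mem_range.2 (by omega))]

theorem aeval_shift_phi_residue {a : ℕ} (ha : a ≠ 0) :
    aeval shift (phi a) (fun N : ℤ => (a : ℚ) * (if (a : ℤ) ∣ N then 1 else 0) - 1) = 0 := by
  funext N
  simp only [phi, map_sum, LinearMap.sum_apply, Finset.sum_apply, aeval_shift_X_pow,
    Finset.sum_sub_distrib, ← Finset.mul_sum, sum_range_dvd_sub ha]
  simp

theorem aeval_shift_powOnClass_of_phi_pow_dvd {a n : ℕ} (ha : a ≠ 0) {p : ℚ[X]}
    (hp : phi a ^ (n + 1) ∣ p) :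
    (a : ℚ) • aeval shift p (powOnClass n a 0) = aeval shift p (fun N : ℤ => (N : ℚ) ^ n) := by
  rw [← map_smul, ← sub_eq_zero, ← map_sub,
    ← aeval_shift_pow_mul_eq_zero (aeval_shift_phi_residue ha) hp]
  congr 1
  funext N
  simp only [powOnClass, Pi.sub_apply, Pi.smul_apply, smul_eq_mul, sub_zero]
  split_ifs <;> ring

theorem aeval_shift_one_add_X_pow_residue (a : ℕ) :
    aeval shift (1 + X ^ a : ℚ[X]) (fun N : ℤ => (if (2 * a : ℤ) ∣ N then (1 : ℚ) else 0) -
      (if (2 * a : ℤ) ∣ N - a then 1 else 0)) = 0 := by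
  funext N
  have hper : (2 * a : ℤ) ∣ N - a - a ↔ (2 * a : ℤ) ∣ N := by
    rw [sub_sub, ← two_mul]
    exact dvd_sub_self_right
  simp only [map_add, map_one, LinearMap.add_apply, Pi.add_apply, Module.End.one_apply,
    aeval_shift_X_pow, hper, Pi.zero_apply]
  ring

theorem aeval_shift_powOnClass_sub_of_pow_dvd {a n : ℕ} {p : ℚ[X]}
    (hp : (1 + X ^ a) ^ (n + 1) ∣ p) :
    aeval shift p (powOnClass n (2 * a) 0 - powOnClass n (2 * a) a) = 0 := by
  rw [← aeval_shift_pow_mul_eq_zero (aeval_shift_one_add_X_pow_residue a) hp]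
  congr 1
  funext N
  simp only [powOnClass, Pi.sub_apply, sub_zero]
  split_ifs <;> ring

theorem two_mul_dvd_or_iff {a N : ℤ} :
    2 * a ∣ N ∨ 2 * a ∣ N - a ↔ a ∣ N := by
  constructor
  · rintro (h | h)
    · exact (Dvd.intro_left 2 rfl).trans h
    · exact (dvd_sub_self_right).1 ((Dvd.intro_left 2 rfl).trans h)
  · rintro ⟨k, rfl⟩
    rcases k.even_or_odd' with ⟨j, rfl | rfl⟩
    · exact .inl ⟨j, by ring⟩
    · exact .inr ⟨j, by ring⟩

theorem two_mul_dvd_sub_of_odd {a N : ℤ} (ha : Odd a) (h : 2 * a ∣ N - a) : Odd N := by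
  obtain ⟨k, hk⟩ := h
  obtain ⟨c, rfl⟩ := ha
  exact ⟨(2 * c + 1) * k + c, by linarith⟩

theorem powOnClass_zero_add {a : ℕ} (ha : a ≠ 0) (n : ℕ) :
    powOnClass n (2 * a) 0 + powOnClass n (2 * a) a = powOnClass n a 0 := by
  funext N
  have hdisj : ¬ ((2 * a : ℤ) ∣ N ∧ (2 * a : ℤ) ∣ N - a) := by
    rintro ⟨h, h'⟩
    have := Int.le_of_dvd (by omega) ((dvd_sub_right h).1 h')
    omega
  simp only [powOnClass, Pi.add_apply, sub_zero, ← two_mul_dvd_or_iff (a := (a : ℤ))]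
  split_ifs <;> first | tauto | simp

theorem powOnClass_zero_sub_of_odd {a : ℕ} (ha : Odd a) (n : ℕ) :
    powOnClass n (2 * a) 0 - powOnClass n (2 * a) a =
      fun N => N.negOnePow • powOnClass n a 0 N := by
  rw [← powOnClass_zero_add ha.pos.ne']
  funext N
  have heven : (2 * a : ℤ) ∣ N → Even N := fun h => even_iff_two_dvd.2 ((Dvd.intro _ rfl).trans h)
  have hodd : (2 * a : ℤ) ∣ N - a → Odd N := two_mul_dvd_sub_of_odd (mod_cast ha)
  rcases N.even_or_odd with hN | hN
  · have : ¬ (2 * a : ℤ) ∣ N - a := fun h => Int.not_even_iff_odd.2 (hodd h) hN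
    simp [powOnClass, this, Int.negOnePow_even N hN]
  · have : ¬ (2 * a : ℤ) ∣ N := fun h => Int.not_even_iff_odd.2 hN (heven h)
    simp [powOnClass, this, Int.negOnePow_odd N hN, neg_ite]

theorem powOnClass_two_mul (n : ℕ) (b N : ℤ) :
    powOnClass n (2 * b) 0 (2 * N) = 2 ^ n * powOnClass n b 0 N := by
  have hdvd : 2 * b ∣ 2 * N ↔ b ∣ N := Int.mul_dvd_mul_iff_left two_ne_zero
  simp only [powOnClass, sub_zero, hdvd, mul_ite, mul_zero]
  push_cast
  rw [mul_pow]

end Residues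

section Polynomials

theorem one_sub_X_mul_phi (m : ℕ) : (1 - X) * phi m = 1 - X ^ m :=
  mul_neg_geom_sum X m

theorem phi_add_self (m : ℕ) : phi (m + m) = phi m * (1 + X ^ m) := by
  simp only [phi, Finset.sum_range_add, pow_add, ← Finset.mul_sum]
  ring

theorem phi_succ_mul_phi_succ (j k : ℕ) :
    phi (j + 1) * phi (k + 1) = phi (j + k + 1) + X * (phi j * phi k) := by
  have hne : (1 - X : ℚ[X]) ≠ 0 := fun h => by simpa using congrArg (coeff · 0) h
  apply mul_left_cancel₀ hne
  apply mul_left_cancel₀ hne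
  have hj := one_sub_X_mul_phi j
  have hk := one_sub_X_mul_phi k
  linear_combination (1 - X) * phi (k + 1) * one_sub_X_mul_phi (j + 1) +
    (1 - X ^ (j + 1)) * one_sub_X_mul_phi (k + 1) - (1 - X) * one_sub_X_mul_phi (j + k + 1)
    - X * (1 - X) * phi k * hj - X * (1 - X ^ j) * hk

theorem phi2_eq_expand (m : ℕ) : phi2 m = expand ℚ 2 (phi m) := by
  simp [phi, phi2, ← pow_mul]

theorem one_sub_X_sq_mul_phi2 (m : ℕ) : (1 - X ^ 2) * phi2 m = 1 - X ^ (2 * m) := by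
  simpa [← pow_mul, ← phi2_eq_expand] using congrArg (expand ℚ 2) (one_sub_X_mul_phi m)

theorem phi2_succ (m : ℕ) : phi2 (m + 1) = phi2 m + X ^ (2 * m) :=
  Finset.sum_range_succ _ _

/-- The generating polynomial of the points `x, y ≥ 1` with `2 * x + y ≤ a`, counted by
`x + y - 2`. -/
noncomputable def tent (a : ℕ) : ℚ[X] := phi ((a - 1) / 2) * phi (a / 2)

theorem tent_add_two (a : ℕ) : tent (a + 2) = phi a + X * tent a := by
  rcases a with _ | a
  · simp [tent, phi]
  · rw [tent, show (a + 1 + 2 - 1) / 2 = a / 2 + 1 by omega,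
      show (a + 1 + 2) / 2 = (a + 1) / 2 + 1 by omega, phi_succ_mul_phi_succ,
      show a / 2 + (a + 1) / 2 + 1 = a + 1 by omega]
    rfl

/-- The contribution of one end of a chain to `countPoly`; the two ends use `a' = a` and
`a' = a + 1`. -/
noncomputable def endFactor (a a' : ℕ) (u : ℚ[X]) : ℚ[X] :=
  phi2 a ^ 2 - expand ℚ 2 (tent a') * (1 - u) ^ 2

/-- The polynomial `S(u)` for which `2 * a ^ n * Mcount n q a` is the sum of the values obtained by
letting `S(X ^ a)` and `S(-X ^ a)` act by shifts. -/
noncomputable def countPoly (n a : ℕ) (u : ℚ[X]) : ℚ[X] :=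
  X ^ (2 * n) * (phi2 a ^ (n - 3) * (endFactor a a u * endFactor a (a + 1) u))

theorem expand_two_comp_neg_X {R : Type*} [CommRing R] (p : R[X]) :
    (expand R 2 p).comp (-X) = expand R 2 p := by
  simp [expand_eq_comp_X_pow, comp_assoc]

theorem endFactor_comp_neg_X (a a' : ℕ) (u : ℚ[X]) :
    (endFactor a a' u).comp (-X) = endFactor a a' (u.comp (-X)) := by
  simp [endFactor, phi2_eq_expand, expand_two_comp_neg_X]

theorem countPoly_comp_neg_X (n a : ℕ) (u : ℚ[X]) :
    (countPoly n a u).comp (-X) = countPoly n a (u.comp (-X)) := by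
  simp [countPoly, endFactor_comp_neg_X, phi2_eq_expand, expand_two_comp_neg_X, Even.neg_pow]

theorem phi2_odd (c : ℕ) :
    phi2 (2 * c + 1) = phi (2 * c + 1) * ((1 - X) * phi2 c + X ^ (2 * c)) := by
  have hne : (1 - X ^ 2 : ℚ[X]) ≠ 0 := fun h => by simpa [coeff_one] using congrArg (coeff · 2) h
  apply mul_left_cancel₀ hne
  linear_combination one_sub_X_sq_mul_phi2 (2 * c + 1)
    - (1 + X) * ((1 - X) * phi2 c + X ^ (2 * c)) * one_sub_X_mul_phi (2 * c + 1)
    - (1 - X ^ (2 * c + 1)) * one_sub_X_sq_mul_phi2 c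

theorem endFactor_odd_left (c : ℕ) :
    endFactor (2 * c + 1) (2 * c + 1) (X ^ (2 * c + 1)) =
      phi (2 * c + 1) ^ 2 * X ^ (2 * c) * (2 * (1 - X) * phi2 c + X ^ (2 * c)) := by
  rw [endFactor, tent, phi2_odd, show (2 * c + 1 - 1) / 2 = c by omega,
    show (2 * c + 1) / 2 = c by omega, map_mul, ← phi2_eq_expand, ← one_sub_X_mul_phi]
  ring

theorem endFactor_odd_right (c : ℕ) :
    endFactor (2 * c + 1) (2 * c + 2) (X ^ (2 * c + 1)) = phi (2 * c + 1) ^ 2 * X ^ (2 * c) := by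
  rw [endFactor, tent, phi2_odd, show (2 * c + 2 - 1) / 2 = c by omega,
    show (2 * c + 2) / 2 = c + 1 by omega, map_mul, ← phi2_eq_expand, ← phi2_eq_expand,
    phi2_succ, ← one_sub_X_mul_phi]
  linear_combination phi (2 * c + 1) ^ 2 * X ^ (2 * c) * one_sub_X_sq_mul_phi2 c

theorem countPoly_odd (n c : ℕ) {h : ℚ[X]} (hh : (1 + X) * h = 2 - X ^ (2 * c) + X ^ (2 * c + 1)) :
    countPoly n (2 * c + 1) (X ^ (2 * c + 1)) =
      X ^ (2 * n + 2 * (2 * c + 1) - 2) *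
        (phi2 (2 * c + 1) ^ (n - 3) * phi (2 * c + 1) ^ 4 * h) := by
  have hne : (1 + X : ℚ[X]) ≠ 0 := fun h => by simpa using congrArg (coeff · 0) h
  have hh' : h = 2 * (1 - X) * phi2 c + X ^ (2 * c) := by
    apply mul_left_cancel₀ hne
    linear_combination hh - 2 * one_sub_X_sq_mul_phi2 c
  rw [countPoly, endFactor_odd_left, endFactor_odd_right, hh',
    show 2 * n + 2 * (2 * c + 1) - 2 = 2 * n + 2 * c + 2 * c by omega]
  ring

theorem phi_pow_dvd_countPoly_odd {n : ℕ} (hn : 3 ≤ n) (c : ℕ) :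
    phi (2 * c + 1) ^ (n + 1) ∣ countPoly n (2 * c + 1) (X ^ (2 * c + 1)) := by
  rw [countPoly, endFactor_odd_left, endFactor_odd_right, phi2_odd,
    show n + 1 = (n - 3) + 4 by omega, mul_pow]
  exact ⟨X ^ (2 * n) * ((1 - X) * phi2 c + X ^ (2 * c)) ^ (n - 3) * (X ^ (2 * c)) ^ 2 *
    (2 * (1 - X) * phi2 c + X ^ (2 * c)), by ring⟩

theorem phi2_two_mul (b : ℕ) : phi2 (2 * b) = phi2 b * (1 + X ^ (2 * b)) := by
  rw [phi2_eq_expand, two_mul, phi_add_self, phi2_eq_expand]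
  simp [← pow_mul, two_mul]

theorem endFactor_even_left {b : ℕ} (hb : b ≠ 0) :
    endFactor (2 * b) (2 * b) (X ^ (2 * b)) =
      X ^ (2 * b - 2) * phi2 b ^ 2 * (1 + 3 * X ^ 2 - X ^ (2 * b) + X ^ (2 * b + 2)) := by
  obtain ⟨c, rfl⟩ := Nat.exists_eq_add_one_of_ne_zero hb
  have hb := one_sub_X_sq_mul_phi2 (c + 1)
  have hc := one_sub_X_sq_mul_phi2 c
  rw [endFactor, tent, phi2_two_mul, show (2 * (c + 1) - 1) / 2 = c by omega,
    show 2 * (c + 1) / 2 = c + 1 by omega, show 2 * (c + 1) - 2 = 2 * c by omega, map_mul,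
    ← phi2_eq_expand, ← phi2_eq_expand]
  linear_combination phi2 c * phi2 (c + 1) * (1 - X ^ (2 * (c + 1))) * hb
    - phi2 (c + 1) ^ 2 * (1 - X ^ (2 * (c + 1))) * hc

theorem endFactor_even_right (b : ℕ) :
    endFactor (2 * b) (2 * b + 1) (X ^ (2 * b)) = 4 * X ^ (2 * b) * phi2 b ^ 2 := by
  rw [endFactor, tent, phi2_two_mul, show (2 * b + 1 - 1) / 2 = b by omega,
    show (2 * b + 1) / 2 = b by omega, map_mul, ← phi2_eq_expand]
  ring

theorem countPoly_even {b : ℕ} (hb : b ≠ 0) (n : ℕ) :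
    countPoly n (2 * b) (X ^ (2 * b)) =
      X ^ (2 * n + 2 * (2 * b) - 2) * (C 4 * (phi2 (2 * b) ^ (n - 3) * phi2 b ^ 4 *
        (1 + 3 * X ^ 2 - X ^ (2 * b) + X ^ (2 * b + 2)))) := by
  rw [countPoly, endFactor_even_left hb, endFactor_even_right,
    show 2 * n + 2 * (2 * b) - 2 = 2 * n + 2 * b + (2 * b - 2) by omega, C_ofNat]
  ring

theorem exists_expand_eq_countPoly_even {n : ℕ} (hn : 3 ≤ n) {b : ℕ} (hb : b ≠ 0) :
    ∃ p : ℚ[X], phi b ^ (n + 1) ∣ p ∧ countPoly n (2 * b) (X ^ (2 * b)) = expand ℚ 2 p := by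
  refine ⟨phi b ^ (n + 1) * (X ^ (n + 2 * b - 1) * (1 + X ^ b) ^ (n - 3) *
    (C 4 * (1 + 3 * X - X ^ b + X ^ (b + 1)))), dvd_mul_right _ _, ?_⟩
  rw [countPoly_even hb, phi2_two_mul, mul_pow, show n + 1 = (n - 3) + 4 by omega,
    show 2 * n + 2 * (2 * b) - 2 = 2 * (n + 2 * b - 1) by omega]
  simp only [map_mul, map_pow, map_add, map_sub, map_one, map_ofNat, expand_X,
    ← phi2_eq_expand, ← pow_mul]
  ring

theorem one_add_X_pow_dvd_countPoly_even {n : ℕ} (hn : 3 ≤ n) (b : ℕ) :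
    (1 + X ^ (2 * b)) ^ (n + 1) ∣ countPoly n (2 * b) (-X ^ (2 * b)) := by
  have hend : ∀ a', (1 + X ^ (2 * b)) ^ 2 ∣ endFactor (2 * b) a' (-X ^ (2 * b)) := fun a' => by
    rw [endFactor, phi2_two_mul, mul_pow, sub_neg_eq_add]
    exact dvd_sub (dvd_mul_left _ _) (dvd_mul_left _ _)
  rw [countPoly, phi2_two_mul, mul_pow, show n + 1 = (n - 3) + (2 + 2) by omega, pow_add, pow_add]
  exact (mul_dvd_mul (dvd_mul_left _ _) (mul_dvd_mul (hend _) (hend _))).mul_left _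

end Polynomials

section TupleSeries

open Finset Finset.Nat
open scoped PowerSeries

variable {R : Type*} [CommSemiring R] {N : ℕ}

/-- The generating series of the weight `f` on `N`-tuples of natural numbers, graded by the sum of
the entries. -/
def tupleSeries (N : ℕ) (f : (Fin N → ℕ) → R) : R⟦X⟧ :=
  PowerSeries.mk fun b => ∑ e ∈ antidiagonalTuple N b, f e

theorem sum_antidiagonalTuple_succ (b : ℕ) (f : (Fin (N + 1) → ℕ) → R) :
    ∑ e ∈ antidiagonalTuple (N + 1) b, f e =
      ∑ p ∈ HasAntidiagonal.antidiagonal b, ∑ e ∈ antidiagonalTuple N p.2, f (Fin.cons p.1 e) := by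
  rw [Finset.sum_sigma']
  refine Finset.sum_nbij' (fun e => ⟨(e 0, ∑ i, Fin.tail e i), Fin.tail e⟩)
    (fun p => Fin.cons p.1.1 p.2) ?_ ?_ ?_ ?_ ?_
  · intro e he
    simp only [mem_sigma, HasAntidiagonal.mem_antidiagonal, mem_antidiagonalTuple, and_true] at he ⊢
    rwa [Fin.sum_univ_succ] at he
  · rintro ⟨⟨i, j⟩, e⟩ he
    simp only [mem_sigma, HasAntidiagonal.mem_antidiagonal, mem_antidiagonalTuple] at he ⊢
    rw [Fin.sum_univ_succ, Fin.cons_zero]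
    simp only [Fin.cons_succ, he]
  · intro e _
    exact Fin.cons_self_tail e
  · rintro ⟨⟨i, j⟩, e⟩ he
    simp only [mem_sigma, HasAntidiagonal.mem_antidiagonal, mem_antidiagonalTuple] at he
    simp [he.2]
  · intro e _
    rw [Fin.cons_self_tail]

theorem tupleSeries_zero (f : (Fin 0 → ℕ) → R) : tupleSeries 0 f = PowerSeries.C (f ![]) := by
  ext b
  rw [tupleSeries, PowerSeries.coeff_mk, PowerSeries.coeff_C]
  cases b <;> simp

theorem tupleSeries_cons_mul (g : ℕ → R) (f : (Fin N → ℕ) → R) :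
    tupleSeries (N + 1) (fun e => g (e 0) * f (Fin.tail e)) =
      PowerSeries.mk g * tupleSeries N f := by
  ext b
  simp only [tupleSeries, PowerSeries.coeff_mul, PowerSeries.coeff_mk, sum_antidiagonalTuple_succ,
    Fin.cons_zero, Fin.tail_cons, Finset.mul_sum]

theorem tupleSeries_prod (g : Fin N → ℕ → R) :
    tupleSeries N (fun e => ∏ k, g k (e k)) = ∏ k, PowerSeries.mk (g k) := by
  induction N with
  | zero => simp [tupleSeries_zero]
  | succ N ih =>
    simp only [Fin.prod_univ_succ]
    rw [← ih]
    exact tupleSeries_cons_mul (g 0) fun e => ∏ k, g k.succ (e k)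

theorem mk_ite_le (l : ℕ) :
    PowerSeries.mk (fun x => if l ≤ x then (1 : R) else 0) =
      PowerSeries.X ^ l * PowerSeries.mk 1 := by
  ext b
  rw [PowerSeries.coeff_mk, PowerSeries.coeff_X_pow_mul']
  simp

open Classical in
theorem tupleSeries_ite_le (l : Fin N → ℕ) :
    tupleSeries N (fun e => if l ≤ e then (1 : R) else 0) =
      PowerSeries.X ^ (∑ k, l k) * PowerSeries.mk 1 ^ N := by
  have hprod : ∀ e : Fin N → ℕ, (if l ≤ e then (1 : R) else 0) = ∏ k, if l k ≤ e k then 1 else 0 :=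
    fun e => by simp [Finset.prod_ite_zero, Pi.le_def]
  simp only [hprod, tupleSeries_prod fun k x => if l k ≤ x then (1 : R) else 0, mk_ite_le,
    Finset.prod_mul_distrib, Finset.prod_pow_eq_pow_sum, Finset.prod_const, Finset.card_univ,
    Fintype.card_fin]

/-- The generating series of the weight `L` on pairs of natural numbers, graded by their sum. -/
def pairSeries (L : ℕ → ℕ → R) : R⟦X⟧ :=
  PowerSeries.mk fun b => ∑ p ∈ HasAntidiagonal.antidiagonal b, L p.1 p.2

theorem pairSeries_eq_tupleSeries (L : ℕ → ℕ → R) :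
    pairSeries L = tupleSeries 2 fun e => L (e 0) (e 1) := by
  ext b
  simp [pairSeries, tupleSeries, antidiagonalTuple_two]

theorem pairSeries_swap (L : ℕ → ℕ → R) : pairSeries (fun x y => L y x) = pairSeries L := by
  ext b
  exact Finset.Nat.sum_antidiagonal_swap (f := fun p => L p.1 p.2)

theorem pairSeries_mul (f g : ℕ → R) :
    pairSeries (fun x y => f x * g y) = PowerSeries.mk f * PowerSeries.mk g := by
  ext b
  simp [pairSeries, PowerSeries.coeff_mul]

theorem pairSeries_eq_mk_add_X_mul (L : ℕ → ℕ → R) :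
    pairSeries L = PowerSeries.mk (L 0) + PowerSeries.X * pairSeries fun x y => L (x + 1) y := by
  ext b
  cases b with
  | zero => simp [pairSeries]
  | succ b => simp [pairSeries, PowerSeries.coeff_succ_X_mul, Finset.Nat.sum_antidiagonal_succ]

theorem pairSeries_eq_X_sq_mul {L : ℕ → ℕ → R} (h₀ : ∀ y, L 0 y = 0) (h₁ : ∀ x, L x 0 = 0) :
    pairSeries L = PowerSeries.X ^ 2 * pairSeries fun x y => L (x + 1) (y + 1) := by
  have hx : PowerSeries.mk (L 0) = 0 := by
    ext y
    simp [h₀]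
  have hy : PowerSeries.mk (fun x => L (x + 1) 0) = 0 := by
    ext x
    simp [h₁]
  rw [pairSeries_eq_mk_add_X_mul, hx, zero_add, ← pairSeries_swap, pairSeries_eq_mk_add_X_mul, hy,
    zero_add, ← pairSeries_swap, pow_two, mul_assoc]

theorem sum_antidiagonal_assoc {M : Type*} [AddCommMonoid M] (b : ℕ) (f : ℕ → ℕ → ℕ → M) :
    ∑ p ∈ HasAntidiagonal.antidiagonal b, ∑ r ∈ HasAntidiagonal.antidiagonal p.1, f r.1 r.2 p.2 =
      ∑ p ∈ HasAntidiagonal.antidiagonal b, ∑ r ∈ HasAntidiagonal.antidiagonal p.2,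
        f p.1 r.1 r.2 := by
  rw [Finset.sum_sigma', Finset.sum_sigma']
  refine Finset.sum_nbij' (fun p => ⟨(p.2.1, p.2.2 + p.1.2), (p.2.2, p.1.2)⟩)
    (fun p => ⟨(p.1.1 + p.2.1, p.2.2), (p.1.1, p.2.1)⟩) ?_ ?_ ?_ ?_ fun _ _ => rfl <;>
  · rintro ⟨⟨i, j⟩, k, l⟩ h
    simp only [mem_sigma, HasAntidiagonal.mem_antidiagonal, Sigma.mk.injEq, Prod.mk.injEq,
      heq_eq_eq, and_true, true_and] at h ⊢
    omega

theorem tupleSeries_pair_mul (L : ℕ → ℕ → R) (f : (Fin N → ℕ) → R) :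
    tupleSeries (N + 2) (fun e => L (e 0) (e 1) * f (Fin.tail (Fin.tail e))) =
      pairSeries L * tupleSeries N f := by
  ext b
  simp only [PowerSeries.coeff_mul, pairSeries, tupleSeries, PowerSeries.coeff_mk,
    sum_antidiagonalTuple_succ, Fin.cons_zero, Fin.tail_cons, ← Fin.succ_zero_eq_one,
    Fin.cons_succ, Finset.sum_mul, ← Finset.mul_sum]
  exact (sum_antidiagonal_assoc b
    fun x y z => L x y * ∑ e ∈ antidiagonalTuple N z, f e).symm

theorem tupleSeries_prod_mul_pair (g : Fin N → ℕ → R) (L : ℕ → ℕ → R) :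
    tupleSeries (N + 2) (fun e => (∏ k, g k (e (k.castAdd 2))) *
      L (e (Fin.last N).castSucc) (e (Fin.last (N + 1)))) =
      (∏ k, PowerSeries.mk (g k)) * pairSeries L := by
  induction N with
  | zero => simpa using (pairSeries_eq_tupleSeries L).symm
  | succ N ih =>
    rw [Fin.prod_univ_succ, mul_assoc, ← ih fun k => g k.succ, ← tupleSeries_cons_mul]
    simp only [Fin.prod_univ_succ, mul_assoc]
    rfl

theorem tupleSeries_pair_mul_prod_mul_pair (L L' : ℕ → ℕ → R) (g : Fin N → ℕ → R) :
    tupleSeries (N + 4) (fun e => L (e 0) (e 1) * ((∏ k, g k (e (k.castAdd 2).succ.succ)) *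
      L' (e (Fin.last N).castSucc.succ.succ) (e (Fin.last (N + 3))))) =
      pairSeries L * ((∏ k, PowerSeries.mk (g k)) * pairSeries L') := by
  rw [← tupleSeries_prod_mul_pair, ← tupleSeries_pair_mul]
  rfl

end TupleSeries

section Gaps

variable {N b : ℕ}

/-- The gaps of a chain `β 0 ≤ ⋯ ≤ β N` in `[0, b]`: the distances between `0`, the successive
entries, and `b`. -/
def gaps (b : ℕ) (β : Fin (N + 1) → ℕ) : Fin (N + 2) → ℕ :=
  Fin.cons (β 0) (Fin.snoc (α := fun _ => ℕ) (fun k => β k.succ - β k.castSucc)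
    (b - β (Fin.last N)))

@[simp]
theorem gaps_zero (β : Fin (N + 1) → ℕ) : gaps b β 0 = β 0 := rfl

@[simp]
theorem gaps_castSucc_succ (β : Fin (N + 1) → ℕ) (k : Fin N) :
    gaps b β k.castSucc.succ = β k.succ - β k.castSucc := by
  rw [gaps, Fin.cons_succ, Fin.snoc_castSucc]

@[simp]
theorem gaps_last (β : Fin (N + 1) → ℕ) :
    gaps b β (Fin.last (N + 1)) = b - β (Fin.last N) := by
  rw [← Fin.succ_last, gaps, Fin.cons_succ, Fin.snoc_last]

theorem partialSum_gaps {β : Fin (N + 1) → ℕ} (hβ : Monotone β) (k : Fin (N + 1)) :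
    Fin.partialSum (gaps b β) k.succ.castSucc = β k := by
  induction k using Fin.induction with
  | zero => exact (Fin.partialSum_succ _ 0).trans (by simp)
  | succ k ih =>
    rw [← Fin.succ_castSucc, Fin.partialSum_succ, ← Fin.succ_castSucc, ih, gaps_castSucc_succ]
    exact Nat.add_sub_cancel' (hβ (Fin.castSucc_le_succ k))

theorem sum_eq_partialSum_add_last (e : Fin (N + 1) → ℕ) :
    ∑ k, e k = Fin.partialSum e (Fin.last N).castSucc + e (Fin.last N) := by
  rw [← Fin.partialSum_succ, Fin.succ_last, Fin.partialSum, Fin.val_last,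
    List.take_of_length_le (by simp), List.sum_ofFn]

theorem sum_gaps {β : Fin (N + 1) → ℕ} (hβ : Monotone β) (hb : β (Fin.last N) ≤ b) :
    ∑ k, gaps b β k = b := by
  rw [sum_eq_partialSum_add_last, ← Fin.succ_last, partialSum_gaps hβ, Fin.succ_last, gaps_last]
  exact Nat.add_sub_cancel' hb

theorem monotone_partialSum (e : Fin (N + 2) → ℕ) :
    Monotone fun k : Fin (N + 1) => Fin.partialSum e k.succ.castSucc :=
  Fin.monotone_iff_le_succ.2 fun k => by
    rw [← Fin.succ_castSucc k.succ, Fin.partialSum_succ, ← Fin.succ_castSucc]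
    exact Nat.le_add_right _ _

theorem gaps_partialSum {e : Fin (N + 2) → ℕ} (he : ∑ k, e k = b) :
    gaps b (fun k => Fin.partialSum e k.succ.castSucc) = e := by
  funext k
  induction k using Fin.cases with
  | zero => exact (Fin.partialSum_succ e 0).trans (by simp)
  | succ k =>
    induction k using Fin.lastCases with
    | last =>
      rw [Fin.succ_last, gaps_last, ← he, sum_eq_partialSum_add_last, Fin.succ_last,
        Nat.add_sub_cancel_left]
    | cast k =>
      rw [gaps_castSucc_succ, ← Fin.succ_castSucc k.succ, Fin.partialSum_succ, ← Fin.succ_castSucc,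
        Nat.add_sub_cancel_left]

open Classical in
theorem card_monotone_eq_coeff_tupleSeries {R : Type*} [CommSemiring R]
    (Q : (Fin (N + 2) → ℕ) → Prop) :
    (Nat.card {β : Fin (N + 1) → Fin (b + 1) // Monotone β ∧ Q (gaps b fun k => β k)} : R) =
      PowerSeries.coeff b (tupleSeries (N + 2) fun e => if Q e then 1 else 0) := by
  have hmono : ∀ {β : Fin (N + 1) → Fin (b + 1)}, Monotone β → Monotone fun k => (β k : ℕ) :=
    fun hβ _ _ hij => hβ hij
  rw [tupleSeries, PowerSeries.coeff_mk, Finset.sum_boole, Nat.card_eq_fintype_card,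
    Fintype.card_subtype]
  congr 1
  refine Finset.card_bij (fun β _ => gaps b fun k => β k) ?_ ?_ ?_
  · intro β hβ
    obtain ⟨-, hβ, hQ⟩ := Finset.mem_filter.1 hβ
    exact Finset.mem_filter.2 ⟨Finset.Nat.mem_antidiagonalTuple.2
      (sum_gaps (hmono hβ) (Fin.is_le _)), hQ⟩
  · intro β hβ γ hγ h
    obtain ⟨-, hβ, -⟩ := Finset.mem_filter.1 hβ
    obtain ⟨-, hγ, -⟩ := Finset.mem_filter.1 hγ
    funext k
    rw [Fin.ext_iff, ← partialSum_gaps (b := b) (hmono hβ), h, partialSum_gaps (hmono hγ)]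
  · intro e he
    obtain ⟨he, hQ⟩ := Finset.mem_filter.1 he
    have hsum := Finset.Nat.mem_antidiagonalTuple.1 he
    have hle (k : Fin (N + 1)) : Fin.partialSum e k.succ.castSucc ≤ b := by
      refine (monotone_partialSum e (Fin.le_last k)).trans ?_
      simp only [← hsum, sum_eq_partialSum_add_last e, Fin.succ_last, Nat.le_add_right]
    refine ⟨fun k => ⟨_, Nat.lt_succ_of_le (hle k)⟩, Finset.mem_filter.2
      ⟨Finset.mem_univ _, monotone_partialSum e, ?_⟩, gaps_partialSum hsum⟩
    rwa [← gaps_partialSum hsum] at hQ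

end Gaps

section Sorting

variable {n N b : ℕ}

theorem card_eq_sum_perm_card_strictMono {D α : Type*} [Finite D] [LinearOrder α]
    {K : Fin n → D → α} (hK : ∀ g : Fin n → D, Function.Injective fun i => K i (g i))
    (V : (Fin n → D) → Prop) :
    Nat.card {g // V g} = ∑ σ : Equiv.Perm (Fin n),
      Nat.card {h : Fin n → D // StrictMono (fun k => K (σ k) (h k)) ∧ V (h ∘ σ.symm)} := by
  classical
  cases nonempty_fintype D
  simp only [Nat.card_eq_fintype_card, Fintype.card_subtype]
  rw [Finset.card_eq_sum_card_fiberwise (f := fun g => Tuple.sort fun i => K i (g i))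
    (t := Finset.univ) fun _ _ => Finset.mem_coe.2 (Finset.mem_univ _)]
  refine Finset.sum_congr rfl fun σ _ => ?_
  refine Finset.card_nbij' (fun g => g ∘ σ) (fun h => h ∘ σ.symm) ?_ ?_
    (fun g _ => by simp [Function.comp_assoc]) (fun h _ => by simp [Function.comp_assoc])
  · intro g hg
    simp only [Finset.mem_coe, Finset.mem_filter, Finset.mem_univ, true_and] at hg ⊢
    have hmono := (Tuple.eq_sort_iff.1 hg.2.symm).1
    exact ⟨hmono.strictMono_of_injective ((hK g).comp σ.injective),
      by simpa [Function.comp_assoc] using hg.1⟩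
  · intro h hh
    simp only [Finset.mem_coe, Finset.mem_filter, Finset.mem_univ, true_and] at hh ⊢
    have hsort : (fun i => K i ((h ∘ σ.symm) i)) ∘ σ = fun k => K (σ k) (h k) := by
      funext k
      simp
    refine ⟨hh.2, (Tuple.eq_sort_iff.2 ⟨hsort ▸ hh.1.monotone, fun i j hij he => ?_⟩).symm⟩
    exact absurd (by simpa using he) (hh.1 hij).ne

/-- Signed permutations: `(σ, s)` lists the coordinates in the order `σ 0, σ 1, …`, the `k`-th one
carrying the sign `s k`. -/
abbrev SignedPerm (n : ℕ) : Type := Equiv.Perm (Fin n) × (Fin n → ℤˣ)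

/-- The letter `± (n - i)` standing for the coordinate `i` taken with sign `∓1`. With this choice
`x i + x j` and `x i - x j` for `i < j` impose conditions on the order of letters only. -/
def letter (i : Fin n) (s : ℤˣ) : ℤ := s * ((i : ℤ) - n)

theorem letter_neg (i : Fin n) (s : ℤˣ) : letter i (-s) = -letter i s := by
  simp [letter]

theorem letter_pos_iff {i : Fin n} {s : ℤˣ} : 0 < letter i s ↔ s = -1 := by
  rcases Int.units_eq_one_or s with rfl | rfl <;> simp [letter]

theorem letter_neg_iff {i : Fin n} {s : ℤˣ} : letter i s < 0 ↔ s = 1 := by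
  rw [← neg_pos, ← letter_neg, letter_pos_iff, neg_inj]

theorem natAbs_letter (i : Fin n) (s : ℤˣ) : (letter i s).natAbs = n - i := by
  rw [letter, Int.natAbs_mul, Int.units_natAbs, one_mul]
  omega

theorem letter_ne_zero (i : Fin n) (s : ℤˣ) : letter i s ≠ 0 := by
  rw [← Int.natAbs_ne_zero, natAbs_letter]
  omega

theorem eq_of_natAbs_letter_eq {i j : Fin n} {s r : ℤˣ}
    (h : (letter i s).natAbs = (letter j r).natAbs) : i = j := by
  rw [natAbs_letter, natAbs_letter] at h
  omega

/-- The word of letters spelled by a signed permutation. -/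
def word (c : SignedPerm n) (k : Fin n) : ℤ := letter (c.1 k) (c.2 k)

theorem word_ne_zero (c : SignedPerm n) (k : Fin n) : word c k ≠ 0 := letter_ne_zero _ _

theorem eq_of_natAbs_word_eq {c : SignedPerm n} {k l : Fin n}
    (h : (word c k).natAbs = (word c l).natAbs) : k = l :=
  c.1.injective (eq_of_natAbs_letter_eq h)

theorem word_ne_word (c : SignedPerm n) {k l : Fin n} (hkl : k ≠ l) :
    word c k ≠ word c l :=
  fun h => hkl (eq_of_natAbs_word_eq (congrArg Int.natAbs h))

theorem neg_word_ne_word (c : SignedPerm n) {k l : Fin n} (hkl : k ≠ l) :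
    -word c k ≠ word c l :=
  fun h => hkl (eq_of_natAbs_word_eq (by rw [← h, Int.natAbs_neg]))

/-- The indicator of a descent of the word between the places `k` and `k + 1`. -/
def desc (c : SignedPerm (N + 1)) (k : Fin N) : ℕ :=
  if word c k.succ < word c k.castSucc then 1 else 0

/-- The key by which coordinates are sorted: by position, and by letter among equal positions. -/
def sortKey (i : Fin n) (d : ℤˣ × Fin (b + 1)) : Fin (b + 1) ×ₗ ℤ := toLex (d.2, letter i d.1)

theorem injective_sortKey (g : Fin n → ℤˣ × Fin (b + 1)) :
    Function.Injective fun i => sortKey i (g i) := fun _ _ hij =>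
  eq_of_natAbs_letter_eq (congrArg (fun d => (ofLex d).2.natAbs) hij)

theorem strictMono_sortKey_iff {c : SignedPerm (N + 1)} {β : Fin (N + 1) → Fin (b + 1)} :
    StrictMono (fun k => sortKey (c.1 k) (c.2 k, β k)) ↔
      Monotone β ∧ ∀ k : Fin N, desc c k ≤ (β k.succ : ℕ) - β k.castSucc := by
  rw [Fin.strictMono_iff_lt_succ, Fin.monotone_iff_le_succ, ← forall_and]
  refine forall_congr' fun k => ?_
  have hne := word_ne_word c (Fin.castSucc_lt_succ (i := k)).ne
  change toLex (β k.castSucc, word c k.castSucc) < toLex (β k.succ, word c k.succ) ↔ _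
  rw [Prod.Lex.toLex_lt_toLex, desc]
  dsimp only
  split_ifs <;> omega

theorem card_eq_sum_signedPerm (V : (Fin (N + 1) → ℤˣ × Fin (b + 1)) → Prop) :
    Nat.card {g // V g} = ∑ c : SignedPerm (N + 1),
      Nat.card {β : Fin (N + 1) → Fin (b + 1) // (Monotone β ∧
        ∀ k : Fin N, desc c k ≤ (β k.succ : ℕ) - β k.castSucc) ∧
          V ((fun k => (c.2 k, β k)) ∘ c.1.symm)} := by
  rw [card_eq_sum_perm_card_strictMono injective_sortKey V, Fintype.sum_prod_type]
  refine Finset.sum_congr rfl fun σ _ => ?_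
  rw [← Nat.card_sigma]
  simp only [← strictMono_sortKey_iff]
  exact Nat.card_congr ⟨fun h => ⟨fun k => (h.1 k).1, fun k => (h.1 k).2, h.2⟩,
    fun h => ⟨fun k => (h.1 k, h.2.1 k), h.2.2⟩, fun _ => rfl, fun _ => rfl⟩

theorem le_of_le_add_of_monotone {a : ℕ} {w : Fin (N + 1) → ℤ} {β : Fin (N + 1) → ℕ}
    (hβ : Monotone β)
    (hw : ∀ k : Fin N, w k.succ < w k.castSucc → a < β k.succ - β k.castSucc)
    {k l : Fin (N + 1)} (hkl : k ≤ l) (hle : β l ≤ β k + a) : w k ≤ w l := by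
  induction l using Fin.induction with
  | zero => rw [Fin.le_zero_iff.1 hkl]
  | succ l ih =>
    rcases hkl.lt_or_eq with hlt | rfl
    · have hkl' : k ≤ l.castSucc := Fin.le_castSucc_iff.2 hlt
      have hk : β k ≤ β l.castSucc := hβ hkl'
      have hl : β l.castSucc ≤ β l.succ := hβ (Fin.castSucc_le_succ l)
      refine (ih hkl' (hl.trans hle)).trans (not_lt.1 fun hdesc => ?_)
      have := hw l hdesc
      omega
    · rfl

end Sorting

section Carlitz

variable {N b x y : ℕ}

/-- The least gaps allowed for a chain spelling the word of `c`; `x` and `y` switch on the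
conditions at the two ends. -/
def lowerGaps (x y : ℕ) (c : SignedPerm (N + 1)) : Fin (N + 2) → ℕ :=
  Fin.cons (if word c 0 < 0 then x else 0)
    (Fin.snoc (α := fun _ => ℕ) (desc c) (if 0 < word c (Fin.last N) then y else 0))

theorem forall_fin_add_two {P : Fin (N + 2) → Prop} :
    (∀ k, P k) ↔ P 0 ∧ (∀ k : Fin N, P k.castSucc.succ) ∧ P (Fin.last (N + 1)) := by
  rw [Fin.forall_fin_succ, Fin.forall_fin_succ', Fin.succ_last]

theorem lowerGaps_le_gaps_iff {c : SignedPerm (N + 1)} {β : Fin (N + 1) → ℕ} :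
    lowerGaps x y c ≤ gaps b β ↔ (word c 0 < 0 → x ≤ β 0) ∧
      (∀ k : Fin N, desc c k ≤ β k.succ - β k.castSucc) ∧
      (0 < word c (Fin.last N) → y ≤ b - β (Fin.last N)) := by
  rw [Pi.le_def, forall_fin_add_two, ← Fin.succ_last]
  simp only [lowerGaps, gaps, Fin.cons_zero, Fin.cons_succ, Fin.snoc_castSucc, Fin.snoc_last]
  split_ifs <;> simp_all

theorem sum_lowerGaps (c : SignedPerm (N + 1)) :
    ∑ k, lowerGaps x y c k = (if word c 0 < 0 then x else 0) + ∑ k, desc c k +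
      if 0 < word c (Fin.last N) then y else 0 := by
  simp [lowerGaps, Fin.sum_univ_succ (n := N + 1), Fin.sum_univ_castSucc (n := N), add_assoc]

section

variable {c : SignedPerm (N + 1)} {β : Fin (N + 1) → Fin (b + 1)} (hβ : Monotone β)
  (hdesc : ∀ k : Fin N, desc c k ≤ (β k.succ : ℕ) - β k.castSucc)
include hβ hdesc

theorem word_le_word_of_eq {k l : Fin (N + 1)} (hkl : k ≤ l) (h : (β k : ℕ) = β l) :
    word c k ≤ word c l := by
  refine le_of_le_add_of_monotone (a := 0) (β := fun k => (β k : ℕ)) (fun _ _ hij => hβ hij)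
    (fun k hk => ?_) hkl h.ge
  exact Nat.succ_le_iff.1 (by simpa only [desc, hk, if_true] using hdesc k)

theorem forall_lt_imp_word_pos_iff (hx : x ≤ 1) :
    (∀ k, (β k : ℕ) < x → 0 < word c k) ↔ (word c 0 < 0 → x ≤ β 0) := by
  refine ⟨fun h h0 => not_lt.1 fun hlt => (h 0 hlt).not_gt h0, fun h k hk => ?_⟩
  have h0 : (β 0 : ℕ) ≤ β k := hβ (Fin.zero_le k)
  have hpos : 0 < word c 0 := (word_ne_zero c 0).lt_or_gt.resolve_left fun h' => by
    have := h h'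
    omega
  exact hpos.trans_le (word_le_word_of_eq hβ hdesc (Fin.zero_le k) (by omega))

theorem forall_lt_add_imp_word_neg_iff (hy : y ≤ 1) :
    (∀ k, b < β k + y → word c k < 0) ↔
      (0 < word c (Fin.last N) → y ≤ b - β (Fin.last N)) := by
  refine ⟨fun h h0 => not_lt.1 fun hlt => (h _ (by omega)).not_gt h0, fun h k hk => ?_⟩
  have hl : (β k : ℕ) ≤ β (Fin.last N) := hβ (Fin.le_last k)
  have hneg : word c (Fin.last N) < 0 := (word_ne_zero c _).lt_or_gt.resolve_right fun h' => by
    have := h h'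
    omega
  exact (word_le_word_of_eq hβ hdesc (Fin.le_last k) (by omega)).trans_lt hneg

end

/-- The signed positions, in `[0, b]`, counted by the Carlitz identity; `x` and `y` forbid one sign
at the positions `0` and `b`. -/
def IsBoxPoint (x y : ℕ) (d : ℤˣ × Fin (b + 1)) : Prop :=
  ((d.2 : ℕ) < x → d.1 = -1) ∧ (b < d.2 + y → d.1 = 1)

theorem card_isBoxPoint (hx : x ≤ 1) (hy : y ≤ 1) :
    Nat.card {d : ℤˣ × Fin (b + 1) // IsBoxPoint x y d} = 2 * b + 2 - x - y := by
  classical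
  have hpos (p : Fin (b + 1)) : IsBoxPoint x y (1, p) ↔ ¬(p : ℕ) < x := by
    simp [IsBoxPoint]
  have hneg (p : Fin (b + 1)) : IsBoxPoint x y (-1, p) ↔ ¬(p.rev : ℕ) < y := by
    rw [IsBoxPoint, Fin.val_rev]
    simp only [show (-1 : ℤˣ) ≠ 1 by decide, imp_true_iff, imp_false, true_and]
    omega
  have hcard {z : ℕ} (hz : z ≤ 1) :
      (Finset.univ.filter fun p : Fin (b + 1) => ¬(p : ℕ) < z).card = b + 1 - z := by
    have := Finset.card_filter_add_card_filter_not (s := Finset.univ)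
      fun p : Fin (b + 1) => (p : ℕ) < z
    rw [Fin.card_filter_val_lt, Finset.card_univ, Fintype.card_fin] at this
    omega
  have hrev : (Finset.univ.filter fun p : Fin (b + 1) => ¬(p.rev : ℕ) < y).card = b + 1 - y := by
    rw [← hcard hy]
    exact Finset.card_equiv Fin.revPerm (by simp)
  rw [Nat.card_eq_fintype_card, Fintype.card_subtype, Finset.card_filter, Fintype.sum_prod_type,
    show (Finset.univ : Finset ℤˣ) = {1, -1} from rfl, Finset.sum_pair (by decide)]
  simp only [hpos, hneg, ← Finset.card_filter, hcard hx, hrev]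
  omega

/-- With `x = 1`, `y = 0` this is the type `B` Carlitz identity for the number of descents. -/
theorem sum_X_pow_mul_mk_one_pow (hx : x ≤ 1) (hy : y ≤ 1) :
    (∑ c : SignedPerm (N + 1), (PowerSeries.X : PowerSeries ℚ) ^
        ((if word c 0 < 0 then x else 0) + ∑ k, desc c k +
          if 0 < word c (Fin.last N) then y else 0)) * PowerSeries.mk 1 ^ (N + 2) =
      PowerSeries.mk fun b => ((2 * b + 2 - x - y : ℕ) : ℚ) ^ (N + 1) := by
  classical
  ext b
  have hbox : Nat.card {g : Fin (N + 1) → ℤˣ × Fin (b + 1) // ∀ i, IsBoxPoint x y (g i)} =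
      (2 * b + 2 - x - y) ^ (N + 1) := by
    rw [Nat.card_congr (Equiv.subtypePiEquivPi (p := fun _ => IsBoxPoint x y)), Nat.card_pi]
    simp only [card_isBoxPoint hx hy, Finset.prod_const, Finset.card_univ, Fintype.card_fin]
  rw [PowerSeries.coeff_mk, ← Nat.cast_pow, ← hbox, card_eq_sum_signedPerm, Nat.cast_sum,
    Finset.sum_mul, map_sum]
  refine Finset.sum_congr rfl fun c _ => ?_
  rw [← sum_lowerGaps, ← tupleSeries_ite_le, ← card_monotone_eq_coeff_tupleSeries]
  congr! 4 with β
  rw [lowerGaps_le_gaps_iff, and_assoc]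
  refine and_congr_right fun hβ => ?_
  rw [and_left_comm]
  refine and_congr_right fun hdesc => ?_
  rw [← forall_lt_imp_word_pos_iff hβ hdesc hx, ← forall_lt_add_imp_word_neg_iff hβ hdesc hy,
    ← forall_and, ← c.1.symm.forall_congr_right]
  simp [IsBoxPoint, word, letter_pos_iff, letter_neg_iff]

end Carlitz

section Coordinates

variable {n m a : ℕ}

/-- The residue `± p` modulo `2 * m + 1` encoded by a sign and a position `p`. -/
def residue (m : ℕ) (d : ℤˣ × Fin (m + 2)) : ZMod (2 * m + 1) :=
  ((d.1 * (d.2 : ℕ) : ℤ) : ZMod (2 * m + 1))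

theorem valMinAbs_residue {d : ℤˣ × Fin (m + 2)} (hd : (d.2 : ℕ) ≤ m) :
    (residue m d).valMinAbs = d.1 * (d.2 : ℕ) := by
  rw [ZMod.valMinAbs_spec]
  refine ⟨rfl, ?_⟩
  rcases Int.units_eq_one_or d.1 with h | h <;> simp [h] <;> omega

theorem bijOn_residue (m : ℕ) :
    Set.BijOn (residue m) {d | 1 ≤ (d.2 : ℕ) ∧ (d.2 : ℕ) ≤ m} {x | x ≠ 0} := by
  refine ⟨fun d hd hzero => ?_, fun d hd e he hde => ?_, fun x hx => ?_⟩
  · have hval := valMinAbs_residue hd.2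
    rw [hzero, ZMod.valMinAbs_zero, eq_comm, Int.mul_eq_zero] at hval
    have hpos : 1 ≤ (d.2 : ℕ) := hd.1
    exact hval.elim d.1.ne_zero (by omega)
  · have hval : (d.1 * (d.2 : ℕ) : ℤ) = e.1 * (e.2 : ℕ) := by
      rw [← valMinAbs_residue hd.2, ← valMinAbs_residue he.2, hde]
    have hd₁ : 1 ≤ (d.2 : ℕ) := hd.1
    have he₁ : 1 ≤ (e.2 : ℕ) := he.1
    rcases Int.units_eq_one_or d.1 with hs | hs <;> rcases Int.units_eq_one_or e.1 with hr | hr <;>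
      simp only [hs, hr, Units.val_one, Units.val_neg] at hval
    all_goals first | exact Prod.ext (hs.trans hr.symm) (Fin.ext (by omega)) | omega
  · have hle := ZMod.natAbs_valMinAbs_le x
    have hne : x.valMinAbs ≠ 0 := mt (ZMod.valMinAbs_eq_zero x).1 hx
    have hp : 1 ≤ x.valMinAbs.natAbs ∧ x.valMinAbs.natAbs ≤ m := by omega
    refine ⟨(if 0 ≤ x.valMinAbs then 1 else -1, ⟨x.valMinAbs.natAbs, by omega⟩), hp, ?_⟩
    have hval : ((if 0 ≤ x.valMinAbs then 1 else -1 : ℤˣ) : ℤ) * x.valMinAbs.natAbs =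
        x.valMinAbs := by
      split_ifs <;> simp only [Units.val_one, Units.val_neg] <;> omega
    rw [residue, hval, ZMod.coe_valMinAbs]

theorem avoids_intCast_iff (ham : a ≤ m) {z : ℤ} (hz : |z| ≤ 2 * m) :
    Avoids ((z : ℤ) : ZMod (2 * m + 1)) 0 a ↔ (z < 0 ∨ a < z) ∧ a < z + (2 * m + 1) := by
  rw [abs_le] at hz
  simp only [Avoids, ne_eq, ZMod.intCast_eq_intCast_iff_dvd_sub]
  constructor
  · intro h
    constructor
    · by_contra! h'
      exact h z h'.1 h'.2 (by simp)
    · by_contra! h'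
      exact h (z + (2 * m + 1)) (by omega) h' (by simp)
  · rintro ⟨hz₀, hz₁⟩ k hk₀ hka ⟨r, hr⟩
    push_cast at hr
    have hr₁ : r < 2 := by
      by_contra!
      nlinarith
    have hr₀ : -1 < r := by
      by_contra!
      nlinarith
    obtain rfl | rfl : r = 0 ∨ r = 1 := by omega
    all_goals omega

/-- The condition on letters `w`, `w'` at the positions `p`, `p'` expressing that the corresponding
coordinates modulo `2 * m + 1` have sum and difference outside `[0, a]`: letters are in increasing
order when at most `a` apart in the chain extended symmetrically by `-w` at `-p` and at
`2 * m + 1 - p`. -/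
def PairAllowed (m a : ℕ) (w : ℤ) (p : ℕ) (w' : ℤ) (p' : ℕ) : Prop :=
  p ≠ p' ∧ (p < p' → w' < w → p + a < p') ∧ (p' < p → w < w' → p' + a < p) ∧
    (w + w' < 0 → a < p + p') ∧ (0 < w + w' → p + p' + a < 2 * m + 1)

theorem PairAllowed.symm {w w' : ℤ} {p p' : ℕ} (h : PairAllowed m a w p w' p') :
    PairAllowed m a w' p' w p := by
  obtain ⟨hne, hlt, hgt, hneg, hpos⟩ := h
  exact ⟨hne.symm, hgt, hlt, by rwa [add_comm w', add_comm p'], by rwa [add_comm w', add_comm p']⟩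

theorem avoids_sub_and_avoids_add_iff (ham : a ≤ m) {i j : Fin n} (hij : i < j)
    {d e : ℤˣ × Fin (m + 2)} (hd : 1 ≤ (d.2 : ℕ) ∧ (d.2 : ℕ) ≤ m)
    (he : 1 ≤ (e.2 : ℕ) ∧ (e.2 : ℕ) ≤ m) :
    Avoids (residue m d - residue m e) 0 a ∧ Avoids (residue m d + residue m e) 0 a ↔
      PairAllowed m a (letter i d.1) d.2 (letter j e.1) e.2 := by
  obtain ⟨s, p⟩ := d
  obtain ⟨r, p'⟩ := e
  dsimp only at hd he
  rw [residue, residue, ← Int.cast_sub, ← Int.cast_add, avoids_intCast_iff ham,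
    avoids_intCast_iff ham]
  all_goals
    rcases Int.units_eq_one_or s with rfl | rfl <;> rcases Int.units_eq_one_or r with rfl | rfl <;>
      simp [letter, PairAllowed, abs_le] <;> omega

theorem Mcount_eq_card (ham : a ≤ m) :
    Mcount n (2 * m + 1) a = Nat.card {g : Fin n → ℤˣ × Fin (m + 2) //
      (∀ i, 1 ≤ ((g i).2 : ℕ) ∧ ((g i).2 : ℕ) ≤ m) ∧
        ∀ i j, i ≠ j → PairAllowed m a (letter i (g i).1) (g i).2 (letter j (g j).1) (g j).2} := by
  have hpairs (g : Fin n → ℤˣ × Fin (m + 2)) (hg : ∀ i, 1 ≤ ((g i).2 : ℕ) ∧ ((g i).2 : ℕ) ≤ m) :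
      (∀ i j, i < j → Avoids (residue m (g i) - residue m (g j)) 0 a ∧
        Avoids (residue m (g i) + residue m (g j)) 0 a) ↔
      ∀ i j, i ≠ j → PairAllowed m a (letter i (g i).1) (g i).2 (letter j (g j).1) (g j).2 := by
    refine ⟨fun h i j hij => ?_, fun h i j hij =>
      (avoids_sub_and_avoids_add_iff ham hij (hg i) (hg j)).2 (h i j hij.ne)⟩
    rcases hij.lt_or_gt with hlt | hgt
    · exact (avoids_sub_and_avoids_add_iff ham hlt (hg i) (hg j)).1 (h i j hlt)
    · exact ((avoids_sub_and_avoids_add_iff ham hgt (hg j) (hg i)).1 (h j i hgt)).symm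
  obtain ⟨hmaps, hinj, hsurj⟩ := bijOn_residue m
  symm
  refine Set.ncard_congr (fun g _ i => residue m (g i)) (fun g hg => ?_) (fun g h hg hh hgh => ?_)
    fun x hx => ?_
  · exact ⟨fun i => hmaps (hg.1 i), (hpairs g hg.1).2 hg.2⟩
  · exact funext fun i => hinj (hg.1 i) (hh.1 i) (congrFun hgh i)
  · choose g hg hgx using fun i => hsurj (hx.1 i)
    obtain rfl : (fun i => residue m (g i)) = x := funext hgx
    exact ⟨g, ⟨hg, (hpairs g hg).1 hx.2⟩, rfl⟩

end Coordinates

section Chains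

variable {N m a : ℕ}

section

variable {w : Fin (N + 2) → ℤ} {β : Fin (N + 2) → ℕ} (hβ : Monotone β)
include hβ

section

variable (hw : ∀ k : Fin (N + 1), w k.succ < w k.castSucc → a < β k.succ - β k.castSucc)
include hw

theorem lt_add_of_add_neg (h₀₁ : w 0 + w 1 < 0 → a < β 0 + β 1) {k l : Fin (N + 2)}
    (hkl : k < l) (hneg : w k + w l < 0) : a < β k + β l := by
  by_contra! hle
  have hl : 1 ≤ l := Fin.one_le_of_ne_zero (Fin.ne_zero_of_lt hkl)
  have h₀ : β 0 ≤ β k := hβ (Fin.zero_le k)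
  have h₁ : β 1 ≤ β l := hβ hl
  have hw₀ := le_of_le_add_of_monotone hβ hw (Fin.zero_le k) (by omega)
  have hw₁ := le_of_le_add_of_monotone hβ hw hl (by omega)
  have := h₀₁ (by omega)
  omega

theorem add_lt_of_add_pos (hm : β (Fin.last (N + 1)) ≤ m)
    (hlast : 0 < w (Fin.last N).castSucc + w (Fin.last (N + 1)) →
      β (Fin.last N).castSucc + β (Fin.last (N + 1)) + a < 2 * m + 1)
    {k l : Fin (N + 2)} (hkl : k < l) (hpos : 0 < w k + w l) : β k + β l + a < 2 * m + 1 := by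
  by_contra! hle
  have hk : k ≤ (Fin.last N).castSucc := by
    rw [Fin.le_def, Fin.val_castSucc, Fin.val_last]
    omega
  have hk' : β k ≤ β (Fin.last N).castSucc := hβ hk
  have hl' : β l ≤ β (Fin.last (N + 1)) := hβ (Fin.le_last l)
  have hpm : β (Fin.last N).castSucc ≤ β (Fin.last (N + 1)) := hβ (Fin.le_last _)
  have hwk := le_of_le_add_of_monotone hβ hw hk (by omega)
  have hwl := le_of_le_add_of_monotone hβ hw (Fin.le_last l) (by omega)
  have := hlast (by omega)
  omega

end

theorem forall_pairAllowed_iff (hm : β (Fin.last (N + 1)) ≤ m) :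
    (∀ k l, k ≠ l → PairAllowed m a (w k) (β k) (w l) (β l)) ↔
      (∀ k : Fin (N + 1),
        1 + a * (if w k.succ < w k.castSucc then 1 else 0) ≤ β k.succ - β k.castSucc) ∧
      (w 0 + w 1 < 0 → a < β 0 + β 1) ∧
      (0 < w (Fin.last N).castSucc + w (Fin.last (N + 1)) →
        β (Fin.last N).castSucc + β (Fin.last (N + 1)) + a < 2 * m + 1) := by
  constructor
  · refine fun h => ⟨fun k => ?_, (h 0 1 Fin.zero_ne_one).2.2.2.1,
      (h _ _ (Fin.castSucc_lt_last _).ne).2.2.2.2⟩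
    obtain ⟨hne, hasc, -⟩ := h k.castSucc k.succ Fin.castSucc_lt_succ.ne
    have hle : β k.castSucc ≤ β k.succ := hβ (Fin.castSucc_le_succ k)
    split_ifs with hdesc
    · have := hasc (hle.lt_of_ne hne) hdesc
      omega
    · omega
  · rintro ⟨hgap, hfirst, hlast⟩
    have hw (k : Fin (N + 1)) (hk : w k.succ < w k.castSucc) : a < β k.succ - β k.castSucc := by
      have := hgap k
      rw [if_pos hk] at this
      omega
    have hstrict : StrictMono β := Fin.strictMono_iff_lt_succ.2 fun k => by
      have := hgap k
      omega
    have hlt {k l : Fin (N + 2)} (hkl : k < l) : PairAllowed m a (w k) (β k) (w l) (β l) := by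
      refine ⟨(hstrict hkl).ne, fun _ hdesc => ?_, fun h => absurd h (hstrict hkl).not_gt,
        lt_add_of_add_neg hβ hw hfirst hkl, add_lt_of_add_pos hβ hw hm hlast hkl⟩
      by_contra! hle
      exact (le_of_le_add_of_monotone hβ hw hkl.le hle).not_gt hdesc
    exact fun k l hkl => hkl.lt_or_gt.elim hlt fun h => (hlt h).symm

end

/-- The conditions at one end of a chain: `p` and `r` are the letters nearest to the centre of
symmetry at this end, `x` is the distance of `p` from the centre and `y` that of `r` from `p`. -/
def EndAdmissible (a a' : ℕ) (p r : ℤ) (x y : ℕ) : Prop :=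
  1 ≤ x ∧ 1 + a * (if r < p then 1 else 0) ≤ y ∧ (p + r < 0 → a' < 2 * x + y)

open Classical in
/-- The generating series of the admissible pairs of distances at one end of a chain. -/
noncomputable def endSeries (a a' : ℕ) (p r : ℤ) : PowerSeries ℚ :=
  pairSeries fun x y => if EndAdmissible a a' p r x y then 1 else 0

/-- Admissibility of the gaps `e` of a chain spelling `w`: an end condition at both ends and, in
between, gaps exceeding `a` at the descents. The centres of symmetry are `0` and `m + 1 / 2`; the
second is replaced by `m + 1` and `a` by `a + 1` to keep distances integral. -/
def ChainAdmissible (a : ℕ) (w : Fin (N + 3) → ℤ) (e : Fin (N + 4) → ℕ) : Prop :=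
  EndAdmissible a a (w 0) (w 1) (e 0) (e 1) ∧
    (∀ k : Fin N, 1 + a * (if w k.castSucc.succ.succ < w k.castSucc.succ.castSucc then 1 else 0) ≤
      e (k.castAdd 2).succ.succ) ∧
    EndAdmissible a (a + 1) (-w (Fin.last (N + 1 + 1))) (-w (Fin.last (N + 1)).castSucc)
      (e (Fin.last (N + 3))) (e (Fin.last N).castSucc.succ.succ)

theorem chainAdmissible_gaps_iff {w : Fin (N + 3) → ℤ} {β : Fin (N + 3) → ℕ} (hβ : Monotone β) :
    ChainAdmissible a w (gaps (m + 1) β) ↔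
      (∀ k, 1 ≤ β k ∧ β k ≤ m) ∧ ∀ k l, k ≠ l → PairAllowed m a (w k) (β k) (w l) (β l) := by
  have hrange : (∀ k, 1 ≤ β k ∧ β k ≤ m) ↔ 1 ≤ β 0 ∧ β (Fin.last (N + 1 + 1)) ≤ m :=
    ⟨fun h => ⟨(h _).1, (h _).2⟩, fun h k => ⟨h.1.trans (hβ (Fin.zero_le k)),
      (hβ (Fin.le_last k)).trans h.2⟩⟩
  have h₀₁ : β 0 ≤ β 1 := hβ (Fin.zero_le 1)
  have hlast : β (Fin.last (N + 1)).castSucc ≤ β (Fin.last (N + 1 + 1)) := hβ (Fin.le_last _)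
  rw [hrange, and_congr_right fun h : 1 ≤ β 0 ∧ _ => forall_pairAllowed_iff (a := a) hβ h.2,
    forall_fin_add_two]
  have hsecond : gaps (m + 1) β 1 = β 1 - β 0 := gaps_castSucc_succ β 0
  have hpenult : gaps (m + 1) β (Fin.last N).castSucc.succ.succ =
      β (Fin.last (N + 1 + 1)) - β (Fin.last (N + 1)).castSucc :=
    gaps_castSucc_succ β (Fin.last (N + 1))
  have hultimate : gaps (m + 1) β (Fin.last (N + 3)) = m + 1 - β (Fin.last (N + 1 + 1)) :=
    gaps_last β
  have hmid (k : Fin N) : gaps (m + 1) β (k.castAdd 2).succ.succ =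
      β k.castSucc.succ.succ - β k.castSucc.succ.castSucc := gaps_castSucc_succ β k.castSucc.succ
  simp only [ChainAdmissible, EndAdmissible, gaps_zero, hultimate, hsecond, hpenult, hmid,
    Fin.succ_last, neg_lt_neg_iff, Fin.castSucc_zero, Fin.succ_zero_eq_one, Nat.succ_eq_add_one]
  constructor
  · rintro ⟨⟨hpos, hgap₀, hfirst⟩, hgap, hle, hgap₁, hlast⟩
    refine ⟨⟨hpos, by omega⟩, ⟨hgap₀, hgap, hgap₁⟩, fun h => ?_, fun h => ?_⟩
    · have := hfirst h
      omega
    · have := hlast (by omega)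
      omega
  · rintro ⟨⟨hpos, hle⟩, ⟨hgap₀, hgap, hgap₁⟩, hfirst, hlast⟩
    refine ⟨⟨hpos, hgap₀, fun h => ?_⟩, hgap, by omega, hgap₁, fun h => ?_⟩
    · have := hfirst h
      omega
    · have := hlast (by omega)
      omega

theorem Mcount_eq_sum_signedPerm (ham : a ≤ m) :
    Mcount (N + 3) (2 * m + 1) a = ∑ c : SignedPerm (N + 3),
      Nat.card {β : Fin (N + 3) → Fin (m + 2) //
        Monotone β ∧ ChainAdmissible a (word c) (gaps (m + 1) fun k => β k)} := by
  rw [Mcount_eq_card ham, card_eq_sum_signedPerm]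
  refine Finset.sum_congr rfl fun c _ => ?_
  congr! 3 with β
  rw [and_assoc]
  refine and_congr_right fun hβ => ?_
  rw [chainAdmissible_gaps_iff fun _ _ h => hβ h]
  have hrange : (∀ i, 1 ≤ (β (c.1.symm i) : ℕ) ∧ (β (c.1.symm i) : ℕ) ≤ m) ↔
      ∀ k, 1 ≤ (β k : ℕ) ∧ (β k : ℕ) ≤ m :=
    c.1.symm.forall_congr fun _ => Iff.rfl
  have hpairs : (∀ i j, i ≠ j → PairAllowed m a (letter i (c.2 (c.1.symm i))) (β (c.1.symm i))
      (letter j (c.2 (c.1.symm j))) (β (c.1.symm j))) ↔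
      ∀ k l, k ≠ l → PairAllowed m a (word c k) (β k) (word c l) (β l) :=
    c.1.symm.forall_congr fun i => c.1.symm.forall_congr fun j => by
      rw [c.1.symm.injective.ne_iff, word, word, c.1.apply_symm_apply, c.1.apply_symm_apply]
  refine (and_congr_right' (and_congr hrange hpairs)).trans ?_
  refine and_iff_right_of_imp fun h k => ?_
  have hgap := ((forall_pairAllowed_iff (fun _ _ h => hβ h) (h.1 _).2).1 h.2).1 k
  have hdesc : desc c k ≤ 1 := by
    rw [desc]
    split_ifs <;> omega
  omega

/-- The contribution of the gaps between consecutive inner places of the chain spelling the word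
of `c`. -/
noncomputable def innerSeries (a : ℕ) (c : SignedPerm (N + 3)) : PowerSeries ℚ :=
  ∏ k : Fin N, (PowerSeries.X ^ (1 + a * desc c k.castSucc.succ) * PowerSeries.mk 1)

theorem Mcount_eq_sum_coeff (ham : a ≤ m) :
    (Mcount (N + 3) (2 * m + 1) a : ℚ) = ∑ c : SignedPerm (N + 3), PowerSeries.coeff (m + 1)
      (endSeries a a (word c 0) (word c 1) *
        (innerSeries a c * endSeries a (a + 1) (-word c (Fin.last (N + 2)))
          (-word c (Fin.last (N + 1)).castSucc))) := by
  classical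
  rw [Mcount_eq_sum_signedPerm ham, Nat.cast_sum]
  refine Finset.sum_congr rfl fun c _ => ?_
  rw [card_monotone_eq_coeff_tupleSeries]
  simp only [endSeries, innerSeries, ← mk_ite_le, ← pairSeries_swap fun x y =>
    if EndAdmissible a (a + 1) (-word c (Fin.last (N + 2)))
      (-word c (Fin.last (N + 1)).castSucc) x y then (1 : ℚ) else 0]
  rw [← tupleSeries_pair_mul_prod_mul_pair]
  refine congrArg _ (congrArg _ (funext fun e => ?_))
  simp only [Finset.prod_ite_zero, Finset.prod_const_one, ite_zero_mul_ite_zero, mul_one,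
    Finset.mem_univ, forall_const]
  exact if_congr Iff.rfl rfl rfl

end Chains

section EndSeries

theorem pairSeries_tent (a : ℕ) :
    pairSeries (fun x y => if 2 * x + y + 3 ≤ a then (1 : ℚ) else 0) =
      (tent a : PowerSeries ℚ) := by
  induction a using Nat.twoStepInduction with
  | zero =>
    ext b
    simp [pairSeries, tent, phi]
  | one =>
    ext b
    simp [pairSeries, tent, phi]
  | more a ih _ =>
    have hphi : PowerSeries.mk (fun y => if 2 * 0 + y + 3 ≤ a + 2 then (1 : ℚ) else 0) = phi a := by
      ext y
      simp [phi, Polynomial.coeff_X_pow, Polynomial.finsetSum_coeff]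
    have hshift (x y : ℕ) : 2 * (x + 1) + y + 3 ≤ a + 2 ↔ 2 * x + y + 3 ≤ a := by omega
    rw [pairSeries_eq_mk_add_X_mul, hphi]
    simp only [hshift]
    rw [ih, tent_add_two]
    push_cast
    rfl

theorem endSeries_eq {a a' : ℕ} {p r : ℤ} (ha : a' ≤ a + 2) (hpr : p ≠ r) :
    endSeries a a' p r = PowerSeries.X ^ 2 *
      ((PowerSeries.X ^ a) ^ (if r < p then 1 else 0) * PowerSeries.mk 1 ^ 2 -
        if p + r < 0 ∧ p < r then (tent a' : PowerSeries ℚ) else 0) := by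
  classical
  rw [endSeries, pairSeries_eq_X_sq_mul (by simp [EndAdmissible]) (by simp [EndAdmissible])]
  congr 1
  have hgap : pairSeries (R := ℚ)
      (fun _ y => 1 * if a * (if r < p then 1 else 0) ≤ y then 1 else 0) =
      (PowerSeries.X ^ a) ^ (if r < p then 1 else 0) * PowerSeries.mk 1 ^ 2 := by
    rw [pairSeries_mul (fun _ => 1) fun y => if a * (if r < p then 1 else 0) ≤ y then 1 else 0,
      mk_ite_le, ← pow_mul, pow_two, mul_left_comm]
    rfl
  rw [← hgap, ← pairSeries_tent]
  ext b
  rw [map_sub, apply_ite (PowerSeries.coeff b), map_zero]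
  simp only [pairSeries, PowerSeries.coeff_mk, EndAdmissible]
  split_ifs
  all_goals
    rw [eq_sub_iff_add_eq]
    simp only [add_zero, ← Finset.sum_add_distrib]
    refine Finset.sum_congr rfl fun e _ => ?_
    split_ifs <;> first | omega | simp

end EndSeries

section Flips

variable {n N a a' : ℕ}

/-- The signed permutation obtained by reversing the sign at the place `j`. -/
def flipSign (j : Fin n) (c : SignedPerm n) : SignedPerm n :=
  (c.1, Function.update c.2 j (-c.2 j))

theorem flipSign_involutive (j : Fin n) : Function.Involutive (flipSign j) := fun c => by
  simp [flipSign]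

theorem word_flipSign_self (j : Fin n) (c : SignedPerm n) : word (flipSign j c) j = -word c j := by
  simp [flipSign, word, letter_neg]

theorem word_flipSign_of_ne {j k : Fin n} (hkj : k ≠ j) (c : SignedPerm n) :
    word (flipSign j c) k = word c k := by
  simp [flipSign, word, hkj]

theorem sum_mul_eq_sum_mul_of_involutive {ι R : Type*} [Fintype ι] [NonUnitalNonAssocSemiring R]
    [IsAddTorsionFree R] {f : ι → ι} (hf : Function.Involutive f) {A B W : ι → R}
    (hAB : ∀ i, A i + A (f i) = B i + B (f i)) (hW : ∀ i, W (f i) = W i) :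
    ∑ i, A i * W i = ∑ i, B i * W i := by
  have hdouble (D : ι → R) : 2 • ∑ i, D i * W i = ∑ i, (D i + D (f i)) * W i := by
    rw [two_nsmul]
    nth_rewrite 2 [← hf.bijective.sum_comp]
    simp only [← Finset.sum_add_distrib, hW, add_mul]
  apply nsmul_right_injective two_ne_zero
  simp only [hdouble, hAB]

/-- The coefficients of `endFactor` as a polynomial of degree one in `u`, where
`u ^ 2 = X ^ (2 * a)` and `X ^ 2` is replaced by `X`. -/
noncomputable def endPoly (a a' : ℕ) : Fin 2 → ℚ[X] :=
  ![phi a ^ 2 - tent a' * (1 + X ^ a), 2 * tent a']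

/-- A substitute for `endSeries` with the same sum over the two signs of `p`, but in which `p` and
`r` only affect the exponents of `X ^ a`. -/
noncomputable def flatEndSeries (a a' : ℕ) (ha : a ≠ 0) (p r : ℤ) : PowerSeries ℚ :=
  PowerSeries.X ^ 2 * PowerSeries.expand a ha (PowerSeries.mk 1) ^ 2 *
    ∑ x : Fin 2, (endPoly a a' x : PowerSeries ℚ) *
      (PowerSeries.X ^ a) ^ ((if p < 0 then (x : ℕ) else 0) + if r < p then 1 else 0)

theorem expand_mk_one_mul (ha : a ≠ 0) :
    PowerSeries.expand a ha (PowerSeries.mk (1 : ℕ → ℚ)) * (1 - PowerSeries.X ^ a) = 1 := by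
  simpa using congrArg (PowerSeries.expand a ha) (PowerSeries.mk_one_mul_one_sub_eq_one ℚ)

theorem mk_one_eq_phi_mul_expand (ha : a ≠ 0) :
    PowerSeries.mk (1 : ℕ → ℚ) =
      (phi a : PowerSeries ℚ) * PowerSeries.expand a ha (PowerSeries.mk 1) := by
  have hphi : (1 - PowerSeries.X) * (phi a : PowerSeries ℚ) = 1 - PowerSeries.X ^ a := by
    simpa using congrArg (fun p : ℚ[X] => (p : PowerSeries ℚ)) (one_sub_X_mul_phi a)
  linear_combination (-PowerSeries.mk (1 : ℕ → ℚ)) * expand_mk_one_mul ha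
    - PowerSeries.mk (1 : ℕ → ℚ) * PowerSeries.expand a ha (PowerSeries.mk 1) * hphi
    + (phi a : PowerSeries ℚ) * PowerSeries.expand a ha (PowerSeries.mk 1) *
      PowerSeries.mk_one_mul_one_sub_eq_one ℚ

theorem endSeries_add_endSeries_neg (ha : a ≠ 0) (ha' : a' ≤ a + 2) {p r : ℤ} (hp : p ≠ 0)
    (hpr : p ≠ r) (hpr' : -p ≠ r) :
    endSeries a a' p r + endSeries a a' (-p) r =
      flatEndSeries a a' ha p r + flatEndSeries a a' ha (-p) r := by
  have hE := expand_mk_one_mul ha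
  have hE2 : PowerSeries.expand a ha (PowerSeries.mk (1 : ℕ → ℚ)) ^ 2 *
      (1 - PowerSeries.X ^ a) ^ 2 = 1 := by rw [← mul_pow, hE, one_pow]
  rw [endSeries_eq ha' hpr, endSeries_eq ha' hpr', mk_one_eq_phi_mul_expand ha]
  simp only [flatEndSeries, endPoly, Fin.sum_univ_two, Matrix.cons_val_zero, Matrix.cons_val_one,
    two_mul (tent a'), coe_sub, coe_mul, coe_pow, coe_add, coe_one, coe_X, Fin.val_zero,
    Fin.val_one]
  split_ifs <;> first
    | omega
    | ring1
    | linear_combination (PowerSeries.X ^ 2 * (tent a' : PowerSeries ℚ)) * hE2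

end Flips

section Assembly

variable {t a : ℕ}

/-- The coefficients of `countPoly n a u`, expanded at both ends in `u`, where
`u ^ 2 = X ^ (2 * a)` and `X ^ 2` is replaced by `X`. -/
noncomputable def chainPoly (n a : ℕ) (x y : Fin 2) : ℚ[X] :=
  X ^ n * (phi a ^ (n - 3) * (endPoly a a x * endPoly a (a + 1) y))

/-- The Carlitz series for `SignedPerm n` with `j` of the two end conditions switched on, in the
variable `X ^ a`. -/
noncomputable def carlitzSeries (n a : ℕ) (ha : a ≠ 0) (j : ℕ) : PowerSeries ℚ :=
  PowerSeries.expand a ha (PowerSeries.mk fun b => ((2 * b + 2 - j : ℕ) : ℚ) ^ n)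

theorem sum_X_pow_pow_mul_expand_pow (ha : a ≠ 0) {x y : ℕ} (hx : x ≤ 1) (hy : y ≤ 1) :
    (∑ c : SignedPerm (t + 1), ((PowerSeries.X : PowerSeries ℚ) ^ a) ^
        ((if word c 0 < 0 then x else 0) + ∑ k, desc c k +
          if 0 < word c (Fin.last t) then y else 0)) *
        PowerSeries.expand a ha (PowerSeries.mk 1) ^ (t + 2) =
      carlitzSeries (t + 1) a ha (x + y) := by
  simpa only [map_mul, map_sum, map_pow, PowerSeries.expand_X, Nat.sub_sub, carlitzSeries] using
    congrArg (PowerSeries.expand a ha) (sum_X_pow_mul_mk_one_pow (N := t) hx hy)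

theorem sum_endSeries_left_mul (ha : a ≠ 0) {W : SignedPerm (t + 3) → PowerSeries ℚ}
    (hW : ∀ c, W (flipSign 0 c) = W c) :
    ∑ c : SignedPerm (t + 3), endSeries a a (word c 0) (word c 1) * W c =
      ∑ c : SignedPerm (t + 3), flatEndSeries a a ha (word c 0) (word c 1) * W c := by
  have := IsAddTorsionFree.of_module_rat (PowerSeries ℚ)
  refine sum_mul_eq_sum_mul_of_involutive (flipSign_involutive 0) (fun c => ?_) hW
  have h10 : (1 : Fin (t + 3)) ≠ 0 := by simp
  rw [word_flipSign_self, word_flipSign_of_ne h10]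
  exact endSeries_add_endSeries_neg ha (by omega) (word_ne_zero c 0) (word_ne_word c h10.symm)
    (neg_word_ne_word c h10.symm)

theorem sum_endSeries_right_mul (ha : a ≠ 0) {W : SignedPerm (t + 3) → PowerSeries ℚ}
    (hW : ∀ c, W (flipSign (Fin.last (t + 2)) c) = W c) :
    ∑ c : SignedPerm (t + 3), endSeries a (a + 1) (-word c (Fin.last (t + 2)))
        (-word c (Fin.last (t + 1)).castSucc) * W c =
      ∑ c : SignedPerm (t + 3), flatEndSeries a (a + 1) ha (-word c (Fin.last (t + 2)))
        (-word c (Fin.last (t + 1)).castSucc) * W c := by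
  have := IsAddTorsionFree.of_module_rat (PowerSeries ℚ)
  refine sum_mul_eq_sum_mul_of_involutive (flipSign_involutive _) (fun c => ?_) hW
  have hne : (Fin.last (t + 1)).castSucc ≠ Fin.last (t + 2) := (Fin.castSucc_lt_last _).ne
  rw [word_flipSign_self, word_flipSign_of_ne hne]
  exact endSeries_add_endSeries_neg ha (by omega) (neg_ne_zero.2 (word_ne_zero c _))
    (neg_injective.ne (word_ne_word c hne.symm)) (neg_injective.ne (neg_word_ne_word c hne.symm))

theorem desc_flipSign_zero (c : SignedPerm (t + 2)) (k : Fin t) :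
    desc (flipSign 0 c) k.succ = desc c k.succ := by
  rw [desc, desc, word_flipSign_of_ne (Fin.succ_ne_zero _), word_flipSign_of_ne (by simp)]

theorem desc_flipSign_last (c : SignedPerm (t + 2)) (k : Fin t) :
    desc (flipSign (Fin.last (t + 1)) c) k.castSucc = desc c k.castSucc := by
  rw [desc, desc, word_flipSign_of_ne (Fin.castSucc_lt_last _).ne, Fin.succ_castSucc,
    word_flipSign_of_ne (Fin.castSucc_lt_last _).ne]

theorem sum_endSeries_mul_innerSeries_mul_endSeries (ha : a ≠ 0) :
    ∑ c : SignedPerm (t + 3), endSeries a a (word c 0) (word c 1) * (innerSeries a c *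
        endSeries a (a + 1) (-word c (Fin.last (t + 2))) (-word c (Fin.last (t + 1)).castSucc)) =
      ∑ c : SignedPerm (t + 3), flatEndSeries a a ha (word c 0) (word c 1) * (innerSeries a c *
        flatEndSeries a (a + 1) ha (-word c (Fin.last (t + 2)))
          (-word c (Fin.last (t + 1)).castSucc)) := by
  rw [sum_endSeries_left_mul ha fun c => by
    have hlast : word (flipSign 0 c) (Fin.last (t + 2)) = word c (Fin.last (t + 2)) :=
      word_flipSign_of_ne (by simp) c
    have hprev : word (flipSign 0 c) (Fin.last (t + 1)).castSucc =
        word c (Fin.last (t + 1)).castSucc := word_flipSign_of_ne (by simp) c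
    simp only [innerSeries, desc_flipSign_zero, hlast, hprev]]
  simp only [← mul_assoc, mul_comm _ (endSeries a (a + 1) _ _),
    mul_comm _ (flatEndSeries a (a + 1) _ _ _)]
  simp only [mul_assoc]
  rw [sum_endSeries_right_mul ha fun c => by
    have hzero : word (flipSign (Fin.last (t + 2)) c) 0 = word c 0 :=
      word_flipSign_of_ne (by simp) c
    have hone : word (flipSign (Fin.last (t + 2)) c) 1 = word c 1 :=
      word_flipSign_of_ne (Fin.castSucc_lt_last (1 : Fin (t + 2))).ne c
    simp only [innerSeries, Fin.succ_castSucc, desc_flipSign_last, hzero, hone]]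

theorem innerSeries_eq (ha : a ≠ 0) (c : SignedPerm (t + 3)) :
    innerSeries a c = PowerSeries.X ^ t *
      ((phi a : PowerSeries ℚ) * PowerSeries.expand a ha (PowerSeries.mk 1)) ^ t *
        (PowerSeries.X ^ a) ^ ∑ k : Fin t, desc c k.castSucc.succ := by
  simp only [innerSeries, ← mk_one_eq_phi_mul_expand ha, pow_add, pow_one, pow_mul,
    Finset.prod_mul_distrib, Finset.prod_const, Finset.card_univ, Fintype.card_fin,
    Finset.prod_pow_eq_pow_sum]
  ring

theorem sum_flatEndSeries_mul_innerSeries_mul_flatEndSeries (ha : a ≠ 0) :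
    ∑ c : SignedPerm (t + 3), flatEndSeries a a ha (word c 0) (word c 1) * (innerSeries a c *
        flatEndSeries a (a + 1) ha (-word c (Fin.last (t + 2)))
          (-word c (Fin.last (t + 1)).castSucc)) =
      PowerSeries.X * ∑ x : Fin 2, ∑ y : Fin 2,
        (chainPoly (t + 3) a x y : PowerSeries ℚ) * carlitzSeries (t + 3) a ha (x + y) := by
  have hsum (c : SignedPerm (t + 3)) : ∑ k, desc c k = (if word c 1 < word c 0 then 1 else 0) +
      ((∑ k : Fin t, desc c k.castSucc.succ) +
        if word c (Fin.last (t + 2)) < word c (Fin.last (t + 1)).castSucc then 1 else 0) := by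
    rw [Fin.sum_univ_succ, Fin.sum_univ_castSucc]
    rfl
  simp only [← sum_X_pow_pow_mul_expand_pow (t := t + 2) ha (Fin.is_le _) (Fin.is_le _), hsum,
    flatEndSeries, innerSeries_eq ha, neg_lt_zero, neg_lt_neg_iff, Finset.mul_sum, Finset.sum_mul]
  refine (Finset.sum_comm.trans (Finset.sum_congr rfl fun y _ => ?_)).trans Finset.sum_comm
  rw [Finset.sum_comm]
  refine Finset.sum_congr rfl fun x _ => Finset.sum_congr rfl fun c _ => ?_
  simp only [chainPoly, coe_mul, coe_pow, coe_X, pow_add, Nat.add_sub_cancel]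
  ring

end Assembly

section Extraction

variable {n t a m : ℕ}

theorem Mcount_eq_sum_coeff_chainPoly_mul (ha : a ≠ 0) (ham : a ≤ m) :
    (Mcount (t + 3) (2 * m + 1) a : ℚ) = ∑ x : Fin 2, ∑ y : Fin 2, PowerSeries.coeff m
      ((chainPoly (t + 3) a x y : PowerSeries ℚ) * carlitzSeries (t + 3) a ha (x + y)) := by
  rw [Mcount_eq_sum_coeff ham, ← map_sum, sum_endSeries_mul_innerSeries_mul_endSeries ha,
    sum_flatEndSeries_mul_innerSeries_mul_flatEndSeries ha, PowerSeries.coeff_succ_X_mul]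
  simp only [map_sum]

theorem coeff_mul_eq_sum_range {R : Type*} [CommSemiring R] {p : R[X]} (hp : p.natDegree ≤ m)
    (f : PowerSeries R) :
    PowerSeries.coeff m ((p : PowerSeries R) * f) =
      ∑ k ∈ Finset.range (p.natDegree + 1), p.coeff k * PowerSeries.coeff (m - k) f := by
  rw [PowerSeries.coeff_mul, Finset.Nat.sum_antidiagonal_eq_sum_range_succ_mk]
  simp only [Polynomial.coeff_coe]
  refine (Finset.sum_subset (Finset.range_mono (by omega)) fun k _ hk => ?_).symm
  rw [Polynomial.coeff_eq_zero_of_natDegree_lt (by simpa using hk), zero_mul]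

theorem pow_mul_coeff_carlitzSeries (ha : a ≠ 0) {j : ℕ} (hj : j ≤ 2) (d : ℕ) :
    (a : ℚ) ^ n * PowerSeries.coeff d (carlitzSeries n a ha j) =
      powOnClass n (2 * a) (j * a) (2 * d + (2 - j) * a) := by
  have hdvd : (2 * a : ℤ) ∣ 2 * d + (2 - j) * a - j * a ↔ a ∣ d := by
    rw [show (2 * d + (2 - j) * a - j * a : ℤ) = 2 * d + 2 * a * (1 - j) by ring,
      dvd_add_left (dvd_mul_right _ _), Int.mul_dvd_mul_iff_left two_ne_zero,
      Int.natCast_dvd_natCast]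
  rw [carlitzSeries, PowerSeries.coeff_expand, powOnClass]
  simp only [hdvd]
  split_ifs with h
  · obtain ⟨b, rfl⟩ := h
    rw [Nat.mul_div_cancel_left _ (Nat.pos_of_ne_zero ha), PowerSeries.coeff_mk, ← mul_pow]
    push_cast [show j ≤ 2 * b + 2 by omega]
    ring
  · rw [mul_zero]

theorem pow_mul_coeff_mul_carlitzSeries (ha : a ≠ 0) {j : ℕ} (hj : j ≤ 2) {p : ℚ[X]}
    (hp : p.natDegree ≤ m) :
    (a : ℚ) ^ n * PowerSeries.coeff m ((p : PowerSeries ℚ) * carlitzSeries n a ha j) =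
      aeval shift ((X ^ a) ^ j * expand ℚ 2 p) (powOnClass n (2 * a) (j * a)) (2 * (m + a)) := by
  rw [coeff_mul_eq_sum_range hp, mul_comm ((X ^ a) ^ j), map_mul, Module.End.mul_apply]
  have hexpand := aeval_shift_expand (k := 2) p
    (aeval shift ((X ^ a) ^ j : ℚ[X]) (powOnClass n (2 * a) (j * a))) (m + a)
  rw [Nat.cast_ofNat] at hexpand
  rw [hexpand, aeval_shift_apply, Finset.mul_sum]
  refine Finset.sum_congr rfl fun k hk => ?_
  have hkm : k ≤ m := by
    rw [Finset.mem_range] at hk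
    omega
  rw [← pow_mul, aeval_shift_X_pow, mul_left_comm, pow_mul_coeff_carlitzSeries ha hj]
  congr 2
  push_cast [hkm]
  ring

theorem powOnClass_add_add_neg_one_pow_smul_sub (n a : ℕ) {j : ℕ} (hj : j ≤ 2) :
    powOnClass n (2 * a) 0 + powOnClass n (2 * a) a +
      (-1 : ℚ) ^ j • (powOnClass n (2 * a) 0 - powOnClass n (2 * a) a) =
        (2 : ℚ) • powOnClass n (2 * a) (j * a) := by
  have hper : powOnClass n (2 * a) (2 * a) = powOnClass n (2 * a) 0 := by
    funext N
    simp [powOnClass, dvd_sub_self_right]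
  interval_cases j
  · simp only [pow_zero, one_smul, Nat.cast_zero, zero_mul]
    module
  · simp only [pow_one, Nat.cast_one, one_mul]
    module
  · simp only [even_two.neg_one_pow, one_smul, Nat.cast_ofNat, hper]
    module

theorem endFactor_eq_sum (a' : ℕ) {u : ℚ[X]} (hu : u ^ 2 = X ^ (2 * a)) :
    endFactor a a' u = ∑ x : Fin 2, u ^ (x : ℕ) * expand ℚ 2 (endPoly a a' x) := by
  simp only [endFactor, endPoly, Fin.sum_univ_two, phi2_eq_expand, Matrix.cons_val_zero,
    Matrix.cons_val_one, Fin.val_zero, Fin.val_one, map_sub, map_mul, map_pow, map_add, map_one,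
    map_ofNat, expand_X, ← pow_mul, ← hu]
  ring

theorem countPoly_eq_sum (n : ℕ) {u : ℚ[X]} (hu : u ^ 2 = X ^ (2 * a)) :
    countPoly n a u =
      ∑ x : Fin 2, ∑ y : Fin 2, u ^ (x + y : ℕ) * expand ℚ 2 (chainPoly n a x y) := by
  rw [countPoly, endFactor_eq_sum a hu, endFactor_eq_sum (a + 1) hu, Finset.sum_mul_sum]
  simp only [Finset.mul_sum, chainPoly, phi2_eq_expand, map_mul, map_pow, expand_X]
  refine Finset.sum_congr rfl fun x _ => Finset.sum_congr rfl fun y _ => ?_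
  ring

theorem aeval_shift_countPoly_add (n : ℕ) (N : ℤ) (ha : a ≠ 0) :
    aeval shift (countPoly n a (X ^ a)) (powOnClass n a 0) N +
        aeval shift (countPoly n a (-X ^ a)) (powOnClass n (2 * a) 0 - powOnClass n (2 * a) a) N =
      2 * ∑ x : Fin 2, ∑ y : Fin 2, aeval shift ((X ^ a) ^ (x + y : ℕ) *
        expand ℚ 2 (chainPoly n a x y)) (powOnClass n (2 * a) ((x + y : ℕ) * a)) N := by
  rw [countPoly_eq_sum n (by ring), countPoly_eq_sum n (by ring), ← powOnClass_zero_add ha]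
  simp only [map_sum, LinearMap.sum_apply, Finset.sum_apply, Finset.mul_sum,
    ← Finset.sum_add_distrib]
  refine Finset.sum_congr rfl fun x _ => Finset.sum_congr rfl fun y _ => ?_
  have hj : (x + y : ℕ) ≤ 2 := by omega
  have hneg : (-X ^ a : ℚ[X]) ^ (x + y : ℕ) = C ((-1) ^ (x + y : ℕ)) * (X ^ a) ^ (x + y : ℕ) := by
    rw [neg_pow, map_pow, map_neg, map_one]
  have hclass := congrArg (fun f => aeval shift ((X ^ a) ^ (x + y : ℕ) *
    expand ℚ 2 (chainPoly n a x y)) f N) (powOnClass_add_add_neg_one_pow_smul_sub n a hj)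
  simp only [map_add, map_smul, Pi.add_apply, Pi.smul_apply, smul_eq_mul] at hclass
  rw [hneg, mul_assoc, ← smul_eq_C_mul, map_smul, LinearMap.smul_apply, Pi.smul_apply,
    smul_eq_mul, map_add, Pi.add_apply, hclass]

open Filter

theorem eventually_two_mul_pow_mul_Mcount (hn : 3 ≤ n) (ha : a ≠ 0) :
    ∀ᶠ m : ℕ in atTop, 2 * (a : ℚ) ^ n * Mcount n (2 * m + 1) a =
      aeval shift (countPoly n a (X ^ a)) (powOnClass n a 0) (2 * (m + a)) +
        aeval shift (countPoly n a (-X ^ a)) (powOnClass n (2 * a) 0 - powOnClass n (2 * a) a)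
          (2 * (m + a)) := by
  obtain ⟨t, rfl⟩ := Nat.exists_eq_add_of_le' hn
  have hdeg : ∀ᶠ m : ℕ in atTop, ∀ x y, (chainPoly (t + 3) a x y).natDegree ≤ m :=
    eventually_all.2 fun x => eventually_all.2 fun y => eventually_ge_atTop _
  filter_upwards [eventually_ge_atTop a, hdeg] with m ham hdeg
  rw [Mcount_eq_sum_coeff_chainPoly_mul ha ham, aeval_shift_countPoly_add _ _ ha, mul_assoc]
  simp only [Finset.mul_sum]
  congr! 3 with x _ y _
  rw [pow_mul_coeff_mul_carlitzSeries ha (by omega) (hdeg x y)]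

end Extraction

section Evaluation

theorem aeval_shift_countPoly_odd {n a : ℕ} (hn : 3 ≤ n) (ha : Odd a) (N : ℤ) :
    a * (aeval shift (countPoly n a (X ^ a)) (powOnClass n a 0) (2 * N) +
        aeval shift (countPoly n a (-X ^ a)) (powOnClass n (2 * a) 0 - powOnClass n (2 * a) a)
          (2 * N)) =
      2 * aeval shift (countPoly n a (X ^ a)) (fun M : ℤ => (M : ℚ) ^ n) (2 * N) := by
  have hneg : -X ^ a = (X ^ a : ℚ[X]).comp (-X) := by rw [X_pow_comp, ha.neg_pow]
  obtain ⟨c, rfl⟩ := id ha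
  rw [hneg, ← countPoly_comp_neg_X, powOnClass_zero_sub_of_odd ha, aeval_shift_comp_neg_X,
    Int.negOnePow_even _ (even_two_mul N), one_smul, ← two_mul, mul_left_comm,
    ← aeval_shift_powOnClass_of_phi_pow_dvd ha.pos.ne' (phi_pow_dvd_countPoly_odd hn c),
    Pi.smul_apply, smul_eq_mul]

theorem aeval_shift_countPoly_even {n b : ℕ} (hn : 3 ≤ n) (hb : b ≠ 0) (N : ℤ) :
    (2 * b) * aeval shift (countPoly n (2 * b) (X ^ (2 * b))) (powOnClass n (2 * b) 0) (2 * N) =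
      2 * aeval shift (countPoly n (2 * b) (X ^ (2 * b))) (fun M : ℤ => (M : ℚ) ^ n) (2 * N) := by
  obtain ⟨p, hp, hexpand⟩ := exists_expand_eq_countPoly_even hn hb
  have hscale : (fun M : ℤ => ((2 * M : ℤ) : ℚ) ^ n) = (2 : ℚ) ^ n • fun M : ℤ => (M : ℚ) ^ n := by
    funext M
    simp [mul_pow]
  have hclass : (fun M : ℤ => powOnClass n (2 * b) 0 (2 * M)) = (2 : ℚ) ^ n • powOnClass n b 0 := by
    funext M
    simp [powOnClass_two_mul]
  have hsub (f : ℤ → ℚ) := aeval_shift_expand (k := 2) p f N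
  rw [Nat.cast_ofNat] at hsub
  rw [hexpand, hsub, hsub, hscale, hclass, map_smul, map_smul,
    ← aeval_shift_powOnClass_of_phi_pow_dvd hb hp]
  simp only [Pi.smul_apply, smul_eq_mul]
  ring

theorem aeval_shift_X_pow_mul_eq_polysum {n a : ℕ} (hn : n ≠ 0) (ha : a ≠ 0) (m : ℕ) (g : ℚ[X]) :
    aeval shift (X ^ (2 * n + 2 * a - 2) * g) (fun N : ℤ => (N : ℚ) ^ n) (2 * (m + a)) =
      polysum (X ^ (2 * n - 1) * g) (2 * m + 1) n := by
  simp only [polysum_eq_aeval_shift, map_mul, Module.End.mul_apply, aeval_shift_X_pow]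
  exact congrArg (aeval shift g _) (by omega)

theorem polysum_C_mul (c : ℚ) (g : ℚ[X]) (q n : ℕ) :
    polysum (C c * g) q n = c * polysum g q n := by
  simp [polysum_eq_aeval_shift]

open Filter

theorem eventually_pow_mul_Mcount {n a : ℕ} (hn : 3 ≤ n) (ha : a ≠ 0) :
    ∀ᶠ m : ℕ in atTop, (a : ℚ) ^ (n + 1) * Mcount n (2 * m + 1) a =
      aeval shift (countPoly n a (X ^ a)) (fun N : ℤ => (N : ℚ) ^ n) (2 * (m + a)) := by
  filter_upwards [eventually_two_mul_pow_mul_Mcount hn ha] with m hm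
  apply mul_left_cancel₀ (two_ne_zero (α := ℚ))
  rw [show 2 * ((a : ℚ) ^ (n + 1) * Mcount n (2 * m + 1) a) =
    a * (2 * (a : ℚ) ^ n * Mcount n (2 * m + 1) a) by ring, hm]
  rcases a.even_or_odd' with ⟨b, rfl | rfl⟩
  · rw [aeval_shift_powOnClass_sub_of_pow_dvd (one_add_X_pow_dvd_countPoly_even hn b),
      Pi.zero_apply, add_zero]
    push_cast
    exact aeval_shift_countPoly_even hn (by omega) _
  · exact aeval_shift_countPoly_odd hn (odd_two_mul_add_one b) _

end Evaluation

/-- Lemma 4.4. Formula for the number of points avoiding the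
`D_n` deformation `x_i ± x_j = 0, 1, ..., a` together with the coordinate
hyperplanes, for all large odd `q`. -/
theorem statement8 (n a : ℕ) (hn : 3 ≤ n) (ha : 1 ≤ a) :
    ∃ N : ℕ, ∀ q : ℕ, Odd q → N < q →
      (Even a →
        (a : ℚ) ^ (n + 1) * (Mcount n q a : ℚ) =
          4 * polysum (X ^ (2 * n - 1) * (phi2 a) ^ (n - 3) * (phi2 (a / 2)) ^ 4 *
            (1 + 3 * X ^ 2 - X ^ a + X ^ (a + 2))) q n) ∧
      (Odd a → ∀ h : ℚ[X], (1 + X) * h = 2 - X ^ (a - 1) + X ^ a →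
        (a : ℚ) ^ (n + 1) * (Mcount n q a : ℚ) =
          polysum (X ^ (2 * n - 1) * (phi2 a) ^ (n - 3) * (phi a) ^ 4 * h) q n) := by
  obtain ⟨m₀, hm₀⟩ := Filter.eventually_atTop.1 (eventually_pow_mul_Mcount hn (Nat.ne_of_gt ha))
  refine ⟨2 * m₀, ?_⟩
  rintro q ⟨m, rfl⟩ hq
  rw [hm₀ m (by omega)]
  refine ⟨fun ⟨b, hb⟩ => ?_, fun ⟨c, hc⟩ h hh => ?_⟩
  · obtain rfl : a = 2 * b := by omega
    rw [countPoly_even (by omega), aeval_shift_X_pow_mul_eq_polysum (by omega) (by omega),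
      mul_left_comm, polysum_C_mul, Nat.mul_div_cancel_left b two_pos]
    simp only [mul_assoc]
  · subst hc
    rw [countPoly_odd n c hh, aeval_shift_X_pow_mul_eq_polysum (by omega) (by omega)]
    simp only [mul_assoc]
end

section
/- Let n \ge 3 and a \ge 1 be integers. There exists an integer N (depending on n and a) such that for every odd integer q > N the following holds. If a is even, writing g(y) := y^{2n-1} \cdot (1 + y^2) \cdot (1 + y^2 + ... + y^{2a-2})^{n-3} \cdot (1 + y^2 + ... + y^{a-2})^4 = \sum_k g_k y^k, then a^{n+1} \cdot N_D(n,q,0,a) = 8 \sum_k g_k (q-k)^n. If a is odd, writing g(y) := y^{2n-2} \cdot (1 + y^2 + ... + y^{2a-2})^{n-3} \cdot (1 + y + ... + y^{a-1})^4 = \sum_k g_k y^k, then a^{n+1} \cdot N_D(n,q,0,a) = \sum_k g_k (q-k)^n. -/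
open Polynomial

/-!
Perturb every coordinate of a point of `(ZMod q) ^ n` infinitesimally by a distinct label, so that
ties between coordinates and their negatives are broken. Each point then corresponds to four pairs
of a signed permutation `w` and a point of the `q`-fold dilated fundamental alcove of the affine
root system of type `D`, four because of the diagram automorphisms. In terms of the halved gaps
`m i` of the alcove point, which satisfy `∑ i, mark i * m i = q` and a parity condition, `x_i ± x_j`
avoiding `0, ..., a` says precisely that `1 + a * ascent w i ≤ m i` for all `i`, because every
positive root is a sum of gaps.

Dividing by `a`, `m i = 1 + r i + a * m' i`, turns this into `ascent w i ≤ m' i`, which is exactly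
what the alcove condition itself requires of the halved gaps at dilation
`k = (q - ∑ i, mark i * (1 + r i)) / a`. So the pairs `(w, m')` represent the points of
`(ZMod k) ^ n`, again four times each, and number `4 * k ^ n`.

It remains to sum over the residues `r` for which `k` is an integer. The generating polynomial of
`∑ i, mark i * (1 + r i)` is divisible by the `(n + 1)`-st power of a geometric sum along which this
divisibility is equidistributed. Each factor lowers by one the degree of the polynomial
`(q - y) ^ n` that the rest of the sum sees, so divisibility by `a` may be replaced by its density:
`1 / a` for odd `a`. For even `a` the geometric sum is one in `y ^ 2`, and what is left is the
density `2 / a` on odd exponents.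
-/

namespace TypeD

/-- Signed permutations of `n` coordinates. In `(σ, ε)` the sign `ε i` is attached to the
position `i` that a coordinate is moved to, not to the coordinate `σ i` that is moved. -/
abbrev SignedPerm (n : ℕ) : Type := Equiv.Perm (Fin n) × (Fin n → ℤˣ)

section Act

variable {n : ℕ} {A : Type*} [AddCommGroup A]

/-- The signed permutation `(σ, ε)` acting on vectors by `y ↦ (ε i • y (σ i))ᵢ`. -/
def act (w : SignedPerm n) : (Fin n → A) ≃+ (Fin n → A) where
  toFun y i := w.2 i • y (w.1 i)
  invFun p j := w.2 (w.1.symm j) • p (w.1.symm j)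
  left_inv y := by ext; simp [smul_smul]
  right_inv p := by ext; simp [smul_smul]
  map_add' y z := by ext; simp [smul_add]

theorem act_apply (w : SignedPerm n) (y : Fin n → A) (i : Fin n) :
    act w y i = w.2 i • y (w.1 i) := rfl

theorem units_smul_eq_or_eq_neg (e : ℤˣ) (z : A) : e • z = z ∨ e • z = -z := by
  rcases Int.units_eq_one_or e with rfl | rfl <;> simp [Units.smul_def]

theorem abs_units_smul [Lattice A] (e : ℤˣ) (z : A) : |e • z| = |z| := by
  rcases units_smul_eq_or_eq_neg e z with h | h <;> simp [h]

end Act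

section LinearOrder

variable {n : ℕ} {A : Type*} [AddCommGroup A] [LinearOrder A] [IsOrderedAddMonoid A]

theorem existsUnique_units_smul_pos {z : A} (hz : z ≠ 0) : ∃! e : ℤˣ, 0 < e • z := by
  rcases lt_or_gt_of_ne hz with h | h
  · refine ⟨-1, by simpa [Units.smul_def] using h, fun e he => ?_⟩
    rcases Int.units_eq_one_or e with rfl | rfl
    · exact absurd (one_smul ℤˣ z ▸ he) h.not_gt
    · rfl
  · refine ⟨1, by simpa using h, fun e he => ?_⟩
    rcases Int.units_eq_one_or e with rfl | rfl
    · rfl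
    · exact absurd (by simpa [Units.smul_def] using he) h.not_gt

theorem existsUnique_act_strictMono {y : Fin n → A} (hy : ∀ i, y i ≠ 0)
    (hinj : Function.Injective fun i => |y i|) :
    ∃! w : SignedPerm n, StrictMono (act w y) ∧ ∀ i, 0 < act w y i := by
  choose ε hε hε_unique using fun i => existsUnique_units_smul_pos (hy i)
  let σ := Tuple.sort fun i => |y i|
  have act_eq_abs (w : SignedPerm n) (hw : ∀ i, 0 < act w y i) :
      act w y = (fun i => |y i|) ∘ w.1 :=
    funext fun i => (abs_of_pos (hw i)).symm.trans (abs_units_smul _ _)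
  have hpos (i : Fin n) : 0 < act (σ, ε ∘ σ) y i := hε _
  refine ⟨(σ, ε ∘ σ), ⟨?_, hpos⟩, ?_⟩
  · rw [act_eq_abs _ hpos]
    exact (Tuple.monotone_sort _).strictMono_of_injective (hinj.comp σ.injective)
  · rintro ⟨τ, η⟩ ⟨hmono, hpos'⟩
    have hτ : τ = σ := by
      rw [act_eq_abs _ hpos'] at hmono
      have h := Tuple.unique_monotone hmono.monotone (Tuple.monotone_sort fun i => |y i|)
      exact Equiv.ext fun i => hinj (congrFun h i)
    subst hτ
    exact Prod.ext rfl (funext fun i => hε_unique _ _ (hpos' i))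

end LinearOrder

section Ends

variable {N : ℕ} {M : Type*} [CommMonoid M]

@[to_additive]
theorem prod_univ_ends (f : Fin (N + 4) → M) :
    ∏ i, f i = f 0 * f 1 * (∏ i : Fin N, f i.castSucc.castSucc.succ.succ) *
      f (Fin.last (N + 2)).castSucc * f (Fin.last (N + 3)) := by
  rw [Fin.prod_univ_castSucc, Fin.prod_univ_castSucc, Fin.prod_univ_succ, Fin.prod_univ_succ]
  simp [mul_assoc]

theorem sum_succ_sub_castSucc {A : Type*} [AddCommGroup A] {m : ℕ} (f : Fin (m + 1) → A) :
    ∑ i : Fin m, (f i.succ - f i.castSucc) = f (Fin.last m) - f 0 := by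
  rw [Finset.sum_sub_distrib, sub_eq_sub_iff_add_eq_add, add_comm, ← Fin.sum_univ_succ,
    Fin.sum_univ_castSucc, add_comm]

end Ends

section Gap

variable {N : ℕ} {A : Type*} [AddCommGroup A]

/-- The values at `p` of the affine simple roots of type `D`, for the affine root
`K - p (n - 1) - p (n - 2)`: the walls of the fundamental alcove are the zero sets of the gaps. -/
def gap (p : Fin (N + 3) → A) (K : A) : Fin (N + 4) → A :=
  Fin.snoc (Fin.cons (p 0 + p 1) fun i : Fin (N + 2) => p i.succ - p i.castSucc)
    (K - p (Fin.last (N + 2)) - p (Fin.last (N + 1)).castSucc)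

variable (p : Fin (N + 3) → A) (K : A)

@[simp]
theorem gap_zero : gap p K 0 = p 0 + p 1 := rfl

@[simp]
theorem gap_last :
    gap p K (Fin.last (N + 3)) = K - p (Fin.last (N + 2)) - p (Fin.last (N + 1)).castSucc := by
  simp [gap]

@[simp]
theorem gap_castSucc_succ (i : Fin (N + 2)) :
    gap p K i.castSucc.succ = p i.succ - p i.castSucc := by
  simp [gap, -Fin.castSucc_succ, Fin.succ_castSucc]

@[simp]
theorem gap_one : gap p K 1 = p 1 - p 0 := gap_castSucc_succ p K 0

theorem gap_castSucc_last : gap p K (Fin.last (N + 2)).castSucc =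
    p (Fin.last (N + 2)) - p (Fin.last (N + 1)).castSucc :=
  gap_castSucc_succ p K (Fin.last (N + 1))

theorem forall_fin_gap {P : Fin (N + 4) → Prop} :
    (∀ i, P i) ↔ P 0 ∧ (∀ i : Fin (N + 2), P i.castSucc.succ) ∧ P (Fin.last (N + 3)) := by
  rw [Fin.forall_fin_succ, Fin.forall_fin_succ', Fin.succ_last]

/-- The coefficients of the relation between the affine simple roots of type `D`: `1` at the two
leaves on each end of the affine Dynkin diagram and `2` in between. -/
def mark (i : Fin (N + 4)) : ℕ :=
  if (i : ℕ) = 0 ∨ (i : ℕ) = 1 ∨ (i : ℕ) = N + 2 ∨ (i : ℕ) = N + 3 then 1 else 2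

theorem mark_castSucc_castSucc_succ_succ (i : Fin N) : mark i.castSucc.castSucc.succ.succ = 2 := by
  simp [mark]
  omega

theorem sum_mark_nsmul {M : Type*} [AddCommMonoid M] (m : Fin (N + 4) → M) :
    ∑ i, mark i • m i = m 0 + m 1 + 2 • (∑ i : Fin N, m i.castSucc.castSucc.succ.succ) +
      m (Fin.last (N + 2)).castSucc + m (Fin.last (N + 3)) := by
  simp only [sum_univ_ends, mark_castSucc_castSucc_succ_succ]
  simp [Finset.smul_sum, mark]

theorem sum_mark_gap : ∑ i, mark i • gap p K i = K := by
  have middle (i : Fin N) : gap p K i.castSucc.castSucc.succ.succ =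
      p i.succ.castSucc.succ - p i.castSucc.castSucc.succ :=
    gap_castSucc_succ p K i.castSucc.succ
  have telescope : ∑ i : Fin N, (p i.succ.castSucc.succ - p i.castSucc.castSucc.succ) =
      p (Fin.last (N + 1)).castSucc - p 1 :=
    sum_succ_sub_castSucc fun i : Fin (N + 1) => p i.castSucc.succ
  rw [sum_mark_nsmul]
  simp only [middle, telescope, gap_zero, gap_one, gap_last, gap_castSucc_last]
  abel

theorem exists_gap_eq (i : Fin (N + 4)) :
    ∃ b c : Fin (N + 3), b ≠ c ∧ ∃ e f : ℤˣ, ∃ d : ℤ,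
      ∀ (p : Fin (N + 3) → A) (K : A), gap p K i = e • p b + f • p c + d • K := by
  revert i
  refine forall_fin_gap.2 ⟨⟨0, 1, by simp, 1, 1, 0, fun p K => by simp⟩, fun i =>
    ⟨i.succ, i.castSucc, Fin.castSucc_lt_succ.ne', 1, -1, 0, fun p K => ?_⟩,
    ⟨Fin.last (N + 2), (Fin.last (N + 1)).castSucc, (Fin.castSucc_lt_last _).ne', -1, -1, 1,
      fun p K => ?_⟩⟩
  · simp [Units.smul_def, sub_eq_add_neg]
  · simp only [gap_last, Units.smul_def, Units.val_neg, Units.val_one, neg_smul, one_smul]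
    abel

theorem map_gap {B : Type*} [AddCommGroup B] (f : A →+ B) (i : Fin (N + 4)) :
    f (gap p K i) = gap (f ∘ p) (f K) i := by
  revert i
  exact forall_fin_gap.2 ⟨by simp, fun i => by simp, by simp⟩

theorem gap_update_zero_neg :
    gap (Function.update p 0 (-p 0)) K = gap p K ∘ Equiv.swap 0 1 := by
  have fixed (i : Fin (N + 4)) (h0 : i ≠ 0) (h1 : i ≠ 1) :
      (gap p K ∘ Equiv.swap 0 1) i = gap p K i :=
    congrArg _ (Equiv.swap_apply_of_ne_of_ne h0 h1)
  refine funext (forall_fin_gap.2 ⟨?_, fun i => ?_, ?_⟩)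
  · simp [sub_eq_neg_add]
  · rcases eq_or_ne i 0 with rfl | hi
    · simp [add_comm (p 0)]
    · have hi' : i.castSucc ≠ 0 := by simpa using hi
      rw [fixed _ (Fin.succ_ne_zero _) ((Fin.succ_injective _).ne hi')]
      simp [hi']
  · rw [fixed _ (Fin.ne_of_val_ne (by simp)) (Fin.ne_of_val_ne (by simp))]
    rw [gap_last, gap_last, Function.update_of_ne (Fin.ne_of_val_ne (by simp)),
      Function.update_of_ne (Fin.ne_of_val_ne (by simp))]

theorem gap_update_last_sub :
    gap (Function.update p (Fin.last (N + 2)) (K - p (Fin.last (N + 2)))) K =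
      gap p K ∘ Equiv.swap (Fin.last (N + 2)).castSucc (Fin.last (N + 3)) := by
  have fixed (i : Fin (N + 4)) (h : i ≠ (Fin.last (N + 2)).castSucc) (h' : i ≠ Fin.last (N + 3)) :
      (gap p K ∘ Equiv.swap (Fin.last (N + 2)).castSucc (Fin.last (N + 3))) i = gap p K i :=
    congrArg _ (Equiv.swap_apply_of_ne_of_ne h h')
  refine funext (forall_fin_gap.2 ⟨?_, fun i => ?_, ?_⟩)
  · rw [fixed _ (Fin.ne_of_val_ne (by simp)) (Fin.ne_of_val_ne (by simp)), gap_zero, gap_zero,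
      Function.update_of_ne (Fin.ne_of_val_ne (by simp)),
      Function.update_of_ne (Fin.ne_of_val_ne (by simp))]
  · rcases eq_or_ne i (Fin.last (N + 1)) with rfl | hi
    · rw [Function.comp_apply, ← Fin.castSucc_succ, Fin.succ_last, Equiv.swap_apply_left]
      simp [gap_castSucc_last, (Fin.castSucc_lt_last _).ne]
    · have hi' : i.succ ≠ Fin.last (N + 2) := by simpa [← Fin.succ_last] using hi
      rw [fixed _ (by simpa [← Fin.castSucc_succ] using hi')
        (by simp [← Fin.castSucc_succ, (Fin.castSucc_lt_last _).ne])]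
      simp [hi', (Fin.castSucc_lt_last _).ne]
  · simp [gap_castSucc_last, (Fin.castSucc_lt_last _).ne]

end Gap

section PositiveRoots

variable {N : ℕ} {A : Type*} [AddCommGroup A] {p : Fin (N + 3) → A} {K : A}
  {S : AddSubsemigroup A}

theorem sub_mem_of_gap_mem (h : ∀ i, gap p K i ∈ S) {i j : Fin (N + 3)} (hij : i < j) :
    p j - p i ∈ S := by
  let r : A → A → Prop := fun x y => y - x ∈ S
  have : IsTrans A r := ⟨fun x y z hxy hyz => by simpa [r] using S.add_mem hyz hxy⟩
  refine (Fin.liftFun_iff_succ r).2 (fun i => ?_) hij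
  simpa using h i.castSucc.succ

theorem add_sub_mem_of_gap_mem (h : ∀ i, gap p K i ∈ S) {x : A} (hx : x ∈ S)
    {i j : Fin (N + 3)} (hij : i ≤ j) : x + (p j - p i) ∈ S := by
  rcases hij.eq_or_lt with rfl | hij
  · simpa using hx
  · exact S.add_mem hx (sub_mem_of_gap_mem h hij)

theorem add_mem_of_gap_mem (h : ∀ i, gap p K i ∈ S) {i j : Fin (N + 3)} (hij : i ≠ j) :
    p i + p j ∈ S := by
  wlog hlt : i < j generalizing i j
  · rw [add_comm]
    exact this hij.symm (hij.lt_of_le' (not_lt.1 hlt))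
  have h01 : p 0 + p 1 ∈ S := h 0
  have h0j := add_sub_mem_of_gap_mem h h01 (Fin.one_le_of_ne_zero (Fin.ne_zero_of_lt hlt))
  rcases eq_or_ne i 0 with rfl | hi
  · simpa [add_assoc] using h0j
  · have := add_sub_mem_of_gap_mem h
      (add_sub_mem_of_gap_mem h h01 (Fin.one_le_of_ne_zero hi)) (Fin.zero_le j)
    convert this using 1
    abel

theorem sub_add_mem_of_gap_mem (h : ∀ i, gap p K i ∈ S) {i j : Fin (N + 3)} (hij : i ≠ j) :
    K - (p i + p j) ∈ S := by
  wlog hlt : i < j generalizing i j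
  · rw [add_comm]
    exact this hij.symm (hij.lt_of_le' (not_lt.1 hlt))
  have hlast := h (Fin.last (N + 3))
  rw [gap_last] at hlast
  have hi : i ≤ (Fin.last (N + 1)).castSucc :=
    Fin.le_castSucc_iff.2 (by simpa using hlt.trans_le (Fin.le_last j))
  have := add_sub_mem_of_gap_mem h (add_sub_mem_of_gap_mem h hlast hi) (Fin.le_last j)
  convert this using 1
  abel

theorem sub_sub_mem_of_gap_mem (h : ∀ i, gap p K i ∈ S) {i j : Fin (N + 3)} :
    K - (p j - p i) ∈ S := by
  obtain ⟨x, hxi, hxj⟩ := Fin.exists_ne_and_ne_of_two_lt i j (by lia)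
  have := S.add_mem (sub_add_mem_of_gap_mem h hxj) (add_mem_of_gap_mem h hxi)
  convert this using 1
  abel

end PositiveRoots

theorem card_subtype_eq_two_mul {α : Type*} {e : α → α} (he : Function.Involutive e)
    {P S : α → Prop} (hP : ∀ x, P x → P (e x)) (hS : ∀ x, P x → (S (e x) ↔ ¬ S x)) :
    Nat.card {x // P x} = 2 * Nat.card {x // P x ∧ S x} := by
  classical
  have swap : {x // P x ∧ ¬ S x} ≃ {x // P x ∧ S x} := he.toPerm.subtypeEquiv fun x =>
    ⟨fun hx => ⟨hP x hx.1, (hS x hx.1).2 hx.2⟩, fun hx =>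
      have hx' : P x := he x ▸ hP _ hx.1
      ⟨hx', (hS x hx').1 hx.2⟩⟩
  have split : {x // P x} ≃ {x // P x ∧ S x} ⊕ {x // P x ∧ ¬ S x} :=
    (Equiv.sumCompl fun x : {x // P x} => S x).symm.trans
      ((Equiv.subtypeSubtypeEquivSubtypeInter P S).sumCongr
        (Equiv.subtypeSubtypeEquivSubtypeInter P fun x => ¬ S x))
  rw [Nat.card_congr (split.trans (((Equiv.refl _).sumCongr swap).trans
    (Equiv.boolProdEquivSum _).symm)), Nat.card_prod]
  simp

section Reflect

variable {n : ℕ} {A : Type*} [AddCommGroup A]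

/-- Change of the pair `(w, y)` that replaces the `i`-th coordinate `p i` of `p = act w y` by
`K - p i`, at the cost of translating one coordinate of `y` by `±K`. -/
def reflect (i : Fin n) (K : A) (wy : SignedPerm n × (Fin n → A)) :
    SignedPerm n × (Fin n → A) :=
  ((wy.1.1, Function.update wy.1.2 i (-wy.1.2 i)),
    Function.update wy.2 (wy.1.1 i) (wy.2 (wy.1.1 i) - wy.1.2 i • K))

theorem act_reflect (i : Fin n) (K : A) (wy : SignedPerm n × (Fin n → A)) :
    act (reflect i K wy).1 (reflect i K wy).2 =
      Function.update (act wy.1 wy.2) i (K - act wy.1 wy.2 i) := by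
  ext j
  rcases eq_or_ne j i with rfl | hj
  · simp [act_apply, reflect, Units.neg_smul, smul_sub, smul_smul, neg_add_eq_sub]
  · simp [act_apply, reflect, hj]

theorem reflect_involutive (i : Fin n) (K : A) : Function.Involutive (reflect i K) := by
  rintro ⟨⟨σ, ε⟩, y⟩
  simp [reflect, Units.neg_smul]

end Reflect

section Alcove

variable {N : ℕ} {A : Type*} [AddCommGroup A] [LinearOrder A]

/-- The open fundamental alcove of type `D`, dilated by `K`. -/
def InAlcove (p : Fin (N + 3) → A) (K : A) : Prop := ∀ i, 0 < gap p K i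

variable {p : Fin (N + 3) → A} {K κ : A}

theorem InAlcove.update_zero (h : InAlcove p K) :
    InAlcove (Function.update p 0 (0 - p 0)) K := by
  rw [zero_sub, InAlcove, gap_update_zero_neg]
  exact fun i => h _

theorem InAlcove.update_last (h : InAlcove p K) :
    InAlcove (Function.update p (Fin.last (N + 2)) (K - p (Fin.last (N + 2)))) K := by
  rw [InAlcove, gap_update_last_sub]
  exact fun i => h _

variable [IsOrderedAddMonoid A]

theorem InAlcove.strictMono (h : InAlcove p K) : StrictMono p := fun _ _ hij =>
  sub_pos.1 (sub_mem_of_gap_mem (S := ⟨Set.Ioi 0, add_pos⟩) h hij)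

theorem inAlcove_and_iff :
    InAlcove p (κ + κ) ∧ 0 < p 0 ∧ p (Fin.last (N + 2)) < κ ↔
      (StrictMono p ∧ ∀ i, 0 < p i) ∧ ∀ i, p i < κ := by
  constructor
  · rintro ⟨h, h0, hlast⟩
    have mono := h.strictMono.monotone
    exact ⟨⟨h.strictMono, fun i => h0.trans_le (mono i.zero_le)⟩,
      fun i => (mono i.le_last).trans_lt hlast⟩
  · rintro ⟨⟨mono, hpos⟩, hlt⟩
    refine ⟨forall_fin_gap.2 ⟨?_, fun i => ?_, ?_⟩, hpos 0, hlt _⟩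
    · simpa using add_pos (hpos 0) (hpos 1)
    · simpa using mono Fin.castSucc_lt_succ
    · simpa [sub_sub] using add_lt_add (hlt _) (hlt _)

theorem card_strictMono {n : ℕ} {Y : Set (Fin n → A)} (hne : ∀ y ∈ Y, ∀ j, y j ≠ 0)
    (hinj : ∀ y ∈ Y, Function.Injective fun j => |y j|) :
    Nat.card {wy : SignedPerm n × (Fin n → A) // wy.2 ∈ Y ∧
      (StrictMono (act wy.1 wy.2) ∧ ∀ i, 0 < act wy.1 wy.2 i) ∧ ∀ i, act wy.1 wy.2 i < κ} =
    Nat.card {y : Fin n → A // y ∈ Y ∧ ∀ j, |y j| < κ} := by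
  have abs_lt_iff {w : SignedPerm n} {y : Fin n → A} (hpos : ∀ i, 0 < act w y i) :
      (∀ i, act w y i < κ) ↔ ∀ j, |y j| < κ := by
    rw [← w.1.forall_congr_right (q := fun j => |y j| < κ)]
    refine forall_congr' fun i => ?_
    rw [← abs_of_pos (hpos i), act_apply, abs_units_smul]
  refine Nat.card_congr (Equiv.ofBijective
    (fun x => ⟨x.1.2, x.2.1, (abs_lt_iff x.2.2.1.2).1 x.2.2.2⟩) ⟨?_, ?_⟩)
  · rintro ⟨⟨w, y⟩, hy, hw, _⟩ ⟨⟨w', y'⟩, _, hw', _⟩ h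
    obtain rfl : y = y' := congrArg Subtype.val h
    obtain rfl := (existsUnique_act_strictMono (hne y hy) (hinj y hy)).unique hw hw'
    rfl
  · rintro ⟨y, hy, hlt⟩
    obtain ⟨w, hw, _⟩ := existsUnique_act_strictMono (hne y hy) (hinj y hy)
    exact ⟨⟨(w, y), hy, hw, (abs_lt_iff hw.2).2 hlt⟩, rfl⟩

theorem card_inAlcove {Y : Set (Fin (N + 3) → A)}
    (hY : ∀ y ∈ Y, ∀ j (e : ℤˣ), Function.update y j (y j - e • (κ + κ)) ∈ Y)
    (hne : ∀ y ∈ Y, ∀ j, y j ≠ 0) (hneκ : ∀ y ∈ Y, ∀ j, |y j| ≠ |κ|)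
    (hinj : ∀ y ∈ Y, Function.Injective fun j => |y j|) :
    Nat.card {wy : SignedPerm (N + 3) × (Fin (N + 3) → A) //
      wy.2 ∈ Y ∧ InAlcove (act wy.1 wy.2) (κ + κ)} =
    4 * Nat.card {y : Fin (N + 3) → A // y ∈ Y ∧ ∀ j, |y j| < κ} := by
  have act_ne_zero {w} {y : Fin (N + 3) → A} (hy : y ∈ Y) (i) : act w y i ≠ 0 := fun h =>
    hne y hy (w.1 i) (abs_eq_zero.1 (by rw [← abs_units_smul (w.2 i), ← act_apply, h, abs_zero]))
  have act_ne_κ {w} {y : Fin (N + 3) → A} (hy : y ∈ Y) (i) : act w y i ≠ κ := fun h =>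
    hneκ y hy (w.1 i) (by rw [← abs_units_smul (w.2 i), ← act_apply, h])
  have flip_zero := card_subtype_eq_two_mul (reflect_involutive (0 : Fin (N + 3)) (0 : A))
    (P := fun wy => wy.2 ∈ Y ∧ InAlcove (act wy.1 wy.2) (κ + κ))
    (S := fun wy => 0 < act wy.1 wy.2 0)
    (fun wy h => ⟨by simpa [reflect] using h.1, by simpa only [act_reflect] using h.2.update_zero⟩)
    (fun wy h => by
      simpa [act_reflect] using (act_ne_zero h.1 0).le_iff_lt.symm)
  have flip_last := card_subtype_eq_two_mul (reflect_involutive (Fin.last (N + 2)) (κ + κ))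
    (P := fun wy => wy.2 ∈ Y ∧ InAlcove (act wy.1 wy.2) (κ + κ) ∧ 0 < act wy.1 wy.2 0)
    (S := fun wy => act wy.1 wy.2 (Fin.last (N + 2)) < κ)
    (fun wy h => ⟨hY _ h.1 _ _, by simpa only [act_reflect] using h.2.1.update_last,
      by simpa [act_reflect] using h.2.2⟩)
    (fun wy h => by
      simpa [act_reflect, sub_lt_iff_lt_add] using (act_ne_κ h.1 _).symm.le_iff_lt.symm)
  simp only [and_assoc] at flip_zero flip_last
  simp only [flip_zero, flip_last, inAlcove_and_iff, card_strictMono hne hinj, ← mul_assoc,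
    Nat.reduceMul]

end Alcove

section Label

variable {n : ℕ}

/-- Pairwise distinct positive numbers, decreasing along the coordinates; they break the ties
between coordinates. -/
def label (j : Fin n) : ℤ := n - j

theorem label_pos (j : Fin n) : 0 < label j := by
  simp [label]

theorem label_strictAnti : StrictAnti (label (n := n)) := fun i j hij => by
  simpa [label] using hij

/-- The integer points `2 * x + s`, moved off the walls by an infinitesimal multiple of the
labels. -/
def perturb (s : ℤ) (x : Fin n → ℤ) (j : Fin n) : ℤ ×ₗ ℤ := toLex (2 * x j + s, -label j)

theorem perturb_injective (s : ℤ) : Function.Injective (perturb (n := n) s) := fun x y h => by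
  simpa [perturb, funext_iff] using h

theorem perturb_ne (s : ℤ) (x : Fin n → ℤ) (j : Fin n) (t : ℤ) : perturb s x j ≠ toLex (t, 0) := by
  simp [perturb, (label_pos j).ne']

theorem abs_perturb_injective (s : ℤ) (x : Fin n → ℤ) :
    Function.Injective fun j => |perturb s x j| := fun i j h => by
  refine label_strictAnti.injective ?_
  have := label_pos i
  have := label_pos j
  rcases abs_eq_abs.1 h with h | h
  · have := congrArg (fun z => (ofLex z).2) h
    simpa [perturb] using this
  · have := congrArg (fun z => (ofLex z).2) h
    simp [perturb] at this
    lia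

theorem abs_perturb_lt_iff {k s : ℤ} {x : Fin n → ℤ} {j : Fin n} :
    |perturb s x j| < toLex (k, 0) ↔ 2 * x j + s ∈ Set.Ioc (-k) k := by
  have := label_pos j
  simp [abs_lt, perturb, ← toLex_neg, Prod.Lex.toLex_lt_toLex]
  lia

end Label

section Residues

theorem existsUnique_intCast_eq_and_mem_Ioc {k : ℕ} (hk : 0 < k) (s : ℤ) (z : ZMod k) :
    ∃! x : ℤ, (x : ZMod k) = z ∧ 2 * x + s ∈ Set.Ioc (-(k : ℤ)) k := by
  obtain ⟨x, rfl⟩ := ZMod.intCast_surjective z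
  have shift (m : ℤ) : 2 * x + s + m • (2 * (k : ℤ)) ∈ Set.Ioc (-(k : ℤ)) (-k + 2 * k) ↔
      2 * (x + m * k) + s ∈ Set.Ioc (-(k : ℤ)) k := by
    rw [smul_eq_mul]
    ring_nf
  obtain ⟨m, hm, hm_unique⟩ := existsUnique_add_zsmul_mem_Ioc (a := 2 * (k : ℤ)) (by lia)
    (2 * x + s) (-k)
  refine ⟨x + m * k, ⟨by simp, (shift m).1 hm⟩, ?_⟩
  rintro y ⟨hy, hmem⟩
  obtain ⟨l, hl⟩ := (ZMod.intCast_eq_intCast_iff_dvd_sub _ _ _).1 hy.symm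
  obtain rfl : y = x + l * k := by linear_combination hl
  rw [hm_unique l ((shift l).2 hmem)]

theorem card_subtype_mem_image {α β : Type*} {f : α → β} (hf : Function.Injective f)
    (P : Set α) (R : β → Prop) :
    Nat.card {b // b ∈ f '' P ∧ R b} = Nat.card {a // a ∈ P ∧ R (f a)} := by
  refine (Nat.card_congr (Equiv.subtypeEquivRight fun b => ?_)).trans
    (Nat.card_image_of_injective hf {a | a ∈ P ∧ R (f a)})
  simp only [Set.mem_image, Set.mem_ofPred_eq]
  grind

theorem card_abs_perturb_lt {n k : ℕ} (hk : 0 < k) (s : ℤ) (Q : Set (Fin n → ZMod k)) :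
    Nat.card {x : Fin n → ℤ // x ∈ {x | (fun j => (x j : ZMod k)) ∈ Q} ∧
      ∀ j, |perturb s x j| < toLex ((k : ℤ), (0 : ℤ))} = Nat.card Q := by
  simp only [abs_perturb_lt_iff]
  have lift := existsUnique_intCast_eq_and_mem_Ioc hk s
  refine Nat.card_congr (Equiv.ofBijective (fun x => ⟨fun j => (x.1 j : ZMod k), x.2.1⟩) ⟨?_, ?_⟩)
  · rintro ⟨x, hx⟩ ⟨y, hy⟩ h
    have hxy (j : Fin n) : (x j : ZMod k) = y j := congrFun (congrArg Subtype.val h) j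
    exact Subtype.ext (funext fun j => (lift (y j)).unique ⟨hxy j, hx.2 j⟩ ⟨rfl, hy.2 j⟩)
  · rintro ⟨z, hz⟩
    choose x hx using fun j => (lift (z j)).exists
    obtain rfl : (fun j => (x j : ZMod k)) = z := funext fun j => (hx j).1
    exact ⟨⟨x, hz, fun j => (hx j).2⟩, rfl⟩

theorem update_perturb_sub {n : ℕ} (k s : ℤ) (x : Fin n → ℤ) (j : Fin n) (e : ℤˣ) :
    Function.update (perturb s x) j (perturb s x j - e • toLex (2 * k, 0)) =
      perturb s (Function.update x j (x j - e * k)) := by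
  ext i
  rcases eq_or_ne i j with rfl | h
  · rcases Int.units_eq_one_or e with rfl | rfl <;>
      simp [perturb, Units.smul_def, ← toLex_neg, ← toLex_sub] <;> ring
  · simp [perturb, h]

theorem card_perturb_inAlcove {N k : ℕ} (hk : 0 < k) (s : ℤ) (Q : Set (Fin (N + 3) → ZMod k)) :
    Nat.card {wx : SignedPerm (N + 3) × (Fin (N + 3) → ℤ) // (fun j => (wx.2 j : ZMod k)) ∈ Q ∧
      InAlcove (act wx.1 (perturb s wx.2)) (toLex (2 * (k : ℤ), (0 : ℤ)))} = 4 * Nat.card Q := by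
  let P : Set (Fin (N + 3) → ℤ) := {x | (fun j => (x j : ZMod k)) ∈ Q}
  let κ : ℤ ×ₗ ℤ := toLex (k, 0)
  have hκ : κ + κ = toLex (2 * (k : ℤ), (0 : ℤ)) := by
    rw [two_mul]
    rfl
  have count := card_inAlcove (Y := perturb s '' P) (κ := κ)
    (by
      rintro _ ⟨x, hx, rfl⟩ j e
      rw [hκ, update_perturb_sub]
      have residues : (fun i => ((Function.update x j (x j - e * k) i : ℤ) : ZMod k)) =
          fun i => (x i : ZMod k) := by
        ext i
        rcases eq_or_ne i j with rfl | h <;> simp [*]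
      exact ⟨_, by simpa only [P, Set.mem_ofPred_eq, residues] using hx, rfl⟩)
    (by rintro _ ⟨x, -, rfl⟩ j; exact perturb_ne s x j 0)
    (by
      rintro _ ⟨x, -, rfl⟩ j h
      rcases abs_eq_abs.1 h with h | h
      · exact perturb_ne s x j _ h
      · exact perturb_ne s x j (-k) (by rw [h, ← toLex_neg]; simp))
    (by rintro _ ⟨x, -, rfl⟩; exact abs_perturb_injective s x)
  rw [card_subtype_mem_image (perturb_injective s) P, card_abs_perturb_lt hk, hκ] at count
  have pairs := card_subtype_mem_image (f := Prod.map id (perturb s))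
    (Function.injective_id.prodMap (perturb_injective s)) (Set.univ ×ˢ P)
    fun wy => InAlcove (act wy.1 wy.2) (toLex (2 * (k : ℤ), (0 : ℤ)))
  rw [← count]
  simpa [P, Set.prodMap_image_prod] using pairs.symm

end Residues

section GapInjective

variable {N : ℕ} {A : Type*} [AddCommGroup A]

theorem gap_injective [IsAddTorsionFree A] (K : A) :
    Function.Injective fun p : Fin (N + 3) → A => gap p K := fun p p' h => by
  have h (i) : gap p K i = gap p' K i := congrFun h i
  have step (i : Fin (N + 2)) : p i.succ - p i.castSucc = p' i.succ - p' i.castSucc := by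
    simpa using h i.castSucc.succ
  refine funext (Fin.induction ?_ fun i hi => ?_)
  · have hadd : p 0 + p 1 = p' 0 + p' 1 := h 0
    have hsub : p 1 - p 0 = p' 1 - p' 0 := step 0
    refine nsmul_right_injective two_ne_zero ?_
    calc 2 • p 0 = (p 0 + p 1) - (p 1 - p 0) := by abel
      _ = 2 • p' 0 := by rw [hadd, hsub]; abel
  · simpa [hi] using step i

/-- The point whose gaps are `2 • m`, up to the last one, which depends on the dilation. -/
def positions (m : Fin (N + 4) → A) (i : Fin (N + 3)) : A :=
  m 0 - m 1 + 2 • Fin.partialSum (fun j : Fin (N + 2) => m j.castSucc.succ) i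

theorem positions_zero (m : Fin (N + 4) → A) : positions m 0 = m 0 - m 1 := by
  simp [positions]

theorem positions_succ (m : Fin (N + 4) → A) (i : Fin (N + 2)) :
    positions m i.succ = positions m i.castSucc + 2 • m i.castSucc.succ := by
  simp only [positions, Fin.partialSum_succ, smul_add, add_assoc]

theorem mark_last : mark (Fin.last (N + 3)) = 1 := by
  simp [mark]

theorem gap_positions (m : Fin (N + 4) → A) :
    gap (positions m) (2 • ∑ i, mark i • m i) = 2 • m := by
  have init (i : Fin (N + 3)) :
      gap (positions m) (2 • ∑ i, mark i • m i) i.castSucc = 2 • m i.castSucc := by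
    refine Fin.cases ?_ (fun i => ?_) i
    · have h1 : positions m 1 = m 0 - m 1 + 2 • m 1 := by
        rw [← positions_zero]
        exact positions_succ m 0
      rw [Fin.castSucc_zero, gap_zero, h1, positions_zero]
      abel
    · rw [Fin.castSucc_succ, gap_castSucc_succ, positions_succ, add_sub_cancel_left]
  have total : ∑ i, mark i • gap (positions m) (2 • ∑ i, mark i • m i) i =
      ∑ i, mark i • 2 • m i := by
    rw [sum_mark_gap, Finset.smul_sum]
    exact Finset.sum_congr rfl fun i _ => smul_comm ..
  rw [Fin.sum_univ_castSucc, Fin.sum_univ_castSucc fun i => mark i • 2 • m i] at total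
  simp only [init, mark_last, one_smul, add_right_inj] at total
  exact funext (Fin.lastCases total init)

end GapInjective

section HalfGaps

/-- The halves of the gaps of the integer points with all coordinates congruent to `s` modulo `2`,
in the alcove dilated by `2 * k`. -/
def gapLattice (N : ℕ) (k s : ℤ) : Set (Fin (N + 4) → ℤ) :=
  {m | ∑ i, mark i • m i = k ∧ 2 ∣ m 0 + m 1 - s}

theorem two_dvd_units_smul_sub_iff (e : ℤˣ) (y s : ℤ) : 2 ∣ e • y - s ↔ 2 ∣ y - s := by
  rcases units_smul_eq_or_eq_neg e y with h | h
  · rw [h]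
  · rw [h]; lia

theorem two_dvd_gap {N : ℕ} {p : Fin (N + 3) → ℤ} {s : ℤ} (hp : ∀ i, 2 ∣ p i - s) (k : ℤ)
    (i : Fin (N + 4)) : 2 ∣ gap p (2 * k) i := by
  revert i
  refine forall_fin_gap.2 ⟨?_, fun i => ?_, ?_⟩
  · have := hp 0
    have := hp 1
    rw [gap_zero]
    lia
  · have := hp i.succ
    have := hp i.castSucc
    rw [gap_castSucc_succ]
    lia
  · have := hp (Fin.last (N + 2))
    have := hp (Fin.last (N + 1)).castSucc
    rw [gap_last]
    lia

theorem two_dvd_positions_sub {N : ℕ} {m : Fin (N + 4) → ℤ} {s : ℤ} (hm : 2 ∣ m 0 + m 1 - s)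
    (i : Fin (N + 3)) : 2 ∣ positions m i - s := by
  induction i using Fin.induction with
  | zero => rw [positions_zero]; lia
  | succ i hi => rw [positions_succ, nsmul_eq_mul]; lia

theorem exists_equiv_gapLattice {N : ℕ} (w : SignedPerm (N + 3)) (k s : ℤ) :
    ∃ e : (Fin (N + 3) → ℤ) ≃ gapLattice N k s,
      ∀ x i, gap (act w fun j => 2 * x j + s) (2 * k) i = 2 * (e x).1 i := by
  have parity (x : Fin (N + 3) → ℤ) (i) : 2 ∣ act w (fun j => 2 * x j + s) i - s :=
    (two_dvd_units_smul_sub_iff ..).2 (by simp)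
  choose f hf using fun x i => two_dvd_gap (parity x) k i
  have mem (x) : f x ∈ gapLattice N k s := by
    constructor
    · have := sum_mark_gap (act w fun j => 2 * x j + s) (2 * k)
      simp only [hf, nsmul_eq_mul, mul_left_comm _ (2 : ℤ), ← Finset.mul_sum] at this
      simpa using this
    · have h0 := hf x 0
      have h1 := hf x 1
      have := parity x 1
      simp only [gap_zero, gap_one] at h0 h1
      lia
  refine ⟨Equiv.ofBijective (fun x => ⟨f x, mem x⟩) ⟨fun x x' h => ?_, fun ⟨m, hm, hs⟩ => ?_⟩, hf⟩
  · have hgap : gap (act w fun j => 2 * x j + s) (2 * k) =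
        gap (act w fun j => 2 * x' j + s) (2 * k) := by
      ext i
      rw [hf, hf, show f x = f x' from congrArg Subtype.val h]
    simpa [funext_iff] using (act w).injective (gap_injective _ hgap)
  · have hparity (j : Fin (N + 3)) : 2 ∣ (act w).symm (positions m) j - s :=
      (two_dvd_units_smul_sub_iff ..).2 (two_dvd_positions_sub hs _)
    choose x hx using hparity
    have hpos : (act w fun j => 2 * x j + s) = positions m :=
      (act w).eq_symm_apply.1 (funext fun j => by rw [← hx, sub_add_cancel])
    have hgap := congrFun (gap_positions m)
    refine ⟨x, Subtype.ext (funext fun i => ?_)⟩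
    have := hf x i
    rw [hm, nsmul_eq_mul] at hgap
    rw [hpos] at this
    simpa [this] using hgap i

end HalfGaps

section Ascent

variable {N : ℕ}

/-- `1` at the affine simple roots that are positive on the labels permuted by `w`, `0` at the
other ones: the affine analogue of the descent indicator of a permutation. -/
def ascent (w : SignedPerm (N + 3)) (i : Fin (N + 4)) : ℤ :=
  if 0 < gap (act w label) 0 i then 1 else 0

theorem ascent_nonneg (w : SignedPerm (N + 3)) (i : Fin (N + 4)) : 0 ≤ ascent w i := by
  rw [ascent]
  split_ifs <;> simp

theorem gap_act_prodMk {A B : Type*} [AddCommGroup A] [AddCommGroup B] (w : SignedPerm (N + 3))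
    (x : Fin (N + 3) → A) (y : Fin (N + 3) → B) (K : A) (L : B) (i : Fin (N + 4)) :
    gap (act w fun j => (x j, y j)) (K, L) i = (gap (act w x) K i, gap (act w y) L i) :=
  Prod.ext (map_gap _ _ (AddMonoidHom.fst A B) i) (map_gap _ _ (AddMonoidHom.snd A B) i)

theorem gap_act_label_ne_zero (w : SignedPerm (N + 3)) (i : Fin (N + 4)) :
    gap (act w label) (0 : ℤ) i ≠ 0 := by
  obtain ⟨b, c, hbc, e, f, d, h⟩ := exists_gap_eq (A := ℤ) i
  rw [h, smul_zero, add_zero]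
  intro h0
  have habs := congrArg abs (eq_neg_of_add_eq_zero_left h0)
  rw [abs_neg, abs_units_smul, abs_units_smul, act_apply, act_apply, abs_units_smul,
    abs_units_smul, abs_of_pos (label_pos _), abs_of_pos (label_pos _)] at habs
  exact hbc (w.1.injective (label_strictAnti.injective habs))

theorem gap_act_perturb (w : SignedPerm (N + 3)) (s : ℤ) (x : Fin (N + 3) → ℤ) (K : ℤ)
    (i : Fin (N + 4)) :
    gap (act w (perturb s x)) (toLex (K, (0 : ℤ))) i =
      toLex (gap (act w fun j => 2 * x j + s) K i, -gap (act w label) 0 i) := by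
  have neg_label : gap (act w fun j => -label j) 0 i = -gap (act w label) (0 : ℤ) i := by
    have := map_gap (act w label) 0 (-AddMonoidHom.id ℤ) i
    rw [map_zero] at this
    exact (congrArg (gap · 0 i) (map_neg (act w) label)).trans this.symm
  have := map_gap (act w fun j => (2 * x j + s, -label j)) (K, 0)
    (toLexAddEquiv (ℤ × ℤ)).toAddMonoidHom i
  rw [gap_act_prodMk, neg_label] at this
  exact this.symm

theorem inAlcove_act_perturb_iff {w : SignedPerm (N + 3)} {k s : ℤ} {x : Fin (N + 3) → ℤ}
    {m : Fin (N + 4) → ℤ} (hm : ∀ i, gap (act w fun j => 2 * x j + s) (2 * k) i = 2 * m i) :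
    InAlcove (act w (perturb s x)) (toLex (2 * k, 0)) ↔ ∀ i, ascent w i ≤ m i := by
  refine forall_congr' fun i => ?_
  have := gap_act_label_ne_zero w i
  rw [gap_act_perturb, hm, ← toLex_zero, Prod.Lex.toLex_lt_toLex, ascent]
  simp only [Prod.fst_zero, Prod.snd_zero]
  split_ifs <;> lia

end Ascent

section Count

theorem card_prod_subtype {α β : Type*} [Fintype α] (P : α → β → Prop)
    [∀ a, Finite {b // P a b}] :
    Nat.card {x : α × β // P x.1 x.2} = ∑ a, Nat.card {b // P a b} := by
  rw [← Nat.card_sigma]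
  exact Nat.card_congr (Equiv.subtypeProdEquivSigmaSubtype P)

theorem mark_ne_zero {N : ℕ} (i : Fin (N + 4)) : mark i ≠ 0 := by
  rw [mark]
  split_ifs <;> simp

theorem finite_gapLattice_le {N : ℕ} (k s : ℤ) {c : Fin (N + 4) → ℤ} (hc : ∀ i, 0 ≤ c i) :
    Finite {m // m ∈ gapLattice N k s ∧ ∀ i, c i ≤ m i} := by
  refine Set.Finite.subset (Set.finite_Icc (0 : Fin (N + 4) → ℤ) fun _ => k) ?_
  rintro m ⟨⟨rfl, -⟩, hm⟩
  have nonneg (i : Fin (N + 4)) : 0 ≤ m i := (hc i).trans (hm i)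
  refine ⟨nonneg, fun i => ?_⟩
  calc m i ≤ mark i • m i := le_self_nsmul (nonneg i) (mark_ne_zero i)
    _ ≤ ∑ i, mark i • m i := Finset.single_le_sum (f := fun i => mark i • m i)
      (fun i _ => nsmul_nonneg (nonneg i) _) (Finset.mem_univ i)

theorem four_mul_card_eq_sum {N k : ℕ} (hk : 0 < k) (s : ℤ) (Q : Set (Fin (N + 3) → ZMod k))
    (c : SignedPerm (N + 3) → Fin (N + 4) → ℤ) (hc : ∀ w i, 0 ≤ c w i)
    (h : ∀ w (x : Fin (N + 3) → ℤ) (m : Fin (N + 4) → ℤ),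
      (∀ i, gap (act w fun j => 2 * x j + s) (2 * (k : ℤ)) i = 2 * m i) →
        ((fun j => (x j : ZMod k)) ∈ Q ∧ (∀ i, ascent w i ≤ m i) ↔ ∀ i, c w i ≤ m i)) :
    4 * Nat.card Q = ∑ w, Nat.card {m // m ∈ gapLattice N k s ∧ ∀ i, c w i ≤ m i} := by
  have fiber (w) : {x : Fin (N + 3) → ℤ // (fun j => (x j : ZMod k)) ∈ Q ∧
      InAlcove (act w (perturb s x)) (toLex (2 * (k : ℤ), (0 : ℤ)))} ≃
      {m // m ∈ gapLattice N k s ∧ ∀ i, c w i ≤ m i} := by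
    choose e he using exists_equiv_gapLattice w (k : ℤ) s
    refine (e.subtypeEquiv fun x => ?_).trans (Equiv.subtypeSubtypeEquivSubtypeInter ..)
    rw [inAlcove_act_perturb_iff (he x)]
    exact h w x _ (he x)
  have := fun w => finite_gapLattice_le k s (hc w)
  have := fun w => Finite.of_equiv _ (fiber w).symm
  rw [← card_perturb_inAlcove hk s, card_prod_subtype fun w x =>
    (fun j => (x j : ZMod k)) ∈ Q ∧ InAlcove (act w (perturb s x)) (toLex (2 * (k : ℤ), (0 : ℤ)))]
  exact Finset.sum_congr rfl fun w _ => Nat.card_congr (fiber w)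

theorem sum_card_ascent_le {N k : ℕ} (hk : 0 < k) (s : ℤ) :
    ∑ w, Nat.card {m // m ∈ gapLattice N k s ∧ ∀ i, ascent w i ≤ m i} = 4 * k ^ (N + 3) := by
  have : NeZero k := ⟨hk.ne'⟩
  rw [← four_mul_card_eq_sum hk s Set.univ ascent ascent_nonneg (by simp)]
  simp

end Count

section Avoidance

variable {n N q a : ℕ}

/-- Tie-broken avoidance for a pair of a value and a label: only the pairs with a positive label,
which represent the differences and sums in `N_D`, are constrained. -/
def PosAvoids (q a : ℕ) (z : ℤ × ℤ) : Prop := 0 < z.2 → Avoids (z.1 : ZMod q) 0 a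

theorem avoids_intCast_iff {z u v : ℤ} :
    Avoids (z : ZMod q) u v ↔ ∀ κ, u ≤ κ → κ ≤ v → ¬(q : ℤ) ∣ z - κ := by
  simp [Avoids, eq_comm (a := (z : ZMod q)), ZMod.intCast_eq_intCast_iff_dvd_sub]

theorem posAvoids_add_zsmul_iff {z : ℤ × ℤ} (d : ℤ) :
    PosAvoids q a (z + d • ((q : ℤ), 0)) ↔ PosAvoids q a z := by
  simp [PosAvoids]

theorem posAvoids_pair_iff (x : Fin n → ℤ) :
    (∀ i j, i ≠ j → ∀ e f : ℤˣ, PosAvoids q a (e • (x i, label i) + f • (x j, label j))) ↔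
      ∀ i j, i < j →
        Avoids (x i - x j : ZMod q) 0 a ∧ Avoids (x i + x j : ZMod q) 0 a := by
  constructor
  · intro h i j hij
    have := label_pos j
    have := label_strictAnti hij
    refine ⟨?_, ?_⟩
    · simpa [← sub_eq_add_neg] using h i j hij.ne 1 (-1) (by simpa [← sub_eq_add_neg])
    · simpa using h i j hij.ne 1 1 (by simp; lia)
  · intro h i j hij e f
    wlog hlt : i < j generalizing i j e f
    · rw [add_comm]
      exact this j i hij.symm f e (hij.lt_of_le' (not_lt.1 hlt))
    have := label_pos j
    have := label_strictAnti hlt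
    intro hpos
    rcases Int.units_eq_one_or e with rfl | rfl <;> rcases Int.units_eq_one_or f with rfl | rfl
    · simpa using (h i j hlt).2
    · simpa [← sub_eq_add_neg] using (h i j hlt).1
    all_goals simp at hpos; lia

theorem forall_units_smul_act_iff {A : Type*} [AddCommGroup A] {P : A → Prop} (w : SignedPerm n)
    (y : Fin n → A) :
    (∀ i j, i ≠ j → ∀ e f : ℤˣ, P (e • act w y i + f • act w y j)) ↔
      ∀ i j, i ≠ j → ∀ e f : ℤˣ, P (e • y i + f • y j) := by
  constructor
  · intro h i j hij e f
    simpa [act_apply, smul_smul, mul_assoc] using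
      h (w.1.symm i) (w.1.symm j) (by simpa using hij) (e * w.2 (w.1.symm i))
        (f * w.2 (w.1.symm j))
  · intro h i j hij e f
    simpa [act_apply, smul_smul] using
      h (w.1 i) (w.1 j) (w.1.injective.ne hij) (e * w.2 i) (f * w.2 j)

/-- The pairs with positive value whose value even exceeds `a` when the label is positive: the
values and labels that the gaps of an avoiding point can have. -/
def clearance (a : ℕ) : AddSubsemigroup (ℤ × ℤ) where
  carrier := {z | 1 ≤ z.1 ∧ (0 < z.2 → a + 1 ≤ z.1)}
  add_mem' := by
    rintro ⟨t, u⟩ ⟨t', u'⟩ ⟨ht, hu⟩ ⟨ht', hu'⟩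
    simp only [Set.mem_ofPred_eq, Prod.mk_add_mk] at *
    lia

theorem mem_clearance_iff {z : ℤ × ℤ} :
    z ∈ clearance a ↔ 1 ≤ z.1 ∧ (0 < z.2 → a + 1 ≤ z.1) := Iff.rfl

theorem mem_clearance_of_posAvoids {z : ℤ × ℤ} (hz : z.2 ≠ 0) (h : PosAvoids q a z)
    (h' : PosAvoids q a (-z)) (hpos : (if 0 < z.2 then 1 else 0) ≤ z.1) : z ∈ clearance a := by
  rcases lt_or_gt_of_ne hz with hneg | hz
  · have : z.1 ≠ 0 := fun h0 => h' (by simpa) 0 le_rfl (by simp) (by simp [h0])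
    rw [if_neg hneg.not_gt] at hpos
    exact ⟨by lia, fun h => absurd h hneg.not_gt⟩
  · rw [if_pos hz] at hpos
    refine ⟨hpos, fun _ => ?_⟩
    by_contra! hlt
    exact h hz z.1 (by lia) (by lia) rfl

theorem posAvoids_of_mem_clearance {z : ℤ × ℤ} (hz : z ∈ clearance a)
    (hz' : ((q : ℤ), 0) - z ∈ clearance a) : PosAvoids q a z ∧ PosAvoids q a (-z) := by
  obtain ⟨t, u⟩ := z
  simp only [mem_clearance_iff, Prod.mk_sub_mk] at hz hz'
  refine ⟨fun hu => avoids_intCast_iff.2 fun κ h0 ha hdvd => ?_,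
    fun hu => avoids_intCast_iff.2 fun κ h0 ha hdvd => ?_⟩
  · have := Int.le_of_dvd (by simp at hu; lia) hdvd
    simp at hu this
    lia
  · rw [← dvd_neg] at hdvd
    have := Int.le_of_dvd (by simp; lia) hdvd
    simp at hu this
    lia

theorem posAvoids_of_gap_mem_clearance {p : Fin (N + 3) → ℤ × ℤ}
    (h : ∀ i, gap p ((q : ℤ), 0) i ∈ clearance a) {i j : Fin (N + 3)} (hij : i ≠ j) (e f : ℤˣ) :
    PosAvoids q a (e • p i + f • p j) := by
  have hadd := posAvoids_of_mem_clearance (add_mem_of_gap_mem h hij) (sub_add_mem_of_gap_mem h hij)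
  have hsub : PosAvoids q a (p i - p j) ∧ PosAvoids q a (p j - p i) := by
    wlog hlt : i < j generalizing i j
    · exact (this hij.symm (by rwa [add_comm]) (hij.lt_of_le' (not_lt.1 hlt))).symm
    simpa [and_comm] using
      posAvoids_of_mem_clearance (sub_mem_of_gap_mem h hlt) (sub_sub_mem_of_gap_mem h)
  rcases Int.units_eq_one_or e with rfl | rfl <;> rcases Int.units_eq_one_or f with rfl | rfl
  · simpa using hadd.1
  · simpa [Units.smul_def, ← sub_eq_add_neg] using hsub.1
  · simpa [Units.smul_def, neg_add_eq_sub] using hsub.2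
  · simpa [Units.smul_def, neg_add_rev, add_comm] using hadd.2

theorem gap_mem_clearance {p : Fin (N + 3) → ℤ × ℤ} {i : Fin (N + 4)}
    (h : ∀ i j, i ≠ j → ∀ e f : ℤˣ, PosAvoids q a (e • p i + f • p j))
    (hne : (gap p ((q : ℤ), 0) i).2 ≠ 0)
    (hpos : (if 0 < (gap p ((q : ℤ), 0) i).2 then 1 else 0) ≤ (gap p ((q : ℤ), 0) i).1) :
    gap p ((q : ℤ), 0) i ∈ clearance a := by
  obtain ⟨b, c, hbc, e, f, d, hgap⟩ := exists_gap_eq (A := ℤ × ℤ) i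
  refine mem_clearance_of_posAvoids (q := q) hne ?_ ?_ hpos
  · rw [hgap, posAvoids_add_zsmul_iff]
    exact h b c hbc e f
  · rw [hgap, neg_add, ← neg_smul d, posAvoids_add_zsmul_iff]
    simpa [Units.smul_def, add_comm] using h b c hbc (-e) (-f)

theorem gap_act_eq_of_two_mul {w : SignedPerm (N + 3)} {x : Fin (N + 3) → ℤ} {k : ℤ}
    {m : Fin (N + 4) → ℤ} (hm : ∀ i, gap (act w fun j => 2 * x j + 0) (2 * k) i = 2 * m i) :
    gap (act w x) k = m := by
  funext i
  have h2x : (fun j => 2 * x j + 0) = x + x := funext fun j => by simp [two_mul]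
  have := map_gap (act w x) k (AddMonoidHom.id ℤ + AddMonoidHom.id ℤ) i
  have hi := hm i
  rw [h2x, map_add, two_mul] at hi
  have : gap (act w x) k i + gap (act w x) k i = 2 * m i := this.trans hi
  lia

theorem avoiding_and_ascent_le_iff {w : SignedPerm (N + 3)} {x : Fin (N + 3) → ℤ}
    {m : Fin (N + 4) → ℤ} (hm : gap (act w x) (q : ℤ) = m) :
    (∀ i j, i < j → Avoids (x i - x j : ZMod q) 0 a ∧ Avoids (x i + x j : ZMod q) 0 a) ∧
      (∀ i, ascent w i ≤ m i) ↔ ∀ i, 1 + a * ascent w i ≤ m i := by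
  have hgap (i) : gap (act w fun j => (x j, label j)) ((q : ℤ), (0 : ℤ)) i =
      (m i, gap (act w label) 0 i) := by
    rw [gap_act_prodMk, hm]
  have hclear (i) : gap (act w fun j => (x j, label j)) ((q : ℤ), (0 : ℤ)) i ∈ clearance a ↔
      1 + a * ascent w i ≤ m i := by
    rw [hgap, mem_clearance_iff, ascent]
    split_ifs with hlabel
    · simp only [hlabel, forall_const]
      lia
    · simp [hlabel]
  rw [← posAvoids_pair_iff, ← forall_units_smul_act_iff w]
  constructor
  · rintro ⟨havoid, hascent⟩ i
    rw [← hclear]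
    refine gap_mem_clearance havoid ?_ ?_
    · simpa only [hgap] using gap_act_label_ne_zero w i
    · simpa only [hgap, ascent] using hascent i
  · refine fun h => ⟨fun i j hij =>
      posAvoids_of_gap_mem_clearance (fun i => (hclear i).2 (h i)) hij, fun i => ?_⟩
    have one_le : 1 ≤ m i := by simpa only [hgap] using ((hclear i).2 (h i)).1
    rw [ascent]
    split_ifs <;> lia

theorem four_mul_N_D (hq : 0 < q) :
    4 * N_D (N + 3) q 0 a =
      ∑ w, Nat.card {m // m ∈ gapLattice N q 0 ∧ ∀ i, 1 + a * ascent w i ≤ m i} := by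
  rw [N_D, ← Nat.card_coe_set_eq]
  refine four_mul_card_eq_sum hq 0 _ (fun w i => 1 + a * ascent w i) (fun w i => ?_)
    fun w x m hm => ?_
  · have := ascent_nonneg w i
    positivity
  · exact avoiding_and_ascent_le_iff (gap_act_eq_of_two_mul hm)

end Avoidance

theorem sum_card_two_dvd_sub {α : Type*} {Q : α → Prop} [Finite {x // Q x}] (t : α → ℤ) :
    ∑ s : Fin 2, Nat.card {x // 2 ∣ t x - (s : ℕ) ∧ Q x} = Nat.card {x // Q x} := by
  have (s : Fin 2) : Finite {x // 2 ∣ t x - (s : ℕ) ∧ Q x} :=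
    Finite.of_injective (Subtype.impEmbedding _ Q fun _ hx => hx.2) (Function.Embedding.injective _)
  rw [← Nat.card_sigma]
  refine Nat.card_congr (Equiv.ofBijective (fun x => ⟨x.2.1, x.2.2.2⟩) ⟨?_, ?_⟩)
  · rintro ⟨s, x, hs, _⟩ ⟨s', x', hs', _⟩ h
    obtain rfl : x = x' := congrArg Subtype.val h
    obtain rfl : s = s' := Fin.ext (by have := s.isLt; have := s'.isLt; omega)
    rfl
  · rintro ⟨x, hx⟩
    exact ⟨⟨if 2 ∣ t x then 0 else 1, x, by split_ifs <;> simp <;> lia, hx⟩, rfl⟩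

section Division

variable {N a q : ℕ}

theorem exists_equiv_one_add_div {ι : Type*} (ha : 0 < a) :
    ∃ e : (ι → Fin a) × (ι → ℤ) ≃ (ι → ℤ), ∀ x i, e x i = 1 + ((x.1 i : ℕ) + a * x.2 i) := by
  have : NeZero a := ⟨ha.ne'⟩
  refine ⟨(Equiv.arrowProdEquivProdArrow ι (fun _ => Fin a) fun _ => ℤ).symm.trans
    (Equiv.piCongrRight fun _ => (Equiv.prodComm _ _).trans
      ((Int.divModEquiv a).symm.trans (Equiv.addLeft 1))), fun x i => ?_⟩
  simp [Int.divModEquiv, Equiv.arrowProdEquivProdArrow]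
  ring

/-- The total dilation used up by the residues `1 + r i` of the gaps. -/
def residueSum (r : Fin (N + 4) → Fin a) : ℕ := ∑ i, mark i * (1 + r i)

theorem one_add_div_mem_gapLattice_iff {r : Fin (N + 4) → Fin a} {m : Fin (N + 4) → ℤ} :
    (fun i => 1 + ((r i : ℕ) + a * m i)) ∈ gapLattice N q 0 ↔
      a * ∑ i, mark i • m i = q - (residueSum r : ℤ) ∧
        2 ∣ (r 0 : ℕ) + (r 1 : ℕ) + a * (m 0 + m 1) := by
  have total : ∑ i, mark i • (1 + ((r i : ℕ) + a * m i)) =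
      residueSum r + a * ∑ i, mark i • m i := by
    simp only [residueSum, nsmul_eq_mul, Finset.mul_sum, Nat.cast_sum, ← Finset.sum_add_distrib]
    refine Finset.sum_congr rfl fun i _ => ?_
    push_cast
    ring
  have parity : 1 + ((r 0 : ℕ) + a * m 0) + (1 + ((r 1 : ℕ) + a * m 1)) - 0 =
      2 * 1 + ((r 0 : ℕ) + (r 1 : ℕ) + a * (m 0 + m 1)) := by
    ring
  rw [gapLattice, Set.mem_ofPred_eq, total, parity, Int.dvd_add_right (dvd_mul_right ..)]
  exact and_congr_left fun _ => by lia

theorem add_mul_le_add_mul_iff {r : Fin a} {δ m : ℤ} :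
    1 + a * δ ≤ 1 + ((r : ℕ) + a * m) ↔ δ ≤ m := by
  have hr : ((r : ℕ) : ℤ) < a := by exact_mod_cast r.isLt
  constructor
  · intro h
    by_contra! hlt
    nlinarith
  · intro h
    nlinarith

/-- The summand `(q - j) ^ n`, restricted to the `j` congruent to `q` modulo `d`. -/
def powOfDvd (n q d j : ℕ) : ℚ := if (d : ℤ) ∣ q - j then ((q : ℚ) - j) ^ n else 0

theorem dvd_add_mul_iff_of_dvd_sub {d s t : ℤ} (h : d ∣ t - s) (b c : ℤ) :
    d ∣ b + c * t ↔ d ∣ b + c * s := by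
  refine dvd_iff_dvd_of_dvd_sub ?_
  rw [add_sub_add_left_eq_sub, ← mul_sub]
  exact h.mul_left c

theorem sum_card_residue (r : Fin (N + 4) → Fin a) (hr : residueSum r < q) (s : Fin 2) :
    (a : ℚ) ^ (N + 3) * ∑ w, Nat.card {m : Fin (N + 4) → ℤ // 2 ∣ m 0 + m 1 - (s : ℕ) ∧
      (fun i => 1 + ((r i : ℕ) + a * m i)) ∈ gapLattice N q 0 ∧
        ∀ i, 1 + a * ascent w i ≤ 1 + ((r i : ℕ) + a * m i)} =
    4 * if 2 ∣ (r 0 : ℕ) + (r 1 : ℕ) + a * s then powOfDvd (N + 3) q a (residueSum r) else 0 := by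
  have ha : (a : ℤ) ≠ 0 := by exact_mod_cast (r 0).pos.ne'
  have parity_iff {t : ℤ} (ht : 2 ∣ t - (s : ℕ)) :
      2 ∣ (r 0 : ℕ) + (r 1 : ℕ) + a * t ↔ 2 ∣ (r 0 : ℕ) + (r 1 : ℕ) + a * s :=
    (dvd_add_mul_iff_of_dvd_sub ht _ _).trans (by norm_cast)
  simp only [one_add_div_mem_gapLattice_iff, add_mul_le_add_mul_iff, powOfDvd]
  split_ifs with hpar hdvd
  · obtain ⟨k, hk⟩ := hdvd
    have hkpos : 0 < k := by
      have : 0 < a * k := by rw [← hk]; lia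
      exact Int.pos_of_mul_pos_right this (by positivity)
    lift k to ℕ using hkpos.le
    have condition_iff (w) (m : Fin (N + 4) → ℤ) : (2 ∣ m 0 + m 1 - (s : ℕ) ∧
        (a * ∑ i, mark i • m i = q - (residueSum r : ℤ) ∧
          2 ∣ (r 0 : ℕ) + (r 1 : ℕ) + a * (m 0 + m 1)) ∧ ∀ i, ascent w i ≤ m i) ↔
        m ∈ gapLattice N k (s : ℕ) ∧ ∀ i, ascent w i ≤ m i := by
      rw [hk, mul_right_inj' ha, gapLattice, Set.mem_ofPred_eq]
      have := @parity_iff (m 0 + m 1)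
      tauto
    simp only [condition_iff]
    rw [sum_card_ascent_le (by exact_mod_cast hkpos)]
    have hkQ : (q : ℚ) - residueSum r = a * k := by exact_mod_cast hk
    rw [hkQ]
    push_cast
    ring
  · have empty (m : Fin (N + 4) → ℤ) : ¬ (a * ∑ i, mark i • m i = q - (residueSum r : ℤ)) :=
      fun h => hdvd ⟨_, h.symm⟩
    simp only [empty]
    simp
  · have empty (w : SignedPerm (N + 3)) (m : Fin (N + 4) → ℤ) : ¬ (2 ∣ m 0 + m 1 - (s : ℕ) ∧
        (a * ∑ i, mark i • m i = q - (residueSum r : ℤ) ∧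
          2 ∣ (r 0 : ℕ) + (r 1 : ℕ) + a * (m 0 + m 1)) ∧ ∀ i, ascent w i ≤ m i) :=
      fun h => hpar ((parity_iff h.1).1 h.2.1.2)
    simp only [empty]
    simp

theorem card_gapLattice_le_eq_sum (ha : 0 < a) {δ : Fin (N + 4) → ℤ} (hδ : ∀ i, 0 ≤ δ i) :
    Nat.card {m // m ∈ gapLattice N q 0 ∧ ∀ i, 1 + a * δ i ≤ m i} =
      ∑ r : Fin (N + 4) → Fin a, ∑ s : Fin 2, Nat.card {m : Fin (N + 4) → ℤ //
        2 ∣ m 0 + m 1 - (s : ℕ) ∧ (fun i => 1 + ((r i : ℕ) + a * m i)) ∈ gapLattice N q 0 ∧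
          ∀ i, 1 + a * δ i ≤ 1 + ((r i : ℕ) + a * m i)} := by
  obtain ⟨e, he⟩ := exists_equiv_one_add_div (ι := Fin (N + 4)) ha
  let S : Set (Fin (N + 4) → ℤ) := {m | m ∈ gapLattice N q 0 ∧ ∀ i, 1 + a * δ i ≤ m i}
  have : Finite S := finite_gapLattice_le q 0 fun i => by
    have := hδ i
    positivity
  have (r : Fin (N + 4) → Fin a) : Finite {m // e (r, m) ∈ S} :=
    Finite.of_injective (fun m => (⟨e (r, m.1), m.2⟩ : S)) fun m m' h => by
      simpa [Subtype.ext_iff] using h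
  calc Nat.card S = Nat.card {x : (Fin (N + 4) → Fin a) × (Fin (N + 4) → ℤ) // e x ∈ S} :=
        (Nat.card_congr (e.subtypeEquiv fun x => Iff.rfl)).symm
    _ = ∑ r, Nat.card {m // e (r, m) ∈ S} := card_prod_subtype fun r m => e (r, m) ∈ S
    _ = ∑ r, ∑ s : Fin 2, Nat.card {m : Fin (N + 4) → ℤ //
          2 ∣ m 0 + m 1 - (s : ℕ) ∧ e (r, m) ∈ S} :=
        Finset.sum_congr rfl fun r _ =>
          (sum_card_two_dvd_sub fun m : Fin (N + 4) → ℤ => m 0 + m 1).symm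
    _ = _ := by simp only [funext (he _), S, Set.mem_ofPred_eq]

theorem pow_mul_N_D (ha : 0 < a) (hq : ∀ r : Fin (N + 4) → Fin a, residueSum r < q) :
    (a : ℚ) ^ (N + 3) * N_D (N + 3) q 0 a =
      ∑ r : Fin (N + 4) → Fin a, ∑ s : Fin 2,
        if 2 ∣ (r 0 : ℕ) + (r 1 : ℕ) + a * s then powOfDvd (N + 3) q a (residueSum r) else 0 := by
  have hq0 : 0 < q := (Nat.zero_le _).trans_lt (hq fun _ => ⟨0, ha⟩)
  have count : 4 * N_D (N + 3) q 0 a = ∑ r : Fin (N + 4) → Fin a, ∑ s : Fin 2, ∑ w,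
      Nat.card {m : Fin (N + 4) → ℤ // 2 ∣ m 0 + m 1 - (s : ℕ) ∧
        (fun i => 1 + ((r i : ℕ) + a * m i)) ∈ gapLattice N q 0 ∧
          ∀ i, 1 + a * ascent w i ≤ 1 + ((r i : ℕ) + a * m i)} := by
    rw [four_mul_N_D hq0]
    simp only [card_gapLattice_le_eq_sum ha (ascent_nonneg _)]
    rw [Finset.sum_comm]
    exact Finset.sum_congr rfl fun r _ => Finset.sum_comm
  refine mul_left_cancel₀ (four_ne_zero (α := ℚ)) ?_
  rw [mul_left_comm, ← Nat.cast_ofNat (R := ℚ), ← Nat.cast_mul, count]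
  simp only [Nat.cast_sum (R := ℚ), Finset.mul_sum]
  exact Finset.sum_congr rfl fun r _ => Finset.sum_congr rfl fun s _ => by
    simpa only [Nat.cast_sum, Finset.mul_sum, Nat.cast_ofNat] using
      sum_card_residue r (hq r) s

end Division

section CoeffSum

variable {R : Type*}

/-- The sum `∑ k, F k * g_k` over the coefficients `g_k` of a polynomial `g`, bilinear in `F` and
`g`. -/
noncomputable def coeffSum [CommSemiring R] : (ℕ → R) →ₗ[R] R[X] →ₗ[R] R :=
  LinearMap.mk₂ R (fun F g => g.sum fun k c => F k * c)
    (fun F G g => by simp only [Pi.add_apply, add_mul, sum_add])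
    (fun r F g => by simp only [Pi.smul_apply, smul_mul_assoc, Polynomial.smul_sum])
    (fun F g h => sum_add_index g h _ (by simp) (by simp [mul_add]))
    (fun r F g => by
      rw [sum_smul_index _ _ _ (by simp), Polynomial.smul_sum]
      simp only [smul_eq_mul, mul_left_comm])

section CommSemiring

variable [CommSemiring R]

theorem coeffSum_C_mul_X_pow (F : ℕ → R) (c : R) (k : ℕ) :
    coeffSum F (C c * X ^ k) = c * F k := by
  rw [C_mul_X_pow_eq_monomial, mul_comm]
  exact sum_monomial_index c _ (mul_zero _)

theorem coeffSum_X_pow_mul (F : ℕ → R) (k : ℕ) (g : R[X]) :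
    coeffSum F (X ^ k * g) = coeffSum (fun j => F (j + k)) g := by
  induction g using Polynomial.induction_on' with
  | add g h hg hh => rw [mul_add, map_add, map_add, hg, hh]
  | monomial j c =>
    rw [← C_mul_X_pow_eq_monomial, mul_left_comm, ← pow_add, coeffSum_C_mul_X_pow,
      coeffSum_C_mul_X_pow, add_comm]

theorem coeffSum_expand (F : ℕ → R) (p : ℕ) (g : R[X]) :
    coeffSum F (expand R p g) = coeffSum (fun j => F (p * j)) g := by
  induction g using Polynomial.induction_on' with
  | add g h hg hh => rw [map_add, map_add, map_add, hg, hh]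
  | monomial j c =>
    rw [expand_monomial, ← C_mul_X_pow_eq_monomial, ← C_mul_X_pow_eq_monomial,
      coeffSum_C_mul_X_pow, coeffSum_C_mul_X_pow, mul_comm j]

theorem coeffSum_prod_sum {ι κ : Type*} [Fintype ι] [DecidableEq ι] [Fintype κ] (F : ℕ → R)
    (c : ι → κ → R) (e : ι → κ → ℕ) :
    coeffSum F (∏ i, ∑ t, C (c i t) * X ^ e i t) =
      ∑ r : ι → κ, (∏ i, c i (r i)) * F (∑ i, e i (r i)) := by
  rw [Fintype.prod_sum, map_sum]
  refine Finset.sum_congr rfl fun r _ => ?_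
  rw [Finset.prod_mul_distrib, ← map_prod, Finset.prod_pow_eq_pow_sum, coeffSum_C_mul_X_pow]

end CommSemiring

variable [CommRing R]

theorem degree_taylor_sub_lt {f : R[X]} (hf : f ≠ 0) (r : R) :
    (taylor r f - f).degree < f.degree := by
  rw [← degree_taylor f r]
  exact degree_sub_lt_left (degree_taylor f r) (by rwa [Ne, taylor_eq_zero])
    (leadingCoeff_taylor r f)

/-- Each factor `∑ X ^ (c * i)` sums over a progression on which `u` adds up to zero, so only the
differences of `f` along the progression survive, and these have smaller degree. -/
theorem coeffSum_mul_eval_eq_zero {u : ℕ → R} {A c d : ℕ} {f : R[X]}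
    (hu : ∀ j, ∑ i ∈ Finset.range A, u (j + c * i) = 0) (hf : f.degree < d) (g : R[X]) :
    coeffSum (fun j => u j * f.eval (j : R)) ((∑ i ∈ Finset.range A, X ^ (c * i)) ^ d * g) = 0 := by
  induction d generalizing u f with
  | zero =>
    obtain rfl : f = 0 := degree_eq_bot.1 (Nat.WithBot.lt_zero_iff.1 hf)
    simp only [eval_zero, mul_zero]
    exact coeffSum.map_zero₂ _
  | succ d ih =>
    set p : R[X] := (∑ i ∈ Finset.range A, X ^ (c * i)) ^ d * g
    have degree_lt (i : ℕ) : (taylor ((c * i : ℕ) : R) f - f).degree < d := by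
      rcases eq_or_ne f 0 with rfl | hf0
      · simp
      · exact (degree_taylor_sub_lt hf0 _).trans_le (Order.lt_succ_iff.1 hf)
    have shift (i : ℕ) :
        coeffSum (fun j => u (j + c * i) * f.eval ((j + c * i : ℕ) : R)) p =
          coeffSum (fun j => u (j + c * i) * f.eval (j : R)) p := by
      have hui (j : ℕ) : ∑ k ∈ Finset.range A, u (j + c * k + c * i) = 0 := by
        simpa only [add_right_comm] using hu (j + c * i)
      rw [← sub_eq_zero, ← LinearMap.map_sub₂, ← ih (u := fun j => u (j + c * i)) hui (degree_lt i)]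
      congr 2
      ext j
      simp [taylor_eval, mul_sub]
    rw [pow_succ', mul_assoc, Finset.sum_mul, map_sum]
    simp only [coeffSum_X_pow_mul]
    rw [Finset.sum_congr rfl fun i _ => shift i, ← LinearMap.map_sum₂, ← coeffSum.map_zero₂ p]
    congr 2
    ext j
    simp [← Finset.sum_mul, hu]

end CoeffSum

theorem polysum_eq_coeffSum (g : ℚ[X]) (q n : ℕ) :
    polysum g q n = coeffSum (fun j => ((q : ℚ) - j) ^ n) g := by
  simp only [polysum, mul_comm (g.coeff _)]
  exact (sum_over_range g fun _ => mul_zero _).symm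

theorem sum_range_ite_dvd_sub {A c : ℕ} (hA : 0 < A) (hc : 0 < c) (z : ℤ) :
    ∑ i ∈ Finset.range A, (if ((c * A : ℕ) : ℤ) ∣ z - c * i then (1 : ℚ) else 0) =
      if (c : ℤ) ∣ z then 1 else 0 := by
  split_ifs with h
  · obtain ⟨k, rfl⟩ := h
    have hA' : (0 : ℤ) < A := by exact_mod_cast hA
    obtain ⟨r, hr⟩ := Int.eq_ofNat_of_zero_le (Int.emod_nonneg k hA'.ne')
    have hrA : r < A := by exact_mod_cast hr ▸ Int.emod_lt_of_pos k hA'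
    have dvd_iff (i : ℕ) (hi : i < A) : ((c * A : ℕ) : ℤ) ∣ c * k - c * i ↔ i = r := by
      rw [← mul_sub, Nat.cast_mul, mul_dvd_mul_iff_left (by exact_mod_cast hc.ne'),
        ← Int.emod_eq_emod_iff_emod_sub_eq_zero.trans Int.dvd_iff_emod_eq_zero.symm, hr,
        Int.emod_eq_of_lt (Int.natCast_nonneg i) (by exact_mod_cast hi)]
      exact_mod_cast eq_comm
    rw [Finset.sum_congr rfl fun i hi => if_congr (dvd_iff i (Finset.mem_range.1 hi)) rfl rfl]
    simp [hrA]
  · refine Finset.sum_eq_zero fun i _ => if_neg fun hi => h ?_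
    have : (c : ℤ) ∣ z - c * i := (Int.natCast_dvd_natCast.2 (dvd_mul_right c A)).trans hi
    simpa using this.add (dvd_mul_right (c : ℤ) i)

theorem mul_coeffSum_powOfDvd {A c n q : ℕ} (hA : 0 < A) (hc : 0 < c) {g : ℚ[X]}
    (hg : (∑ i ∈ Finset.range A, X ^ (c * i)) ^ (n + 1) ∣ g) :
    A * coeffSum (powOfDvd n q (c * A)) g = coeffSum (powOfDvd n q c) g := by
  obtain ⟨h, rfl⟩ := hg
  let u (j : ℕ) : ℚ :=
    A * (if ((c * A : ℕ) : ℤ) ∣ q - j then 1 else 0) - if (c : ℤ) ∣ q - j then 1 else 0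
  have hu (j : ℕ) : ∑ i ∈ Finset.range A, u (j + c * i) = 0 := by
    have periodic (i : ℕ) : (c : ℤ) ∣ q - j - c * i ↔ (c : ℤ) ∣ q - j :=
      dvd_sub_left (dvd_mul_right ..)
    have := sum_range_ite_dvd_sub hA hc ((q : ℤ) - j)
    simp only [u, Nat.cast_add, Nat.cast_mul, ← sub_sub, periodic] at this ⊢
    rw [Finset.sum_sub_distrib, ← Finset.mul_sum, this]
    simp
  have hf : ((C (q : ℚ) - X) ^ n).degree < ((n + 1 : ℕ) : WithBot ℕ) := by
    refine (degree_pow_le_of_le n (a := 1) ?_).trans_lt ?_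
    · compute_degree
    · norm_cast
      lia
  have key := coeffSum_mul_eval_eq_zero hu hf h
  rw [← sub_eq_zero, ← smul_eq_mul, ← LinearMap.map_smul₂, ← LinearMap.map_sub₂, ← key]
  congr 2
  ext j
  simp only [Pi.sub_apply, Pi.smul_apply, smul_eq_mul, powOfDvd, u, eval_pow, eval_sub, eval_C,
    eval_X]
  split_ifs <;> ring

theorem coeffSum_powOfDvd_expand_two {q : ℕ} (hq : Odd q) (n a : ℕ) (k : ℚ[X]) :
    coeffSum (powOfDvd n q (2 * a)) (expand ℚ 2 k) = 0 := by
  have vanish (j : ℕ) : powOfDvd n q (2 * a) (2 * j) = 0 := by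
    refine if_neg fun h => ?_
    obtain ⟨m, rfl⟩ := hq
    have : (2 : ℤ) ∣ (2 * m + 1 : ℕ) - (2 * j : ℕ) := (by simp : (2 : ℤ) ∣ (2 * a : ℕ)).trans h
    omega
  rw [coeffSum_expand]
  simp only [vanish]
  exact coeffSum.map_zero₂ k

theorem mul_coeffSum_powOfDvd_eq_polysum {a n q : ℕ} (ha : 0 < a) {g : ℚ[X]}
    (hg : phi a ^ (n + 1) ∣ g) : a * coeffSum (powOfDvd n q a) g = polysum g q n := by
  have powOfDvd_one : powOfDvd n q 1 = fun j : ℕ => ((q : ℚ) - j) ^ n := by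
    ext j
    simp [powOfDvd]
  have key := mul_coeffSum_powOfDvd (q := q) ha one_pos (g := g) <| by
    simpa only [phi, one_mul] using hg
  rwa [one_mul, powOfDvd_one, ← polysum_eq_coeffSum] at key

theorem mul_coeffSum_powOfDvd_X_mul_expand_two {a n q : ℕ} (ha : 0 < a) (hq : Odd q) {k : ℚ[X]}
    (hk : phi2 a ^ (n + 1) ∣ expand ℚ 2 k) :
    a * coeffSum (powOfDvd n q (2 * a)) (X * expand ℚ 2 k) = polysum (X * expand ℚ 2 k) q n := by
  have powOfDvd_two (j : ℕ) :
      powOfDvd n q 2 (2 * j + 1) = ((q : ℚ) - (2 * j + 1 : ℕ)) ^ n :=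
    if_pos (by obtain ⟨m, rfl⟩ := hq; lia)
  rw [mul_coeffSum_powOfDvd ha two_pos (hk.mul_left X), polysum_eq_coeffSum, ← pow_one X,
    coeffSum_X_pow_mul, coeffSum_X_pow_mul, coeffSum_expand, coeffSum_expand]
  simp only [powOfDvd_two]

section Final

variable {N a q : ℕ}

theorem residueSum_le (r : Fin (N + 4) → Fin a) : residueSum r ≤ (2 * N + 4) * a := by
  have hr : residueSum r ≤ ∑ i : Fin (N + 4), mark i • a :=
    Finset.sum_le_sum fun i _ => Nat.mul_le_mul_left _ (by lia)
  rw [sum_mark_nsmul] at hr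
  simp only [Finset.sum_const, Finset.card_univ, Fintype.card_fin, smul_eq_mul] at hr
  lia

theorem sum_pow_mul_residueSum (F : ℕ → ℚ) (ε : ℚ) :
    ∑ r : Fin (N + 4) → Fin a, ε ^ ((r 0 : ℕ) + r 1) * F (residueSum r) =
      coeffSum F (X ^ (2 * N + 4) * (phi a).comp (C ε * X) ^ 2 * phi a ^ 2 * phi2 a ^ N) := by
  let c (i : Fin (N + 4)) (t : Fin a) : ℚ := if (i : ℕ) < 2 then ε ^ (t : ℕ) else 1
  have prod_c (r : Fin (N + 4) → Fin a) : ∏ i, c i (r i) = ε ^ ((r 0 : ℕ) + r 1) := by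
    rw [prod_univ_ends, pow_add]
    simp [c]
  have twisted_leaf : ∑ t : Fin a, C (ε ^ (t : ℕ)) * X ^ (1 + t : ℕ) =
      X * (phi a).comp (C ε * X) := by
    simp [phi, Finset.sum_range, Finset.mul_sum, pow_add, mul_pow, mul_left_comm]
  have leaf : ∑ t : Fin a, X ^ (1 + t : ℕ) = X * phi a := by
    simp [phi, Finset.sum_range, Finset.mul_sum, pow_add]
  have middle : ∑ t : Fin a, X ^ (2 * (1 + t : ℕ)) = X ^ 2 * phi2 a := by
    simp [phi2, Finset.sum_range, Finset.mul_sum, pow_add, mul_add]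
  have prod_sum : ∏ i, ∑ t : Fin a, C (c i t) * X ^ (mark i * (1 + t)) =
      X ^ (2 * N + 4) * (phi a).comp (C ε * X) ^ 2 * phi a ^ 2 * phi2 a ^ N := by
    rw [prod_univ_ends]
    simp only [mark_castSucc_castSucc_succ_succ]
    simp [c, mark, -map_pow, twisted_leaf, leaf, middle]
    ring
  rw [← prod_sum, coeffSum_prod_sum]
  simp only [prod_c, residueSum]

theorem expand_two_phi (m : ℕ) : expand ℚ 2 (phi m) = phi2 m := by
  simp [phi, phi2, pow_mul]

theorem phi2_two_mul (m : ℕ) : phi2 (2 * m) = phi2 m * (1 + X ^ (2 * m)) := by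
  rw [phi2, two_mul m, Finset.sum_range_add]
  simp only [mul_add 2, pow_add, ← Finset.mul_sum, phi2, two_mul]
  ring

theorem phi_two_mul_comp {ε : ℚ} (hε : ε ^ 2 = 1) (m : ℕ) :
    (phi (2 * m)).comp (C ε * X) = (1 + C ε * X) * phi2 m := by
  induction m with
  | zero => simp [phi, phi2]
  | succ m ih =>
    have hC : (C ε : ℚ[X]) ^ 2 = 1 := by rw [← C_pow, hε, C_1]
    have phi_succ : phi (2 * (m + 1)) = phi (2 * m) + X ^ (2 * m) + X ^ (2 * m + 1) := by
      simp only [phi, mul_add_one, Finset.sum_range_succ]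
    have phi2_succ : phi2 (m + 1) = phi2 m + X ^ (2 * m) := Finset.sum_range_succ ..
    rw [phi_succ, phi2_succ, add_comp, add_comp, ih, X_pow_comp, X_pow_comp, pow_succ, mul_pow,
      pow_mul (C ε), hC]
    ring

theorem phi_mul_phi_comp_neg (ha : Odd a) : phi a * (phi a).comp (-X) = phi2 a := by
  have hX : (X ^ 2 - 1 : ℚ[X]) ≠ 0 := (monic_X_pow_sub_C 1 two_ne_zero).ne_zero
  have h₁ : phi a * (X - 1) = X ^ a - 1 := geom_sum_mul X a
  have h₂ : (phi a).comp (-X) * (-X - 1) = -X ^ a - 1 := by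
    simpa [ha.neg_pow] using congrArg (·.comp (-X)) h₁
  have h₃ : phi2 a * (X ^ 2 - 1) = X ^ (2 * a) - 1 := by
    simpa [phi2, pow_mul] using geom_sum_mul (X ^ 2 : ℚ[X]) a
  refine mul_right_cancel₀ hX ?_
  rw [h₃]
  linear_combination (phi a).comp (-X) * (X + 1) * h₁ - (X ^ a - 1) * h₂

theorem phi_comp_sq_add_phi_comp_neg_sq (m : ℕ) :
    (phi (2 * m)).comp (C 1 * X) ^ 2 + (phi (2 * m)).comp (C (-1) * X) ^ 2 =
      2 * (1 + X ^ 2) * phi2 m ^ 2 := by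
  rw [phi_two_mul_comp (one_pow 2), phi_two_mul_comp neg_one_sq, C_neg, C_1]
  ring

theorem sum_ite_two_dvd_of_odd (ha : Odd a) (t : ℕ) (x : ℚ) :
    ∑ s : Fin 2, (if 2 ∣ t + a * s then x else 0) = x := by
  have hta : 2 ∣ t + a ↔ ¬ 2 ∣ t := by
    simp only [← even_iff_two_dvd, Nat.even_add, Nat.not_even_iff_odd.2 ha, iff_false]
  by_cases ht : 2 ∣ t <;> simp [hta, ht]

theorem sum_ite_two_dvd_two_mul (a t : ℕ) (x : ℚ) :
    ∑ s : Fin 2, (if 2 ∣ t + 2 * a * s then x else 0) = 1 ^ t * x + (-1) ^ t * x := by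
  simp only [mul_assoc, Nat.dvd_add_left (dvd_mul_right 2 _)]
  rcases t.even_or_odd with ht | ht
  · simp [ht.two_dvd, ht.neg_one_pow, two_mul]
  · simp [ht.not_two_dvd_nat, ht.neg_one_pow]

theorem pow_mul_N_D_of_odd (ha : Odd a) (hq : (2 * N + 4) * a < q) :
    (a : ℚ) ^ (N + 4) * N_D (N + 3) q 0 a =
      polysum (X ^ (2 * N + 4) * phi2 a ^ N * phi a ^ 4) q (N + 3) := by
  have dvd : phi a ^ (N + 3 + 1) ∣ X ^ (2 * N + 4) * phi a ^ 2 * phi a ^ 2 * phi2 a ^ N :=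
    ⟨X ^ (2 * N + 4) * (phi a).comp (-X) ^ N, by rw [← phi_mul_phi_comp_neg ha]; ring⟩
  have generating := sum_pow_mul_residueSum (N := N) (a := a) (powOfDvd (N + 3) q a) 1
  simp only [one_pow, one_mul, C_1, comp_X] at generating
  rw [pow_succ', mul_assoc, pow_mul_N_D ha.pos fun r => (residueSum_le r).trans_lt hq]
  simp only [sum_ite_two_dvd_of_odd ha]
  rw [generating, mul_coeffSum_powOfDvd_eq_polysum ha.pos dvd]
  ring_nf

theorem pow_mul_N_D_of_even (ha : 0 < a) (hq : (2 * N + 4) * (2 * a) < q) (hodd : Odd q) :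
    ((2 * a : ℕ) : ℚ) ^ (N + 4) * N_D (N + 3) q 0 (2 * a : ℕ) =
      8 * polysum (X ^ (2 * N + 5) * (1 + X ^ 2) * phi2 (2 * a) ^ N * phi2 a ^ 4) q (N + 3) := by
  obtain ⟨k, hk⟩ : ∃ k : ℚ[X], expand ℚ 2 k =
      X ^ (2 * N + 4) * (1 + X ^ 2) * phi2 (2 * a) ^ N * phi2 a ^ 4 :=
    ⟨X ^ (N + 2) * (1 + X) * phi (2 * a) ^ N * phi a ^ 4, by
      simp only [map_mul, map_pow, map_add, map_one, expand_X, expand_two_phi]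
      ring⟩
  have dvd : phi2 a ^ (N + 3 + 1) ∣ expand ℚ 2 k :=
    ⟨X ^ (2 * N + 4) * (1 + X ^ 2) * (1 + X ^ (2 * a)) ^ N, by
      rw [hk, phi2_two_mul, mul_pow]
      ring⟩
  have generating : X ^ (2 * N + 4) * (phi (2 * a)).comp (C 1 * X) ^ 2 * phi (2 * a) ^ 2 *
        phi2 (2 * a) ^ N + X ^ (2 * N + 4) * (phi (2 * a)).comp (C (-1) * X) ^ 2 *
          phi (2 * a) ^ 2 * phi2 (2 * a) ^ N =
      (2 : ℚ) • expand ℚ 2 ((1 + X) * k) + (4 : ℚ) • (X * expand ℚ 2 k) := by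
    have phi_eq : phi (2 * a) = (1 + X) * phi2 a := by
      simpa using phi_two_mul_comp (one_pow 2) a
    rw [← add_mul, ← add_mul, ← mul_add, phi_comp_sq_add_phi_comp_neg_sq, phi_eq]
    simp only [map_mul, map_add, map_one, expand_X, hk, smul_eq_C_mul, map_ofNat]
    ring
  rw [pow_succ', mul_assoc, pow_mul_N_D (by positivity) fun r => (residueSum_le r).trans_lt hq]
  simp only [sum_ite_two_dvd_two_mul, Finset.sum_add_distrib, sum_pow_mul_residueSum, ← map_add]
  rw [generating, map_add, map_smul, map_smul, coeffSum_powOfDvd_expand_two hodd, smul_zero,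
    zero_add, smul_eq_mul, Nat.cast_mul, Nat.cast_ofNat]
  calc 2 * (a : ℚ) * (4 * coeffSum (powOfDvd (N + 3) q (2 * a)) (X * expand ℚ 2 k)) =
      8 * (a * coeffSum (powOfDvd (N + 3) q (2 * a)) (X * expand ℚ 2 k)) := by ring
    _ = 8 * polysum (X * expand ℚ 2 k) q (N + 3) := by
      rw [mul_coeffSum_powOfDvd_X_mul_expand_two ha hodd dvd]
    _ = _ := by
      rw [hk]
      ring_nf

end Final

end TypeD

theorem statement9_general (n a q : ℕ) (hn : 3 ≤ n) (ha : 1 ≤ a) (hq : (2 * n - 2) * a < q) :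
    (Even a → Odd q →
      (a : ℚ) ^ (n + 1) * (N_D n q 0 (a : ℤ) : ℚ) =
        8 * polysum (X ^ (2 * n - 1) * (1 + X ^ 2) * (phi2 a) ^ (n - 3) *
          (phi2 (a / 2)) ^ 4) q n) ∧
    (Odd a →
      (a : ℚ) ^ (n + 1) * (N_D n q 0 (a : ℤ) : ℚ) =
        polysum (X ^ (2 * n - 2) * (phi2 a) ^ (n - 3) * (phi a) ^ 4) q n) := by
  obtain ⟨N, rfl⟩ := Nat.exists_eq_add_of_le' hn
  refine ⟨fun heven hodd => ?_, fun hodd => TypeD.pow_mul_N_D_of_odd hodd hq⟩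
  obtain ⟨b, rfl⟩ := heven.two_dvd
  rw [Nat.mul_div_cancel_left b two_pos]
  exact TypeD.pow_mul_N_D_of_even (by lia) hq hodd

/-- Proposition 4.5. Formula for the number of points avoiding the
`D_n` deformation with hyperplanes `x_i ± x_j = 0, 1, ..., a`, for all large
odd `q`. -/
theorem statement9 (n a : ℕ) (hn : 3 ≤ n) (ha : 1 ≤ a) :
    ∃ N : ℕ, ∀ q : ℕ, Odd q → N < q →
      (Even a →
        (a : ℚ) ^ (n + 1) * (N_D n q 0 (a : ℤ) : ℚ) =
          8 * polysum (X ^ (2 * n - 1) * (1 + X ^ 2) * (phi2 a) ^ (n - 3) *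
            (phi2 (a / 2)) ^ 4) q n) ∧
      (Odd a →
        (a : ℚ) ^ (n + 1) * (N_D n q 0 (a : ℤ) : ℚ) =
          polysum (X ^ (2 * n - 2) * (phi2 a) ^ (n - 3) * (phi a) ^ 4) q n) :=
  ⟨(2 * n - 2) * a, fun q hodd hq =>
    have h := statement9_general n a q hn ha hq
    ⟨fun heven => h.1 heven hodd, h.2⟩⟩
end
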